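/- arXiv:1402.1308 — 2 statements merged into one kernel-verified Lean document; each statement's English description precedes it below -/
import Mathlib

section
/- Let d ≥ 1, D := {1,...,d}, let B ⊆ D be nonempty, and let Q be a Young function such that L_Q(I^d) is not contained in L log^{|B|} L(I^d). Then there exists a function f ∈ L_Q(I^d) such that (L_{n(B)}∘R_{n(B')})(f) does not converge to f in L^1(I^d)-norm as n → ∞, where n(B) denotes the index vector all of whose coordinates equal n. -/
open MeasureTheory Filter

noncomputable section

/-- The unit cube `[0,1)^d`. -/
def unitCube (d : ℕ) : Set (Fin d → ℝ) := Set.univ.pi fun _ => Set.Ico (0:ℝ) 1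

/-- Lebesgue measure restricted to the unit cube `[0,1)^d`. -/
def cubeMeasure (d : ℕ) : Measure (Fin d → ℝ) := volume.restrict (unitCube d)

/-- The `1`-periodic function equal to `1` on `[0,1/2)` and to `-1` on `[1/2,1)`. -/
def r0 (x : ℝ) : ℝ := if Int.fract x < 1/2 then 1 else -1

/-- The Rademacher functions. -/
def rademacher (n : ℕ) (x : ℝ) : ℝ := r0 (2 ^ n * x)

/-- The Walsh functions (in Paley enumeration, via binary digits). -/
def walsh (n : ℕ) (x : ℝ) : ℝ :=
  ∏ k ∈ Finset.range (n + 1), if n.testBit k then rademacher k x else 1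

/-- The Walsh–Dirichlet kernel `D_n`. -/
def dirichletKernel (n : ℕ) (x : ℝ) : ℝ := ∑ k ∈ Finset.range n, walsh k x

/-- `l_n = ∑_{k=1}^{n-1} 1/k`. -/
def logSum (n : ℕ) : ℝ := ∑ k ∈ Finset.Icc 1 (n - 1), (1 : ℝ) / k

/-- The Nörlund logarithmic kernel `F_n`. -/
def FKernel (n : ℕ) (u : ℝ) : ℝ :=
  (1 / logSum n) * ∑ i ∈ Finset.Ico 1 n, dirichletKernel (n - i) u / i

/-- The Riesz logarithmic kernel `G_n`. -/
def GKernel (n : ℕ) (u : ℝ) : ℝ :=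
  (1 / logSum n) * ∑ i ∈ Finset.Ico 1 n, dirichletKernel i u / i

/-- Walsh–Fourier coefficient of `f` on the unit cube. -/
def walshCoef {d : ℕ} (f : (Fin d → ℝ) → ℝ) (j : Fin d → ℕ) : ℝ :=
  ∫ x, f x * ∏ i, walsh (j i) (x i) ∂(cubeMeasure d)

/-- Rectangular partial sums of the multiple Walsh–Fourier series. -/
def rectPartialSum {d : ℕ} (f : (Fin d → ℝ) → ℝ) (N : Fin d → ℕ) (x : Fin d → ℝ) : ℝ :=
  ∑ j ∈ Fintype.piFinset (fun i => Finset.range (N i)),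
    walshCoef f j * ∏ i, walsh (j i) (x i)

/-- The mixed logarithmic means `(L_{n_B} ∘ R_{n_{B'}})(f)`. -/
def mixedLogMean {d : ℕ} (B : Finset (Fin d)) (f : (Fin d → ℝ) → ℝ)
    (n : Fin d → ℕ) (x : Fin d → ℝ) : ℝ :=
  (∏ j, logSum (n j))⁻¹ *
    ∑ i ∈ Fintype.piFinset (fun j => Finset.Ico 1 (n j)),
      rectPartialSum f (fun j => if j ∈ B then n j - i j else i j) x / ∏ j, (i j : ℝ)

/-- A Young function: convex, continuous, even, vanishing at `0`, with
`Q(u)/u → ∞` at `+∞` and `Q(u)/u → 0` at `0`. -/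
structure YoungFunction where
  toFun : ℝ → ℝ
  nonneg : ∀ u, 0 ≤ toFun u
  convexOn : ConvexOn ℝ Set.univ toFun
  continuous : Continuous toFun
  even : ∀ u, toFun (-u) = toFun u
  map_zero : toFun 0 = 0
  tendsto_atTop : Tendsto (fun u => toFun u / u) atTop atTop
  tendsto_zero : Tendsto (fun u => toFun u / u) (nhdsWithin 0 {(0:ℝ)}ᶜ) (nhds 0)

/-- The set of admissible constants `k` in the Luxemburg norm of `f`. -/
def orliczSet {d : ℕ} (Q : YoungFunction) (f : (Fin d → ℝ) → ℝ) : Set ℝ :=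
  {k | 0 < k ∧ Integrable (fun x => Q.toFun (|f x| / k)) (cubeMeasure d) ∧
    ∫ x, Q.toFun (|f x| / k) ∂(cubeMeasure d) ≤ 1}

/-- `f` belongs to the Orlicz space `L_Q(I^d)`. -/
def MemOrlicz {d : ℕ} (Q : YoungFunction) (f : (Fin d → ℝ) → ℝ) : Prop :=
  Measurable f ∧ (orliczSet Q f).Nonempty

/-- The Luxemburg norm on the Orlicz space `L_Q(I^d)`. -/
def orliczNorm {d : ℕ} (Q : YoungFunction) (f : (Fin d → ℝ) → ℝ) : ℝ :=
  sInf (orliczSet Q f)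

/-- `p_n = 2^{2n} + 2^{2n-2} + ⋯ + 2^0`. -/
def pIdx (n : ℕ) : ℕ := ∑ k ∈ Finset.range (n + 1), 4 ^ k

/-- `m̃ = ⌊ l_{p_{⌊m/2⌋}-1}/16 - 2^15 ⌋`. -/
def mTilde (m : ℕ) : ℤ := ⌊logSum (pIdx (m / 2) - 1) / 16 - 2 ^ 15⌋

/-- `m₀ = min{m : m̃ > 1}`. -/
def m₀ : ℕ := sInf {m : ℕ | 1 < mTilde m}

/-- The set `Ω_n`. -/
def Omega (n : ℕ) : Set ℝ :=
  ⋃ m ∈ Finset.Icc n (2 * n),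
    Set.Ico ((2:ℝ) ^ (-(m:ℤ) - 1) + (2:ℝ) ^ (-(m:ℤ) - mTilde m)) ((2:ℝ) ^ (-(m:ℤ)))

/-- `k`-th binary digit of `x` (the expansion not terminating in `1`'s). -/
def binDigit (k : ℕ) (x : ℝ) : ℕ := (⌊x * 2 ^ (k + 1)⌋).toNat % 2

/-- Dyadic addition on `[0,1)`. -/
def dyadicAdd (x t : ℝ) : ℝ :=
  ∑' k : ℕ, |(binDigit k x : ℝ) - (binDigit k t : ℝ)| / 2 ^ (k + 1)

/-- Dyadic convolution `f ∗ K` on `[0,1)`. -/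
def dyadicConv (f K : ℝ → ℝ) (x : ℝ) : ℝ :=
  ∫ t in Set.Ico (0:ℝ) 1, f t * K (dyadicAdd x t)

/-- Lebesgue measure restricted to `[0,1)`. -/
def unitMeasure : Measure ℝ := volume.restrict (Set.Ico (0:ℝ) 1)

/-- A set `A ⊆ L_Q(I^d)` is nowhere dense w.r.t. the Luxemburg norm. -/
def OrliczNowhereDense {d : ℕ} (Q : YoungFunction) (A : Set ((Fin d → ℝ) → ℝ)) : Prop :=
  ∀ f, MemOrlicz Q f → ∀ ε > 0, ∃ g, MemOrlicz Q g ∧ ∃ δ > 0,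
    (∀ h, MemOrlicz Q h → orliczNorm Q (h - g) < δ → orliczNorm Q (h - f) < ε) ∧
    (∀ h, MemOrlicz Q h → orliczNorm Q (h - g) < δ → h ∉ A)

/-- A set `A ⊆ L_Q(I^d)` is of first Baire category (meager) w.r.t. the Luxemburg norm. -/
def OrliczMeager {d : ℕ} (Q : YoungFunction) (A : Set ((Fin d → ℝ) → ℝ)) : Prop :=
  ∃ F : ℕ → Set ((Fin d → ℝ) → ℝ), (∀ k, OrliczNowhereDense Q (F k)) ∧ A ⊆ ⋃ k, F k


/-! ### Elementary facts on Walsh functions -/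

lemma walsh_eq_prod (n K : ℕ) (h : n < 2 ^ K) (x : ℝ) :
    walsh n x = ∏ k ∈ Finset.range K, if n.testBit k then rademacher k x else 1 := by
  have key : ∀ M, n < 2 ^ M → ∀ L, M ≤ L →
      (∏ k ∈ Finset.range L, if n.testBit k then rademacher k x else 1) =
      ∏ k ∈ Finset.range M, if n.testBit k then rademacher k x else 1 := by
    intro M hM L hL
    symm
    apply Finset.prod_subset
    · intro a ha
      simp only [Finset.mem_range] at *
      omega
    · intro a _ ha2
      have : M ≤ a := by simpa using ha2
      have h2 : n.testBit a = false :=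
        Nat.testBit_lt_two_pow (lt_of_lt_of_le hM (Nat.pow_le_pow_right (by norm_num) this))
      simp [h2]
  have h1 : n < 2 ^ (n + 1) := lt_trans (Nat.lt_two_pow_self) (Nat.pow_lt_pow_right (by norm_num) (by omega))
  unfold walsh
  rw [← key (n + 1) h1 (max K (n + 1)) (le_max_right _ _), key K h (max K (n + 1)) (le_max_left _ _)]

lemma walsh_split (m q r : ℕ) (hr : r < 2 ^ m) (x : ℝ) :
    walsh (2 ^ m * q + r) x = walsh r x * walsh q (2 ^ m * x) := by
  have hq : q < 2 ^ q := Nat.lt_two_pow_self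
  have hlt : 2 ^ m * q + r < 2 ^ (m + q) := by
    rw [pow_add]
    nlinarith
  rw [walsh_eq_prod _ _ hlt, walsh_eq_prod _ _ hr, walsh_eq_prod _ _ hq, Finset.prod_range_add]
  congr 1
  · apply Finset.prod_congr rfl
    intro k hk
    rw [Nat.testBit_two_pow_mul_add _ hr]
    simp [Finset.mem_range.mp hk]
  · apply Finset.prod_congr rfl
    intro k hk
    rw [Nat.testBit_two_pow_mul_add _ hr]
    have : rademacher (m + k) x = rademacher k (2 ^ m * x) := by
      unfold rademacher
      congr 1
      ring
    simp [this]

lemma walsh_zero (x : ℝ) : walsh 0 x = 1 := by simp [walsh]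

lemma walsh_one (x : ℝ) : walsh 1 x = r0 x := by
  rw [walsh_eq_prod 1 1 (by norm_num)]
  simp [rademacher]

lemma r0_abs (x : ℝ) : |r0 x| = 1 := by
  unfold r0; split_ifs <;> simp

lemma r0_measurable : Measurable r0 := by
  unfold r0
  exact Measurable.ite (measurableSet_lt measurable_fract measurable_const)
    measurable_const measurable_const

lemma walsh_abs (n : ℕ) (x : ℝ) : |walsh n x| = 1 := by
  unfold walsh
  rw [Finset.abs_prod]
  apply Finset.prod_eq_one
  intro k _
  split_ifs
  · exact r0_abs _
  · simp

@[fun_prop]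
lemma walsh_measurable (n : ℕ) : Measurable (walsh n) := by
  unfold walsh
  apply Finset.measurable_fun_prod
  intro k _
  by_cases h : n.testBit k
  · simp only [h, if_true]
    exact r0_measurable.comp (measurable_const.mul measurable_id)
  · simp [h]

lemma walsh_periodic (n : ℕ) (x : ℝ) : walsh n (x + 1) = walsh n x := by
  unfold walsh
  apply Finset.prod_congr rfl
  intro k _
  have : rademacher k (x + 1) = rademacher k x := by
    unfold rademacher r0
    have : Int.fract ((2:ℝ) ^ k * (x + 1)) = Int.fract ((2:ℝ) ^ k * x) := by
      have h : (2:ℝ) ^ k * (x + 1) = 2 ^ k * x + ((2 ^ k : ℕ) : ℝ) := by push_cast; ring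
      rw [h, Int.fract_add_natCast]
    rw [this]
  rw [this]

lemma walsh_small (m r : ℕ) (hr : r < 2 ^ m) (x : ℝ) (h0 : 0 ≤ x) (h1 : 2 ^ m * x < 1) :
    walsh r x = 1 := by
  rw [walsh_eq_prod _ _ hr]
  apply Finset.prod_eq_one
  intro k hk
  have hk := Finset.mem_range.mp hk
  have h2 : (2:ℝ) ^ k * x < 1 / 2 := by
    have h3 : (2:ℝ) ^ (k + 1) ≤ 2 ^ m := pow_le_pow_right₀ (by norm_num) (by omega)
    have h4 : (2:ℝ) ^ (k + 1) * x ≤ 2 ^ m * x := mul_le_mul_of_nonneg_right h3 h0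
    rw [pow_succ] at h4
    linarith
  have h3 : (0:ℝ) ≤ 2 ^ k * x := by positivity
  have : rademacher k x = 1 := by
    unfold rademacher r0
    rw [Int.fract_eq_self.mpr ⟨h3, by linarith⟩, if_pos h2]
  simp [this]

lemma walsh_dbl (n a : ℕ) (ha : a < 2) (x : ℝ) :
    walsh (2 * n + a) x = walsh a x * walsh n (2 * x) := by
  have := walsh_split 1 n a (by simpa using ha) x
  simpa using this

lemma dbl_integral (g : ℝ → ℝ) : ∫ x in (0:ℝ)..(1/2), g (2 * x) = (1/2) * ∫ x in (0:ℝ)..1, g x := by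
  rw [intervalIntegral.integral_comp_mul_left _ (by norm_num : (2:ℝ) ≠ 0)]
  norm_num

lemma dbl_integral' (g : ℝ → ℝ) (hg : ∀ x, g (x + 1) = g x) :
    ∫ x in (1/2:ℝ)..1, g (2 * x) = (1/2) * ∫ x in (0:ℝ)..1, g x := by
  rw [intervalIntegral.integral_comp_mul_left _ (by norm_num : (2:ℝ) ≠ 0)]
  have h : ∫ x in (0:ℝ)..1, g (x + 1) = ∫ x in (1:ℝ)..2, g x := by
    rw [intervalIntegral.integral_comp_add_right]
    norm_num
  rw [show (2:ℝ) * (1/2) = 1 by norm_num, show (2:ℝ) * 1 = 2 by norm_num, ← h]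
  simp [hg]

lemma walsh_intervalIntegrable (n m : ℕ) (a b : ℝ) :
    IntervalIntegrable (fun x => walsh n x * walsh m x) volume a b := by
  refine (intervalIntegrable_const (c := (1:ℝ))).mono_fun ?_ ?_
  · exact ((walsh_measurable n).mul (walsh_measurable m)).aestronglyMeasurable
  · refine Eventually.of_forall fun x => ?_
    simp [walsh_abs]

lemma walsh_orth (n : ℕ) : ∀ m : ℕ, ∫ x in (0:ℝ)..1, walsh n x * walsh m x = if n = m then 1 else 0 := by
  induction n using Nat.strong_induction_on with
  | _ n ih =>
  intro m
  -- case both zero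
  by_cases h0 : n = 0 ∧ m = 0
  · obtain ⟨rfl, rfl⟩ := h0
    simp [walsh_zero]
  -- the splitting
  have split : ∀ n m : ℕ, ∫ x in (0:ℝ)..1, walsh n x * walsh m x =
      if n % 2 = m % 2 then ∫ x in (0:ℝ)..1, walsh (n/2) x * walsh (m/2) x else 0 := by
    intro n m
    rw [← intervalIntegral.integral_add_adjacent_intervals
      (walsh_intervalIntegrable n m 0 (1/2)) (walsh_intervalIntegrable n m (1/2) 1)]
    have hn : ∀ x, walsh n x = walsh (n % 2) x * walsh (n / 2) (2 * x) := fun x => by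
      conv_lhs => rw [← Nat.div_add_mod n 2]
      exact walsh_dbl _ _ (Nat.mod_lt _ (by norm_num)) x
    have hm : ∀ x, walsh m x = walsh (m % 2) x * walsh (m / 2) (2 * x) := fun x => by
      conv_lhs => rw [← Nat.div_add_mod m 2]
      exact walsh_dbl _ _ (Nat.mod_lt _ (by norm_num)) x
    have hsgn1 : ∀ a < 2, ∀ x ∈ Set.Ico (0:ℝ) (1/2), walsh a x = 1 := by
      intro a ha x hx
      exact walsh_small 1 a (by simpa using ha) x hx.1 (by linarith [hx.2])
    have hsgn2 : ∀ a < 2, ∀ x ∈ Set.Ico (1/2:ℝ) 1, walsh a x = if a = 0 then 1 else -1 := by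
      intro a ha x hx
      interval_cases a
      · simp [walsh_zero]
      · rw [walsh_one]
        unfold r0
        rw [Int.fract_eq_self.mpr ⟨by linarith [hx.1], hx.2⟩, if_neg (by linarith [hx.1])]
        simp
    have ha := Nat.mod_lt n (show 2 > 0 by norm_num)
    have hb := Nat.mod_lt m (show 2 > 0 by norm_num)
    have e1 : ∫ x in (0:ℝ)..(1/2), walsh n x * walsh m x =
        ∫ x in (0:ℝ)..(1/2), (fun y => walsh (n/2) y * walsh (m/2) y) (2 * x) := by
      apply intervalIntegral.integral_congr_ae
      have hne : ∀ᵐ x : ℝ, x ≠ 1/2 := by simp [ae_iff]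
      filter_upwards [hne] with x hne hx
      rw [Set.uIoc_of_le (by norm_num)] at hx
      have hx' : x ∈ Set.Ico (0:ℝ) (1/2) := ⟨hx.1.le, lt_of_le_of_ne hx.2 hne⟩
      rw [hn, hm, hsgn1 _ ha x hx', hsgn1 _ hb x hx']
      ring
    have e2 : ∫ x in (1/2:ℝ)..1, walsh n x * walsh m x =
        ∫ x in (1/2:ℝ)..1, (if n % 2 = m % 2 then 1 else -1) *
          (fun y => walsh (n/2) y * walsh (m/2) y) (2 * x) := by
      apply intervalIntegral.integral_congr_ae
      have hne : ∀ᵐ x : ℝ, x ≠ 1 := by simp [ae_iff]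
      filter_upwards [hne] with x hne hx
      rw [Set.uIoc_of_le (by norm_num)] at hx
      have hx' : x ∈ Set.Ico (1/2:ℝ) 1 := ⟨hx.1.le, lt_of_le_of_ne hx.2 hne⟩
      rw [hn, hm, hsgn2 _ ha x hx', hsgn2 _ hb x hx']
      rcases Nat.mod_two_eq_zero_or_one n with h | h <;>
      rcases Nat.mod_two_eq_zero_or_one m with h' | h' <;> simp [h, h']
    rw [e1, e2, intervalIntegral.integral_const_mul,
      dbl_integral (fun y => walsh (n/2) y * walsh (m/2) y),
      dbl_integral' (fun y => walsh (n/2) y * walsh (m/2) y)]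
    · split_ifs <;> ring
    · intro x
      simp [walsh_periodic]
  have base : ∀ m : ℕ, ∫ x in (0:ℝ)..1, walsh 0 x * walsh m x = if 0 = m then 1 else 0 := by
    intro m
    induction m using Nat.strong_induction_on with
    | _ m ihm =>
    by_cases hm : m = 0
    · subst hm; simp [walsh_zero]
    · rw [split, Nat.zero_div, ihm (m/2) (by omega)]
      split_ifs <;> first | rfl | omega
  by_cases hn : n = 0
  · subst hn; exact base m
  · rw [split, ih (n/2) (by omega)]
    split_ifs <;> first | rfl | omega

/-! ### Lower bound for the `L¹` norm of the Nörlund kernel -/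

@[fun_prop]
lemma dirichletKernel_measurable (n : ℕ) : Measurable (dirichletKernel n) := by
  unfold dirichletKernel
  fun_prop

lemma dirichletKernel_abs_le (n : ℕ) (x : ℝ) : |dirichletKernel n x| ≤ n := by
  unfold dirichletKernel
  refine (Finset.abs_sum_le_sum_abs _ _).trans ?_
  simp [walsh_abs]

lemma walsh_high (m r : ℕ) (hr : 2 ^ m ≤ r) (hr2 : r < 2 ^ (m + 1)) (x : ℝ)
    (h1 : 1 ≤ 2 ^ (m + 1) * x) (h2 : 2 ^ m * x < 1) : walsh r x = -1 := by
  obtain ⟨s, rfl⟩ := Nat.exists_eq_add_of_le hr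
  have hs : s < 2 ^ m := by rw [pow_succ] at hr2; omega
  have h0 : 0 ≤ x := by
    by_contra hneg
    have : (2:ℝ) ^ (m + 1) * x ≤ 0 := mul_nonpos_of_nonneg_of_nonpos (by positivity) (by linarith)
    linarith
  have := walsh_split m 1 s hs x
  rw [mul_one] at this
  rw [this, walsh_small m s hs x h0 h2, walsh_one]
  unfold r0
  have h3 : 1 / 2 ≤ 2 ^ m * x := by rw [pow_succ] at h1; linarith
  rw [Int.fract_eq_self.mpr ⟨by positivity, h2⟩, if_neg (by linarith)]
  simp

lemma dK_low (m r : ℕ) (hr : r ≤ 2 ^ (m + 1)) (x : ℝ)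
    (h1 : 1 ≤ 2 ^ (m + 1) * x) (h2 : 2 ^ m * x < 1) :
    dirichletKernel r x = min (r:ℝ) (2 ^ (m + 1) - r) := by
  have h0 : 0 ≤ x := by
    by_contra hneg
    have : (2:ℝ) ^ (m + 1) * x ≤ 0 := mul_nonpos_of_nonneg_of_nonpos (by positivity) (by linarith)
    linarith
  induction r with
  | zero => simp [dirichletKernel]
  | succ r ih =>
    have ih := ih (by omega)
    unfold dirichletKernel at *
    rw [Finset.sum_range_succ, ih]
    have hp : (2:ℝ) ^ (m + 1) = 2 * 2 ^ m := by rw [pow_succ]; ring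
    rcases lt_or_ge r (2 ^ m) with h | h
    · rw [walsh_small m r h x h0 h2]
      have : (r:ℝ) + 1 ≤ 2 ^ m := by exact_mod_cast h
      push_cast
      rw [min_eq_left (by linarith), min_eq_left (by linarith)]
    · rw [walsh_high m r h (by omega) x h1 h2]
      have : (2:ℝ) ^ m ≤ r := by exact_mod_cast h
      push_cast
      rw [min_eq_right (by linarith), min_eq_right (by linarith)]
      ring

lemma dK_add (m q r : ℕ) (hr : r ≤ 2 ^ m) (x : ℝ) :
    dirichletKernel (2 ^ m * q + r) x =
      dirichletKernel (2 ^ m * q) x + walsh q (2 ^ m * x) * dirichletKernel r x := by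
  unfold dirichletKernel
  rw [Finset.sum_range_add, Finset.mul_sum]
  congr 1
  apply Finset.sum_congr rfl
  intro s hs
  have := Finset.mem_range.mp hs
  rw [walsh_split m q s (by omega)]
  ring

lemma dK_block (m q r : ℕ) (hr : r < 2 ^ (m + 1)) (x : ℝ)
    (h1 : 1 ≤ 2 ^ (m + 1) * x) (h2 : 2 ^ m * x < 1) :
    dirichletKernel (2 ^ (m + 1) * q + r) x =
      min (r:ℝ) (2 ^ (m + 1) - r) * walsh q (2 ^ (m + 1) * x) := by
  have hz : dirichletKernel (2 ^ (m + 1) * q) x = 0 := by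
    induction q with
    | zero => simp [dirichletKernel]
    | succ q ih =>
      rw [mul_add, mul_one, dK_add _ _ _ le_rfl, ih, dK_low m _ le_rfl x h1 h2]
      simp
  rw [dK_add _ _ _ hr.le, hz, dK_low m r hr.le x h1 h2]
  ring

lemma walsh_orth_scaled (m p q : ℕ) :
    ∫ x in (1 / 2 ^ (m + 1) : ℝ)..(1 / 2 ^ m),
      walsh p (2 ^ (m + 1) * x) * walsh q (2 ^ (m + 1) * x) =
      (1 / 2 ^ (m + 1)) * if p = q then 1 else 0 := by
  have := intervalIntegral.integral_comp_mul_left (a := (1 / 2 ^ (m + 1) : ℝ)) (b := 1 / 2 ^ m)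
    (fun y => walsh p y * walsh q y) (c := 2 ^ (m + 1)) (by positivity)
  rw [this, ← walsh_orth p q]
  have h : ∫ x in (0:ℝ)..1, walsh p (x + 1) * walsh q (x + 1) =
      ∫ x in (1:ℝ)..2, walsh p x * walsh q x := by
    rw [intervalIntegral.integral_comp_add_right (fun x => walsh p x * walsh q x)]
    norm_num
  have e1 : (2:ℝ) ^ (m + 1) * (1 / 2 ^ (m + 1)) = 1 := by field_simp
  have e2 : (2:ℝ) ^ (m + 1) * (1 / 2 ^ m) = 2 := by rw [pow_succ]; field_simp
  rw [e1, e2, ← h]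
  simp [walsh_periodic]

lemma int_block (m k q : ℕ) :
    ∫ x in (1 / 2 ^ (m + 1) : ℝ)..(1 / 2 ^ m),
      dirichletKernel k x * walsh q (2 ^ (m + 1) * x) =
    if k / 2 ^ (m + 1) = q then
      min ((k % 2 ^ (m + 1) : ℕ) : ℝ) (2 ^ (m + 1) - (k % 2 ^ (m + 1) : ℕ)) / 2 ^ (m + 1) else 0 := by
  set r := k % 2 ^ (m + 1) with hr
  have hrlt : r < 2 ^ (m + 1) := Nat.mod_lt _ (by positivity)
  have e : ∫ x in (1 / 2 ^ (m + 1) : ℝ)..(1 / 2 ^ m),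
      dirichletKernel k x * walsh q (2 ^ (m + 1) * x) =
      ∫ x in (1 / 2 ^ (m + 1) : ℝ)..(1 / 2 ^ m), min (r:ℝ) (2 ^ (m + 1) - r) *
        (walsh (k / 2 ^ (m + 1)) (2 ^ (m + 1) * x) * walsh q (2 ^ (m + 1) * x)) := by
    apply intervalIntegral.integral_congr_ae
    have hne : ∀ᵐ x : ℝ, x ≠ 1 / 2 ^ m := by simp [ae_iff]
    filter_upwards [hne] with x hne hx
    rw [Set.uIoc_of_le (by gcongr <;> norm_num)] at hx
    have hlt : x < 1 / 2 ^ m := lt_of_le_of_ne hx.2 hne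
    have h1 : 1 ≤ 2 ^ (m + 1) * x := by
      have := hx.1.le
      rw [div_le_iff₀ (by positivity)] at this
      linarith
    have h2 : 2 ^ m * x < 1 := by
      rw [lt_div_iff₀ (by positivity)] at hlt
      linarith
    conv_lhs => rw [← Nat.div_add_mod k (2 ^ (m + 1))]
    rw [dK_block m _ _ hrlt x h1 h2]
    ring
  rw [e, intervalIntegral.integral_const_mul, walsh_orth_scaled]
  split_ifs <;> ring

/-- the unnormalised Nörlund sum -/
def nSum (n : ℕ) (x : ℝ) : ℝ := ∑ i ∈ Finset.Ico 1 n, dirichletKernel (n - i) x / i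

@[fun_prop]
lemma nSum_measurable (n : ℕ) : Measurable (nSum n) := by
  unfold nSum
  fun_prop

lemma bdd_intervalIntegrable (g : ℝ → ℝ) (hg : Measurable g) (C : ℝ) (hC : ∀ x, |g x| ≤ C) (a b : ℝ) :
    IntervalIntegrable g volume a b := by
  refine (intervalIntegrable_const (c := C)).mono_fun hg.aestronglyMeasurable ?_
  refine Eventually.of_forall fun x => ?_
  show ‖g x‖ ≤ ‖C‖
  rw [Real.norm_eq_abs, Real.norm_eq_abs]
  exact (hC x).trans (le_abs_self _)

lemma nSum_bdd (n : ℕ) : ∃ C, ∀ x, |nSum n x| ≤ C := by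
  refine ⟨∑ i ∈ Finset.Ico 1 n, (((n - i : ℕ)) : ℝ) / i, fun x => ?_⟩
  unfold nSum
  refine (Finset.abs_sum_le_sum_abs _ _).trans (Finset.sum_le_sum fun i _ => ?_)
  rw [abs_div, Nat.abs_cast]
  gcongr
  exact dirichletKernel_abs_le _ _

lemma kernel_piece (n m : ℕ) (h1 : 2 ^ (m + 1) ≤ n % 2 ^ (m + 2))
    (h2 : 2 * (n % 2 ^ (m + 2)) ≤ 3 * 2 ^ (m + 1)) :
    (1 / 4) * ∑ i ∈ Finset.Ico (1:ℕ) (2 ^ m + 1), (1:ℝ) / i ≤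
      ∫ x in (1 / 2 ^ (m + 2) : ℝ)..(1 / 2 ^ (m + 1)), |nSum n x| := by
  obtain ⟨C, hC⟩ := nSum_bdd n
  have hle : (1 / 2 ^ (m + 2) : ℝ) ≤ 1 / 2 ^ (m + 1) := by gcongr <;> norm_num
  set L := 2 ^ (m + 2) with hL
  set q := n / L with hq
  have hLpos : 0 < L := by positivity
  have hpm : 2 ^ (m + 1) = 2 * 2 ^ m := by ring
  have hLm : L = 4 * 2 ^ m := by rw [hL]; ring
  have hmpos : 0 < 2 ^ m := by positivity
  have step1 : ∫ x in (1 / 2 ^ (m + 2) : ℝ)..(1 / 2 ^ (m + 1)), nSum n x * walsh q (2 ^ (m + 2) * x) ≤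
      ∫ x in (1 / 2 ^ (m + 2) : ℝ)..(1 / 2 ^ (m + 1)), |nSum n x| := by
    apply intervalIntegral.integral_mono_on hle
    · apply bdd_intervalIntegrable _ (by fun_prop) C
      intro x
      rw [abs_mul, walsh_abs, mul_one]; exact hC x
    · apply bdd_intervalIntegrable _ (by fun_prop) C
      intro x
      rw [abs_abs]; exact hC x
    · intro x _
      refine (le_abs_self _).trans ?_
      rw [abs_mul, walsh_abs, mul_one]
  refine le_trans ?_ step1
  have step2 : ∫ x in (1 / 2 ^ (m + 2) : ℝ)..(1 / 2 ^ (m + 1)), nSum n x * walsh q (2 ^ (m + 2) * x) =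
      ∑ i ∈ Finset.Ico 1 n, (if (n - i) / L = q then
      min (((n - i) % L : ℕ) : ℝ) (2 ^ (m + 2) - ((n - i) % L : ℕ)) / 2 ^ (m + 2) else 0) / i := by
    have : ∀ x, nSum n x * walsh q (2 ^ (m + 2) * x) =
        ∑ i ∈ Finset.Ico 1 n, (dirichletKernel (n - i) x * walsh q (2 ^ (m + 2) * x)) / i := by
      intro x
      unfold nSum
      rw [Finset.sum_mul]
      exact Finset.sum_congr rfl fun i _ => by ring
    simp_rw [this]
    rw [intervalIntegral.integral_finsetSum]
    · apply Finset.sum_congr rfl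
      intro i _
      rw [intervalIntegral.integral_div, int_block (m + 1)]
    · intro i _
      apply IntervalIntegrable.div_const
      apply bdd_intervalIntegrable _ (by fun_prop) (n - i : ℕ)
      intro x
      rw [abs_mul, walsh_abs, mul_one]
      exact dirichletKernel_abs_le _ _
  rw [step2, Finset.mul_sum]
  have hnL : n % L ≤ n := Nat.mod_le _ _
  have hdm := Nat.div_add_mod n L
  rw [← hq] at hdm
  refine le_trans ?_ (Finset.sum_le_sum_of_subset_of_nonneg (s := Finset.Ico (1:ℕ) (2 ^ m + 1)) ?_ ?_)
  · apply Finset.sum_le_sum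
    intro i hi
    rw [Finset.mem_Ico] at hi
    have hni : n - i = L * q + (n % L - i) := by omega
    have hlt : n % L - i < L := lt_of_le_of_lt (Nat.sub_le _ _) (Nat.mod_lt _ hLpos)
    have e1 : (n - i) / L = q := by
      rw [hni, Nat.mul_add_div hLpos, Nat.div_eq_of_lt hlt, add_zero]
    have e2 : (n - i) % L = n % L - i := by
      rw [hni, Nat.mul_add_mod, Nat.mod_eq_of_lt hlt]
    rw [if_pos e1, e2]
    rw [div_eq_mul_one_div (min _ _ / _) (i:ℝ)]
    have hi0 : (0:ℝ) ≤ 1 / i := by positivity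
    apply mul_le_mul_of_nonneg_right _ hi0
    have hp : (0:ℝ) < 2 ^ (m + 2) := by positivity
    rw [le_div_iff₀ hp]
    apply le_min
    · have : 2 ^ m ≤ n % L - i := by omega
      have : (2:ℝ) ^ m ≤ ((n % L - i : ℕ) : ℝ) := by exact_mod_cast this
      rw [pow_add]; linarith
    · have : n % L - i ≤ 3 * 2 ^ m := by omega
      have : ((n % L - i : ℕ) : ℝ) ≤ 3 * 2 ^ m := by exact_mod_cast this
      rw [pow_add]; linarith
  · intro i hi
    rw [Finset.mem_Ico] at *
    omega
  · intro i _ _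
    split_ifs
    · have hlt : (n - i) % L < L := Nat.mod_lt _ hLpos
      have : (((n - i) % L : ℕ) : ℝ) ≤ 2 ^ (m + 2) := by exact_mod_cast hlt.le
      have : 0 ≤ min (((n - i) % L : ℕ) : ℝ) (2 ^ (m + 2) - ((n - i) % L : ℕ)) :=
        le_min (by positivity) (by linarith)
      positivity
    · simp

lemma three_pIdx (s : ℕ) : 3 * pIdx s + 1 = 4 ^ (s + 1) := by
  unfold pIdx
  induction s with
  | zero => simp
  | succ s ih => rw [Finset.sum_range_succ, mul_add, pow_succ 4 (s + 1)]; omega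

lemma pIdx_mod (s N : ℕ) (h : s ≤ N) : pIdx N % 2 ^ (2 * s + 1) = pIdx s := by
  have h4 : 2 ^ (2 * s + 1) = 2 * 4 ^ s := by rw [pow_succ, pow_mul]; norm_num [mul_comm]
  have hb : pIdx s < 2 ^ (2 * s + 1) := by
    have := three_pIdx s
    rw [pow_succ] at this
    omega
  induction N, h using Nat.le_induction with
  | base => exact Nat.mod_eq_of_lt hb
  | succ N hN ih =>
    have : pIdx (N + 1) = pIdx N + 4 ^ (N + 1) := by
      unfold pIdx; rw [Finset.sum_range_succ]
    rw [this, Nat.add_mod, ih]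
    have hd : 4 ^ (N + 1) % 2 ^ (2 * s + 1) = 0 := by
      apply Nat.mod_eq_zero_of_dvd
      rw [h4]
      obtain ⟨j, rfl⟩ := Nat.exists_eq_add_of_le hN
      exact ⟨2 * 4 ^ j, by ring⟩
    rw [hd, add_zero, Nat.mod_eq_of_lt hb]

lemma logSum_eq (n : ℕ) : logSum n = ((harmonic (n - 1) : ℚ) : ℝ) := by
  unfold logSum
  rw [harmonic_eq_sum_Icc]
  push_cast
  simp

lemma nSum_lower (N : ℕ) (hN : 2 ≤ N) :
    (N:ℝ) * (N - 1) / 16 ≤ ∫ x in (0:ℝ)..1, |nSum (pIdx (N - 1)) x| := by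
  set n := pIdx (N - 1) with hn
  obtain ⟨C, hC⟩ := nSum_bdd n
  have hIntg : ∀ a b : ℝ, IntervalIntegrable (fun x => |nSum n x|) volume a b := fun a b =>
    bdd_intervalIntegrable _ (by fun_prop) C (fun x => by rw [abs_abs]; exact hC x) a b
  have hnn : ∀ a b : ℝ, a ≤ b → 0 ≤ ∫ x in a..b, |nSum n x| := fun a b hab =>
    intervalIntegral.integral_nonneg hab (fun x _ => abs_nonneg _)
  have piece : ∀ s, 1 ≤ s → s ≤ N - 1 → (s:ℝ) / 8 ≤
      ∫ x in (1 / 2 ^ (2 * s + 1) : ℝ)..(1 / 2 ^ (2 * s)), |nSum n x| := by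
    intro s hs1 hs2
    obtain ⟨t, rfl⟩ := Nat.exists_eq_add_of_le' hs1
    have hmod := pIdx_mod (t + 1) (N - 1) hs2
    have h3 := three_pIdx (t + 1)
    have hp4 : 4 ^ (t + 1 + 1) = 4 * 2 ^ (2 * t + 1 + 1) := by
      rw [show (4:ℕ) = 2 ^ 2 by norm_num, ← pow_mul, ← pow_add]
      congr 1; ring
    have := kernel_piece n (2 * t + 1)
      (by rw [show 2 * t + 1 + 2 = 2 * (t + 1) + 1 by ring, hn, hmod]; omega)
      (by rw [show 2 * t + 1 + 2 = 2 * (t + 1) + 1 by ring, hn, hmod]; omega)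
    rw [show 2 * t + 1 + 2 = 2 * (t + 1) + 1 by ring, show 2 * t + 1 + 1 = 2 * (t + 1) by ring] at this
    refine le_trans ?_ this
    have hh := log_add_one_le_harmonic (2 ^ (2 * t + 1))
    have hsum : ∑ i ∈ Finset.Ico (1:ℕ) (2 ^ (2 * t + 1) + 1), (1:ℝ) / i = ((harmonic (2 ^ (2 * t + 1)) : ℚ) : ℝ) := by
      rw [harmonic_eq_sum_Icc]
      push_cast
      simp only [one_div]
      rfl
    rw [hsum]
    have hlog : (2 * t + 1 : ℝ) * Real.log 2 ≤ Real.log (((2 ^ (2 * t + 1) : ℕ) : ℝ) + 1) := by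
      have : (2 * t + 1 : ℝ) * Real.log 2 = Real.log (2 ^ (2 * t + 1)) := by
        rw [Real.log_pow]; push_cast; ring
      rw [this]
      apply Real.log_le_log (by positivity)
      push_cast; linarith
    have hl2 := Real.log_two_gt_d9
    have ht : (0:ℝ) ≤ t := by positivity
    have hcast : ((2 ^ (2 * t + 1) + 1 : ℕ) : ℝ) = ((2 ^ (2 * t + 1) : ℕ) : ℝ) + 1 := by push_cast; ring
    rw [hcast] at hh
    push_cast
    nlinarith
  have main : ∀ k, k ≤ N - 1 → (k:ℝ) * (k + 1) / 16 ≤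
      ∫ x in (1 / 2 ^ (2 * k + 1) : ℝ)..1, |nSum n x| := by
    intro k
    induction k with
    | zero =>
      intro _
      simp only [Nat.cast_zero, zero_mul, zero_div]
      exact hnn _ _ (by norm_num)
    | succ k ih =>
      intro hk
      have ih := ih (by omega)
      have hp := piece (k + 1) (by omega) hk
      rw [← intervalIntegral.integral_add_adjacent_intervals
        (hIntg (1 / 2 ^ (2 * (k + 1) + 1)) (1 / 2 ^ (2 * (k + 1)))) (hIntg _ 1),
        ← intervalIntegral.integral_add_adjacent_intervals
        (hIntg (1 / 2 ^ (2 * (k + 1))) (1 / 2 ^ (2 * k + 1))) (hIntg _ 1)]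
      have h0 := hnn (1 / 2 ^ (2 * (k + 1))) (1 / 2 ^ (2 * k + 1)) (by gcongr <;> norm_num)
      push_cast at *
      nlinarith
  have hm := main (N - 1) le_rfl
  rw [← intervalIntegral.integral_add_adjacent_intervals
        (hIntg 0 (1 / 2 ^ (2 * (N - 1) + 1))) (hIntg _ 1)]
  have h0 := hnn 0 (1 / 2 ^ (2 * (N - 1) + 1)) (by positivity)
  have : ((N - 1 : ℕ) : ℝ) = (N:ℝ) - 1 := by
    rw [Nat.cast_sub (by omega)]; simp
  rw [this] at hm
  nlinarith

lemma FKernel_eq (n : ℕ) (x : ℝ) : FKernel n x = (1 / logSum n) * nSum n x := rfl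

lemma logSum_pos (n : ℕ) (hn : 2 ≤ n) : 0 < logSum n := by
  unfold logSum
  apply Finset.sum_pos
  · intro i hi
    have := (Finset.mem_Icc.mp hi).1
    positivity
  · exact ⟨1, by simp; omega⟩

lemma pIdx_bounds (N : ℕ) (hN : 2 ≤ N) : N ≤ pIdx (N - 1) ∧ pIdx (N - 1) ≤ 4 ^ N := by
  have h := three_pIdx (N - 1)
  rw [show N - 1 + 1 = N by omega] at h
  refine ⟨?_, by omega⟩
  have : ∀ k, 3 * (k + 2) + 1 ≤ 4 ^ (k + 2) := by
    intro k
    induction k with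
    | zero => norm_num
    | succ k ih => rw [show k + 1 + 2 = (k + 2) + 1 by ring, pow_succ]; omega
  have := this (N - 2)
  rw [show N - 2 + 2 = N by omega] at this
  omega

lemma FKernel_lower (N : ℕ) (hN : 2 ≤ N) :
    (N:ℝ) / 96 ≤ ∫ x in (0:ℝ)..1, |FKernel (pIdx (N - 1)) x| := by
  have hb := pIdx_bounds N hN
  have hN' : (2:ℝ) ≤ N := by exact_mod_cast hN
  set n := pIdx (N - 1) with hn
  have hl := logSum_pos n (by omega)
  have hlu : logSum n ≤ 3 * N := by
    rw [logSum_eq]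
    refine (harmonic_le_one_add_log _).trans ?_
    have h1 : Real.log ((n - 1 : ℕ) : ℝ) ≤ Real.log (4 ^ N) := by
      apply Real.log_le_log
      · have : 0 < n - 1 := by omega
        exact_mod_cast this
      · have : n - 1 ≤ 4 ^ N := by omega
        exact_mod_cast this
    rw [Real.log_pow, show (4:ℝ) = 2 ^ 2 by norm_num, Real.log_pow] at h1
    have := Real.log_two_lt_d9
    push_cast at h1
    nlinarith
  have h := nSum_lower N hN
  have e : ∫ x in (0:ℝ)..1, |FKernel n x| = (1 / logSum n) * ∫ x in (0:ℝ)..1, |nSum n x| := by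
    rw [← intervalIntegral.integral_const_mul]
    congr 1
    ext x
    rw [FKernel_eq, abs_mul, abs_of_pos (by positivity : 0 < 1 / logSum n)]
  rw [e, one_div, inv_mul_eq_div, le_div_iff₀ hl]
  refine le_trans ?_ h
  nlinarith

/-! ### The multidimensional kernel and a Bessel bound -/

lemma cubeMeasure_eq_pi (d : ℕ) : cubeMeasure d = Measure.pi (fun _ : Fin d => unitMeasure) := by
  unfold cubeMeasure unitMeasure unitCube
  rw [volume_pi, Measure.restrict_pi_pi]

instance : IsProbabilityMeasure unitMeasure := ⟨by simp [unitMeasure]⟩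

instance (d : ℕ) : IsProbabilityMeasure (cubeMeasure d) := by
  rw [cubeMeasure_eq_pi]; infer_instance

lemma unit_int (g : ℝ → ℝ) : ∫ x, g x ∂unitMeasure = ∫ x in (0:ℝ)..1, g x := by
  unfold unitMeasure
  rw [intervalIntegral.integral_of_le (by norm_num), integral_Ico_eq_integral_Ioc]

lemma int_prod {d : ℕ} (φ : Fin d → ℝ → ℝ) :
    ∫ x, ∏ i, φ i (x i) ∂(cubeMeasure d) = ∏ i, ∫ x in (0:ℝ)..1, φ i x := by
  rw [cubeMeasure_eq_pi, integral_fintype_prod_eq_prod]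
  simp_rw [unit_int]

/-- product Walsh functions -/
def walshP {d : ℕ} (j : Fin d → ℕ) (x : Fin d → ℝ) : ℝ := ∏ i, walsh (j i) (x i)

@[fun_prop]
lemma walshP_measurable {d : ℕ} (j : Fin d → ℕ) : Measurable (walshP j) := by
  unfold walshP
  fun_prop

lemma walshP_abs {d : ℕ} (j : Fin d → ℕ) (x : Fin d → ℝ) : |walshP j x| = 1 := by
  unfold walshP
  rw [Finset.abs_prod]
  exact Finset.prod_eq_one fun i _ => walsh_abs _ _

lemma walshP_orth {d : ℕ} (j k : Fin d → ℕ) :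
    ∫ x, walshP j x * walshP k x ∂(cubeMeasure d) = if j = k then 1 else 0 := by
  have : ∀ x : Fin d → ℝ, walshP j x * walshP k x = ∏ i, (fun y => walsh (j i) y * walsh (k i) y) (x i) := by
    intro x
    unfold walshP
    rw [Finset.prod_mul_distrib]
  simp_rw [this]
  rw [int_prod (fun i y => walsh (j i) y * walsh (k i) y)]
  simp_rw [walsh_orth]
  split_ifs with h
  · subst h; simp
  · obtain ⟨i, hi⟩ := Function.ne_iff.mp h
    exact Finset.prod_eq_zero (Finset.mem_univ i) (by simp [hi])

lemma bdd_integrable {d : ℕ} (g : (Fin d → ℝ) → ℝ) (hg : Measurable g) (C : ℝ)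
    (hC : ∀ x, |g x| ≤ C) : Integrable g (cubeMeasure d) :=
  Integrable.of_bound hg.aestronglyMeasurable C (Eventually.of_forall hC)

lemma integrable_mul_walshP {d : ℕ} (g : (Fin d → ℝ) → ℝ) (hg : Integrable g (cubeMeasure d))
    (j : Fin d → ℕ) : Integrable (fun x => g x * walshP j x) (cubeMeasure d) := by
  refine hg.mul_bdd (c := 1) (walshP_measurable j).aestronglyMeasurable (Eventually.of_forall ?_)
  intro x
  rw [Real.norm_eq_abs, walshP_abs]

lemma walshCoef_add {d : ℕ} (g h : (Fin d → ℝ) → ℝ) (hg : Integrable g (cubeMeasure d))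
    (hh : Integrable h (cubeMeasure d)) (j : Fin d → ℕ) :
    walshCoef (fun x => g x + h x) j = walshCoef g j + walshCoef h j := by
  have e := integral_add (integrable_mul_walshP g hg j) (integrable_mul_walshP h hh j)
  unfold walshCoef
  unfold walshP at e
  rw [← e]
  congr 1
  ext x
  ring

lemma rectPartialSum_add {d : ℕ} (g h : (Fin d → ℝ) → ℝ) (hg : Integrable g (cubeMeasure d))
    (hh : Integrable h (cubeMeasure d)) (N : Fin d → ℕ) (x : Fin d → ℝ) :
    rectPartialSum (fun x => g x + h x) N x = rectPartialSum g N x + rectPartialSum h N x := by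
  unfold rectPartialSum
  rw [← Finset.sum_add_distrib]
  apply Finset.sum_congr rfl
  intro j _
  rw [walshCoef_add g h hg hh]
  ring

lemma mixedLogMean_add {d : ℕ} (B : Finset (Fin d)) (g h : (Fin d → ℝ) → ℝ)
    (hg : Integrable g (cubeMeasure d))
    (hh : Integrable h (cubeMeasure d)) (n : Fin d → ℕ) (x : Fin d → ℝ) :
    mixedLogMean B (fun x => g x + h x) n x = mixedLogMean B g n x + mixedLogMean B h n x := by
  unfold mixedLogMean
  rw [← mul_add, ← Finset.sum_add_distrib]
  congr 1
  apply Finset.sum_congr rfl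
  intro j _
  rw [rectPartialSum_add g h hg hh]
  ring

@[fun_prop]
lemma rectPartialSum_measurable {d : ℕ} (g : (Fin d → ℝ) → ℝ) (N : Fin d → ℕ) :
    Measurable (rectPartialSum g N) := by
  unfold rectPartialSum
  fun_prop

@[fun_prop]
lemma mixedLogMean_measurable {d : ℕ} (B : Finset (Fin d)) (g : (Fin d → ℝ) → ℝ) (n : Fin d → ℕ) :
    Measurable (mixedLogMean B g n) := by
  unfold mixedLogMean
  fun_prop

lemma rectPartialSum_bdd {d : ℕ} (g : (Fin d → ℝ) → ℝ) (N : Fin d → ℕ) :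
    ∃ C, ∀ x, |rectPartialSum g N x| ≤ C := by
  refine ⟨∑ j ∈ Fintype.piFinset (fun i => Finset.range (N i)), |walshCoef g j|, fun x => ?_⟩
  unfold rectPartialSum
  refine (Finset.abs_sum_le_sum_abs _ _).trans (Finset.sum_le_sum fun j _ => ?_)
  rw [abs_mul]
  have := walshP_abs j x
  unfold walshP at this
  rw [this, mul_one]

lemma rectPartialSum_integrable {d : ℕ} (g : (Fin d → ℝ) → ℝ) (N : Fin d → ℕ) :
    Integrable (rectPartialSum g N) (cubeMeasure d) := by
  obtain ⟨C, hC⟩ := rectPartialSum_bdd g N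
  exact bdd_integrable _ (by fun_prop) C hC

lemma mixedLogMean_integrable {d : ℕ} (B : Finset (Fin d)) (g : (Fin d → ℝ) → ℝ) (n : Fin d → ℕ) :
    Integrable (mixedLogMean B g n) (cubeMeasure d) := by
  unfold mixedLogMean
  apply Integrable.const_mul
  apply integrable_finsetSum
  intro i _
  exact (rectPartialSum_integrable g _).div_const _

lemma bessel {d : ℕ} (g : (Fin d → ℝ) → ℝ) (hg : Measurable g) (M : ℝ) (hM : ∀ x, |g x| ≤ M)
    (N : Fin d → ℕ) : ∫ x, |rectPartialSum g N x| ∂(cubeMeasure d) ≤ (1 + M ^ 2) / 2 := by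
  obtain ⟨C, hC⟩ := rectPartialSum_bdd g N
  have hgi : Integrable g (cubeMeasure d) := bdd_integrable g hg M hM
  have hg2 : Integrable (fun x => g x ^ 2) (cubeMeasure d) := by
    apply bdd_integrable _ (by fun_prop) (M ^ 2)
    intro x
    rw [abs_pow]
    exact pow_le_pow_left₀ (abs_nonneg _) (hM x) 2
  have hS := rectPartialSum_integrable g N
  set S := rectPartialSum g N with hSdef
  have hSm : Measurable S := rectPartialSum_measurable g N
  have hS2 : Integrable (fun x => S x ^ 2) (cubeMeasure d) := by
    apply bdd_integrable _ (by fun_prop) (C ^ 2)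
    intro x
    rw [abs_pow]
    exact pow_le_pow_left₀ (abs_nonneg _) (hC x) 2
  have hgS : Integrable (fun x => g x * S x) (cubeMeasure d) := by
    apply bdd_integrable _ (by fun_prop) (M * C)
    intro x
    rw [abs_mul]
    exact mul_le_mul (hM x) (hC x) (abs_nonneg _) ((abs_nonneg _).trans (hM x))
  set P := Fintype.piFinset (fun i => Finset.range (N i))
  have hSx : ∀ x, S x = ∑ j ∈ P, walshCoef g j * walshP j x := fun x => rfl
  have e1 : ∀ F : (Fin d → ℝ) → ℝ, Integrable F (cubeMeasure d) →
      ∫ x, F x * S x ∂(cubeMeasure d) = ∑ j ∈ P, walshCoef g j * walshCoef F j := by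
    intro F hF
    have : ∀ x, F x * S x = ∑ j ∈ P, walshCoef g j * (F x * walshP j x) := by
      intro x
      rw [hSx, Finset.mul_sum]
      exact Finset.sum_congr rfl fun j _ => by ring
    simp_rw [this]
    rw [integral_finsetSum]
    · apply Finset.sum_congr rfl
      intro j _
      rw [integral_const_mul]
      rfl
    · intro j _
      exact (integrable_mul_walshP F hF j).const_mul _
  have e2 : ∀ k ∈ P, walshCoef S k = walshCoef g k := by
    intro k hk
    have h0 : walshCoef S k = ∫ x, S x * walshP k x ∂(cubeMeasure d) := rfl
    rw [h0]
    have : ∀ x, S x * walshP k x = ∑ j ∈ P, walshCoef g j * (walshP j x * walshP k x) := by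
      intro x
      rw [hSx, Finset.sum_mul]
      exact Finset.sum_congr rfl fun j _ => by ring
    simp_rw [this]
    rw [integral_finsetSum]
    · simp_rw [integral_const_mul, walshP_orth]
      simp [hk]
    · intro j _
      apply Integrable.const_mul
      apply integrable_mul_walshP
      exact bdd_integrable _ (by fun_prop) 1 (fun x => (walshP_abs j x).le)
  have e3 : ∫ x, S x ^ 2 ∂(cubeMeasure d) = ∫ x, g x * S x ∂(cubeMeasure d) := by
    rw [e1 g hgi]
    simp_rw [pow_two]
    rw [e1 S hS]
    exact Finset.sum_congr rfl fun k hk => by rw [e2 k hk]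
  have e4 : 0 ≤ ∫ x, (g x - S x) ^ 2 ∂(cubeMeasure d) := integral_nonneg fun x => sq_nonneg _
  have e5 : ∫ x, (g x - S x) ^ 2 ∂(cubeMeasure d) = ∫ x, g x ^ 2 ∂(cubeMeasure d)
      - 2 * ∫ x, g x * S x ∂(cubeMeasure d) + ∫ x, S x ^ 2 ∂(cubeMeasure d) := by
    have hi := hg2.sub (hgS.const_mul 2)
    have a1 := integral_add hi hS2
    have a2 := integral_sub hg2 (hgS.const_mul 2)
    rw [integral_const_mul] at a2
    simp only [Pi.sub_apply] at a1
    rw [← a2, ← a1]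
    congr 1
    ext x
    ring
  have e6 : ∫ x, g x ^ 2 ∂(cubeMeasure d) ≤ M ^ 2 := by
    have : ∫ x, g x ^ 2 ∂(cubeMeasure d) ≤ ∫ x, M ^ 2 ∂(cubeMeasure d) := by
      apply integral_mono hg2 (integrable_const _)
      intro x
      show g x ^ 2 ≤ M ^ 2
      rw [← sq_abs]
      exact pow_le_pow_left₀ (abs_nonneg _) (hM x) 2
    simpa using this
  have e7 : ∫ x, |S x| ∂(cubeMeasure d) ≤ ∫ x, (1 + S x ^ 2) / 2 ∂(cubeMeasure d) := by
    apply integral_mono hS.abs (((integrable_const _).add hS2).div_const 2)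
    intro x
    show |S x| ≤ (1 + S x ^ 2) / 2
    nlinarith [sq_nonneg (|S x| - 1), sq_abs (S x)]
  rw [integral_div, integral_add (integrable_const _) hS2] at e7
  simp only [integral_const, probReal_univ, smul_eq_mul, one_mul] at e7
  linarith

lemma logSum_eq_Ico (n : ℕ) : logSum n = ∑ i ∈ Finset.Ico 1 n, (1:ℝ) / i := by
  unfold logSum
  apply Finset.sum_congr _ (fun _ _ => rfl)
  ext i
  simp only [Finset.mem_Icc, Finset.mem_Ico]
  omega

lemma mean_bdd {d : ℕ} (B : Finset (Fin d)) (g : (Fin d → ℝ) → ℝ) (hg : Measurable g) (M : ℝ)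
    (hM : ∀ x, |g x| ≤ M) (n : ℕ) (hn : 2 ≤ n) :
    ∫ x, |mixedLogMean B g (fun _ => n) x| ∂(cubeMeasure d) ≤ (1 + M ^ 2) / 2 := by
  have hl := logSum_pos n hn
  set P := Fintype.piFinset (fun _ : Fin d => Finset.Ico 1 n) with hP
  set K : (Fin d → ℕ) → (Fin d → ℕ) := fun i j => if j ∈ B then n - i j else i j
  have hprod : ∑ i ∈ P, 1 / ∏ j, (i j : ℝ) = ∏ _j : Fin d, logSum n := by
    rw [logSum_eq_Ico, Finset.prod_univ_sum]
    apply Finset.sum_congr rfl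
    intro i _
    simp [Finset.prod_inv_distrib]
  have hpos : 0 < ∏ _j : Fin d, logSum n := Finset.prod_pos fun _ _ => hl
  have hb : ∀ x, |mixedLogMean B g (fun _ => n) x| ≤
      (∏ _j : Fin d, logSum n)⁻¹ * ∑ i ∈ P, (1 / ∏ j, (i j : ℝ)) * |rectPartialSum g (K i) x| := by
    intro x
    unfold mixedLogMean
    rw [abs_mul, abs_of_pos (inv_pos.mpr hpos)]
    apply mul_le_mul_of_nonneg_left _ (inv_pos.mpr hpos).le
    refine (Finset.abs_sum_le_sum_abs _ _).trans (Finset.sum_le_sum fun i _ => ?_)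
    have h0 : (0:ℝ) ≤ ∏ j, (i j : ℝ) := Finset.prod_nonneg fun j _ => Nat.cast_nonneg (i j)
    rw [abs_div, abs_of_nonneg h0, div_eq_mul_one_div, mul_comm]
  have hi : ∀ i ∈ P, Integrable (fun x => (1 / ∏ j, (i j : ℝ)) * |rectPartialSum g (K i) x|)
      (cubeMeasure d) := fun i _ => (rectPartialSum_integrable g (K i)).abs.const_mul _
  refine (integral_mono (mixedLogMean_integrable B g _).abs
    ((integrable_finsetSum _ hi).const_mul _) hb).trans ?_
  rw [integral_const_mul, integral_finsetSum _ hi, inv_mul_eq_div, div_le_iff₀ hpos, ← hprod,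
    Finset.mul_sum]
  apply Finset.sum_le_sum
  intro i _
  rw [integral_const_mul, mul_comm]
  apply mul_le_mul_of_nonneg_right (bessel g hg M hM _)
  have : (0:ℝ) ≤ ∏ j, (i j : ℝ) := Finset.prod_nonneg fun j _ => Nat.cast_nonneg (i j)
  positivity

/-- The small cube with side `4^{-N}` at the origin. -/
def smallCube (d N : ℕ) : Set (Fin d → ℝ) := Set.univ.pi fun _ => Set.Ico (0:ℝ) (1 / 4 ^ N)

lemma smallCube_measurable (d N : ℕ) : MeasurableSet (smallCube d N) :=
  MeasurableSet.univ_pi fun _ => measurableSet_Ico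

lemma walshCoef_conc {d : ℕ} (N : ℕ) (h : (Fin d → ℝ) → ℝ) (hs : ∀ x, x ∉ smallCube d N → h x = 0)
    (j : Fin d → ℕ) (hj : ∀ i, j i < 4 ^ N) : walshCoef h j = ∫ x, h x ∂(cubeMeasure d) := by
  unfold walshCoef
  congr 1
  ext x
  by_cases hx : x ∈ smallCube d N
  · have : ∏ i, walsh (j i) (x i) = 1 := by
      apply Finset.prod_eq_one
      intro i _
      have hxi := hx i (Set.mem_univ i)
      have h4 : (2:ℝ) ^ (2 * N) = 4 ^ N := by rw [pow_mul]; norm_num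
      apply walsh_small (2 * N) _ _ _ hxi.1
      · rw [h4]
        have := hxi.2
        rw [lt_div_iff₀ (by positivity)] at this
        linarith
      · rw [pow_mul]; exact hj i
    rw [this, mul_one]
  · rw [hs x hx, zero_mul]

lemma mean_conc {d : ℕ} (B : Finset (Fin d)) (N : ℕ) (h : (Fin d → ℝ) → ℝ)
    (hs : ∀ x, x ∉ smallCube d N → h x = 0) (n : ℕ) (hn : n ≤ 4 ^ N) (x : Fin d → ℝ) :
    mixedLogMean B h (fun _ => n) x = (∫ x, h x ∂(cubeMeasure d)) *
      ∏ j, (if j ∈ B then FKernel n else GKernel n) (x j) := by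
  have hr : ∀ K : Fin d → ℕ, (∀ i, K i ≤ n) → rectPartialSum h K x =
      (∫ x, h x ∂(cubeMeasure d)) * ∏ j, dirichletKernel (K j) (x j) := by
    intro K hK
    unfold rectPartialSum dirichletKernel
    rw [Finset.prod_univ_sum, Finset.mul_sum]
    apply Finset.sum_congr rfl
    intro j hj
    rw [walshCoef_conc N h hs j]
    intro i
    have := Finset.mem_range.mp (Fintype.mem_piFinset.mp hj i)
    have := hK i
    omega
  have hk : ∀ j : Fin d, (if j ∈ B then FKernel n else GKernel n) (x j) =
      (logSum n)⁻¹ * ∑ i ∈ Finset.Ico 1 n,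
        dirichletKernel (if j ∈ B then n - i else i) (x j) / i := by
    intro j
    split_ifs <;> simp [FKernel, GKernel]
  simp_rw [hk]
  rw [Finset.prod_mul_distrib, Finset.prod_univ_sum]
  unfold mixedLogMean
  rw [← Finset.prod_inv_distrib, mul_left_comm]
  congr 1
  rw [Finset.mul_sum]
  apply Finset.sum_congr rfl
  intro i hi
  rw [hr, Finset.prod_div_distrib]
  · ring
  · intro j
    have : 1 ≤ i j ∧ i j < n := Finset.mem_Ico.mp (Fintype.mem_piFinset.mp hi j)
    show (if j ∈ B then n - i j else i j) ≤ n
    split_ifs <;> omega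

lemma dirichletKernel_int (k : ℕ) (hk : 1 ≤ k) : ∫ x in (0:ℝ)..1, dirichletKernel k x = 1 := by
  unfold dirichletKernel
  rw [intervalIntegral.integral_finsetSum]
  · have : ∀ i, ∫ x in (0:ℝ)..1, walsh i x = if i = 0 then 1 else 0 := by
      intro i
      have := walsh_orth i 0
      simpa [walsh_zero] using this
    simp_rw [this]
    simp; omega
  · intro i _
    exact bdd_intervalIntegrable _ (by fun_prop) 1 (fun x => (walsh_abs i x).le) _ _

lemma GKernel_lower (n : ℕ) (hn : 2 ≤ n) : 1 ≤ ∫ x in (0:ℝ)..1, |GKernel n x| := by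
  have hl := logSum_pos n hn
  have hD : ∀ i, IntervalIntegrable (dirichletKernel i) volume 0 1 := fun i =>
    bdd_intervalIntegrable _ (by fun_prop) i (dirichletKernel_abs_le i) _ _
  have hsum : IntervalIntegrable (fun x => ∑ i ∈ Finset.Ico 1 n, dirichletKernel i x / i) volume 0 1 := by
    have := IntervalIntegrable.sum (Finset.Ico 1 n) (f := fun i x => dirichletKernel i x / i)
      (fun i _ => (hD i).div_const _)
    have hf : (fun x => ∑ i ∈ Finset.Ico 1 n, dirichletKernel i x / (i:ℝ)) =
        ∑ i ∈ Finset.Ico 1 n, fun x => dirichletKernel i x / (i:ℝ) := by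
      ext x
      simp
    rw [hf]
    exact this
  have hG : IntervalIntegrable (GKernel n) volume 0 1 := by
    unfold GKernel
    exact hsum.const_mul _
  have e : ∫ x in (0:ℝ)..1, GKernel n x = 1 := by
    unfold GKernel
    rw [intervalIntegral.integral_const_mul, intervalIntegral.integral_finsetSum]
    · have : ∑ i ∈ Finset.Ico 1 n, ∫ x in (0:ℝ)..1, dirichletKernel i x / i = logSum n := by
        rw [logSum_eq_Ico]
        apply Finset.sum_congr rfl
        intro i hi
        rw [intervalIntegral.integral_div, dirichletKernel_int i (Finset.mem_Ico.mp hi).1]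
      rw [this]
      field_simp
    · intro i _
      exact (hD i).div_const _
  refine e.symm.le.trans ?_
  exact intervalIntegral.integral_mono_on (by norm_num) hG hG.abs (fun x _ => le_abs_self _)

lemma conc_lower {d : ℕ} (B : Finset (Fin d)) (N : ℕ) (hN : 2 ≤ N) (h : (Fin d → ℝ) → ℝ)
    (hs : ∀ x, x ∉ smallCube d N → h x = 0) (m : ℝ) (hm0 : 0 ≤ m) (hm : m ≤ ∫ x, h x ∂(cubeMeasure d)) :
    m * ((N:ℝ) / 96) ^ B.card ≤
      ∫ x, |mixedLogMean B h (fun _ => pIdx (N - 1)) x| ∂(cubeMeasure d) := by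
  have hb := pIdx_bounds N hN
  set n := pIdx (N - 1)
  have e : ∀ x, |mixedLogMean B h (fun _ => n) x| = (∫ x, h x ∂(cubeMeasure d)) *
      ∏ j, (fun y => |(if j ∈ B then FKernel n else GKernel n) y|) (x j) := by
    intro x
    rw [mean_conc B N h hs n hb.2, abs_mul, abs_of_nonneg (hm0.trans hm), Finset.abs_prod]
  simp_rw [e]
  rw [integral_const_mul, int_prod (fun j y => |(if j ∈ B then FKernel n else GKernel n) y|)]
  apply mul_le_mul hm _ (by positivity) (hm0.trans hm)
  have : ((N:ℝ) / 96) ^ B.card = ∏ j : Fin d, if j ∈ B then (N:ℝ) / 96 else 1 := by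
    rw [Finset.prod_ite]
    simp [div_pow]
  rw [this]
  apply Finset.prod_le_prod
  · intro j _
    split_ifs <;> positivity
  · intro j _
    by_cases hj : j ∈ B
    · simp only [hj, if_true]
      exact FKernel_lower N hN
    · simp only [hj, if_false]
      exact GKernel_lower n (by omega)

/-! ### Consequences of the failure of the Orlicz inclusion -/

lemma growth_fail {d : ℕ} (Q : YoungFunction) (b : ℕ)
    (hQ : ∃ g : (Fin d → ℝ) → ℝ, MemOrlicz Q g ∧
      ¬ Integrable (fun x => |g x| * Real.log (1 + |g x|) ^ b) (cubeMeasure d))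
    (c : ℝ) (hc : 0 < c) (U : ℝ) :
    ∃ u, U ≤ u ∧ Q.toFun u < c * (u * Real.log (1 + u) ^ b) := by
  by_contra hcon
  push Not at hcon
  obtain ⟨g, ⟨hgm, k, hk, hIntg, -⟩, hni⟩ := hQ
  apply hni
  set V := max U 1 with hV
  have hV1 : 1 ≤ V := le_max_right _ _
  set E := Real.log (1 + k) / Real.log 2 + 1 with hE
  have hl2 : 0 < Real.log 2 := Real.log_pos (by norm_num)
  have hlk : 0 ≤ Real.log (1 + k) := Real.log_nonneg (by linarith)
  have hE0 : 0 ≤ E := by positivity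
  have hlkV : 0 ≤ Real.log (1 + k * V) := Real.log_nonneg (by nlinarith)
  refine Integrable.mono' (g := fun x => k * V * Real.log (1 + k * V) ^ b +
    k * E ^ b / c * Q.toFun (|g x| / k)) ((integrable_const _).add (hIntg.const_mul _)) ?_ ?_
  · exact (by fun_prop : Measurable fun x => |g x| * Real.log (1 + |g x|) ^ b).aestronglyMeasurable
  · refine Eventually.of_forall fun x => ?_
    set v := |g x| / k with hv
    have hv0 : 0 ≤ v := by positivity
    have hgv : |g x| = k * v := by rw [hv]; field_simp
    have hkv : 0 ≤ k * v := by positivity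
    have hlog0 : 0 ≤ Real.log (1 + k * v) := Real.log_nonneg (by linarith)
    rw [hgv, Real.norm_eq_abs, abs_of_nonneg (by positivity)]
    have hQn := Q.nonneg v
    rcases le_or_gt v V with h | h
    · have h1 : k * v * Real.log (1 + k * v) ^ b ≤ k * V * Real.log (1 + k * V) ^ b := by
        gcongr
      have h2 : 0 ≤ k * E ^ b / c * Q.toFun v := by positivity
      linarith
    · have hlv : Real.log 2 ≤ Real.log (1 + v) := Real.log_le_log (by norm_num) (by linarith)
      have h1 : Real.log (1 + k * v) ≤ E * Real.log (1 + v) := by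
        have : Real.log (1 + k * v) ≤ Real.log ((1 + k) * (1 + v)) :=
          Real.log_le_log (by linarith) (by nlinarith)
        rw [Real.log_mul (by linarith) (by linarith)] at this
        have h3 : Real.log (1 + k) ≤ Real.log (1 + k) / Real.log 2 * Real.log (1 + v) := by
          rw [div_mul_eq_mul_div, le_div_iff₀ hl2]
          exact mul_le_mul_of_nonneg_left hlv hlk
        rw [hE, add_mul]
        linarith
      have h2 := hcon v ((le_max_left _ _).trans h.le)
      have h3 : k * v * Real.log (1 + k * v) ^ b ≤ k * v * (E * Real.log (1 + v)) ^ b := by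
        gcongr
      have h4 : k * v * (E * Real.log (1 + v)) ^ b ≤ k * E ^ b / c * Q.toFun v := by
        have : k * v * (E * Real.log (1 + v)) ^ b =
            k * E ^ b / c * (c * (v * Real.log (1 + v) ^ b)) := by
          rw [mul_pow]; field_simp
        rw [this]
        exact mul_le_mul_of_nonneg_left h2 (by positivity)
      have h5 : 0 ≤ k * V * Real.log (1 + k * V) ^ b := by positivity
      linarith

lemma young_superlinear (Q : YoungFunction) : ∃ U, 1 ≤ U ∧ ∀ u, U ≤ u → u ≤ Q.toFun u := by
  obtain ⟨U, hU⟩ := eventually_atTop.mp (Q.tendsto_atTop.eventually_ge_atTop 1)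
  refine ⟨max U 1, le_max_right _ _, fun u hu => ?_⟩
  have h1 := hU u ((le_max_left _ _).trans hu)
  have hu1 : 1 ≤ u := (le_max_right _ _).trans hu
  rw [le_div_iff₀ (by linarith)] at h1
  linarith

lemma choice_step {d : ℕ} (hd : 1 ≤ d) (Q : YoungFunction) (b : ℕ)
    (hQ : ∃ g : (Fin d → ℝ) → ℝ, MemOrlicz Q g ∧
      ¬ Integrable (fun x => |g x| * Real.log (1 + |g x|) ^ b) (cubeMeasure d))
    (k : ℕ) (M : ℝ) :
    ∃ (s : ℝ) (N : ℕ), M ≤ s ∧ M ≤ N ∧ Q.toFun s * 2 ^ (k + 1) ≤ 4 ^ (N * d) ∧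
      M ≤ s / 4 ^ (N * d) * ((N:ℝ) / 96) ^ b := by
  obtain ⟨U1, hU1, hsup⟩ := young_superlinear Q
  set M' := max M 1 with hM'
  have hMM : M ≤ M' := le_max_left _ _
  have hM1 : 1 ≤ M' := le_max_right _ _
  have hd0 : (1:ℝ) ≤ d := by exact_mod_cast hd
  set c : ℝ := 1 / (4 ^ d * 2 ^ (k + 1) * (2 * d) ^ b * M' * 96 ^ b) with hc
  have hc0 : 0 < c := by positivity
  obtain ⟨u, hu, hQu⟩ := growth_fail Q b hQ c hc0 (max (max U1 M') (Real.exp (2 * d * M')))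
  have hu1 : U1 ≤ u := ((le_max_left _ _).trans (le_max_left _ _)).trans hu
  have hu2 : M' ≤ u := ((le_max_right _ _).trans (le_max_left _ _)).trans hu
  have hu3 : Real.exp (2 * d * M') ≤ u := (le_max_right _ _).trans hu
  have hQuu := hsup u hu1
  have hk2 : (2:ℝ) ≤ 2 ^ (k + 1) := by
    rw [pow_succ]
    have : (1:ℝ) ≤ 2 ^ k := one_le_pow₀ (by norm_num)
    linarith
  have hx : 1 + u ≤ Q.toFun u * 2 ^ (k + 1) := by nlinarith
  obtain ⟨n, hn1, hn2⟩ := exists_nat_pow_near (x := Q.toFun u * 2 ^ (k + 1)) (y := (4:ℝ) ^ d)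
    (by linarith) (one_lt_pow₀ (by norm_num) (by omega))
  have hpow : ((4:ℝ) ^ d) ^ (n + 1) = 4 ^ ((n + 1) * d) := by rw [← pow_mul]; ring_nf
  have hupper : (4:ℝ) ^ ((n + 1) * d) ≤ 4 ^ d * (Q.toFun u * 2 ^ (k + 1)) := by
    rw [← hpow, pow_succ, mul_comm]
    exact mul_le_mul_of_nonneg_left hn1 (by positivity)
  rw [hpow] at hn2
  set N := n + 1 with hN
  have hlog : Real.log (1 + u) ≤ 2 * d * N := by
    have h1 : Real.log (1 + u) ≤ Real.log (4 ^ (N * d)) :=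
      Real.log_le_log (by linarith) (by linarith)
    rw [Real.log_pow, show (4:ℝ) = 2 ^ 2 by norm_num, Real.log_pow] at h1
    have hl := Real.log_two_lt_d9
    have hNd : (0:ℝ) ≤ ((N * d : ℕ) : ℝ) := by positivity
    have : ((N * d : ℕ) : ℝ) * ((2 : ℕ) * Real.log 2) ≤ ((N * d : ℕ) : ℝ) * 2 := by
      apply mul_le_mul_of_nonneg_left _ hNd
      push_cast; linarith
    refine h1.trans (this.trans (le_of_eq ?_))
    push_cast; ring
  have hlog' : 2 * d * M' ≤ Real.log (1 + u) := by
    rw [Real.le_log_iff_exp_le (by linarith)]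
    linarith
  have hlog0 : 0 ≤ Real.log (1 + u) := Real.log_nonneg (by linarith)
  refine ⟨u, N, hMM.trans hu2, ?_, hn2.le, ?_⟩
  · have : (2 * d : ℝ) * M' ≤ 2 * d * N := hlog'.trans hlog
    exact hMM.trans (le_of_mul_le_mul_left this (by positivity))
  · refine hMM.trans ?_
    rw [div_mul_eq_mul_div, le_div_iff₀ (by positivity)]
    have h1 : (4:ℝ) ^ (N * d) ≤ 4 ^ d * (c * (u * (2 * d * N) ^ b) * 2 ^ (k + 1)) := by
      refine hupper.trans ?_
      have : Q.toFun u ≤ c * (u * (2 * d * N) ^ b) := by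
        refine hQu.le.trans ?_
        have : 0 ≤ u := by linarith
        gcongr
      gcongr
    calc M' * 4 ^ (N * d) ≤ M' * (4 ^ d * (c * (u * (2 * d * N) ^ b) * 2 ^ (k + 1))) := by
          gcongr
      _ = u * ((N:ℝ) / 96) ^ b := by
          rw [hc, mul_pow, div_pow]
          field_simp
          rw [mul_pow, mul_pow]
          ring

lemma seq_exists {d : ℕ} (hd : 1 ≤ d) (Q : YoungFunction) (b : ℕ)
    (hQ : ∃ g : (Fin d → ℝ) → ℝ, MemOrlicz Q g ∧
      ¬ Integrable (fun x => |g x| * Real.log (1 + |g x|) ^ b) (cubeMeasure d)) :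
    ∃ (s : ℕ → ℝ) (N : ℕ → ℕ), (∀ k, 0 ≤ s k) ∧ Monotone s ∧ StrictMono N ∧ (∀ k, 2 ≤ N k) ∧
      (∀ k, Q.toFun (s k) * 2 ^ (k + 1) ≤ 4 ^ (N k * d)) ∧
      (∀ k : ℕ, 2 * (k:ℝ) + 1 + s k ^ 2 ≤ s (k + 1) / 4 ^ (N (k + 1) * d) * ((N (k + 1) : ℝ) / 96) ^ b) := by
  choose S T h1 h2 h3 h4 using choice_step hd Q b hQ
  let bd : ℕ → ℝ × ℕ → ℝ := fun k p => p.1 ^ 2 + |p.1| + p.2 + 2 * k + 3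
  let st : ℕ → ℝ × ℕ := fun k => Nat.rec (S 0 2, T 0 2)
    (fun k p => (S (k + 1) (bd k p), T (k + 1) (bd k p))) k
  have hst : ∀ k, st (k + 1) = (S (k + 1) (bd k (st k)), T (k + 1) (bd k (st k))) := fun k => rfl
  have hbd : ∀ k, (3:ℝ) ≤ bd k (st k) := by
    intro k
    have : 0 ≤ (st k).1 ^ 2 + |(st k).1| + (st k).2 + 2 * (k:ℝ) := by positivity
    show 3 ≤ (st k).1 ^ 2 + |(st k).1| + (st k).2 + 2 * (k:ℝ) + 3
    linarith
  have hbd2 : ∀ k, (st k).1 ^ 2 + |(st k).1| + (st k).2 + 2 * (k:ℝ) + 3 = bd k (st k) := fun k => rfl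
  have hs0 : ∀ k, 0 ≤ (st k).1 := by
    intro k
    cases k with
    | zero => exact le_trans (by norm_num) (h1 0 2)
    | succ k => rw [hst]; exact le_trans (by linarith [hbd k]) (h1 (k + 1) (bd k (st k)))
  refine ⟨fun k => (st k).1, fun k => (st k).2, hs0, ?_, ?_, ?_, ?_, ?_⟩
  · apply monotone_nat_of_le_succ
    intro k
    show (st k).1 ≤ (st (k + 1)).1
    rw [hst]
    refine le_trans ?_ (h1 (k + 1) (bd k (st k)))
    rw [← hbd2, abs_of_nonneg (hs0 k)]
    have : 0 ≤ (st k).1 ^ 2 + (st k).2 + 2 * (k:ℝ) := by positivity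
    linarith
  · apply strictMono_nat_of_lt_succ
    intro k
    show (st k).2 < (st (k + 1)).2
    rw [hst]
    have h := h2 (k + 1) (bd k (st k))
    rw [← hbd2] at h
    have h0 : 0 ≤ (st k).1 ^ 2 + |(st k).1| + 2 * (k:ℝ) := by positivity
    have : ((st k).2 : ℝ) < (T (k + 1) (bd k (st k)) : ℝ) := by
      rw [← hbd2]; linarith
    exact_mod_cast this
  · intro k
    cases k with
    | zero =>
      have : (2:ℝ) ≤ T 0 2 := h2 0 2
      exact_mod_cast this
    | succ k =>
      have : (2:ℝ) ≤ T (k + 1) (bd k (st k)) := by linarith [h2 (k + 1) (bd k (st k)), hbd k]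
      show 2 ≤ (st (k + 1)).2
      rw [hst]
      exact_mod_cast this
  · intro k
    cases k with
    | zero => exact h3 0 2
    | succ k => exact h3 (k + 1) (bd k (st k))
  · intro k
    show 2 * (k:ℝ) + 1 + (st k).1 ^ 2 ≤ _
    refine le_trans ?_ (h4 (k + 1) (bd k (st k)))
    rw [← hbd2]
    have : 0 ≤ |(st k).1| + (st k).2 := by positivity
    linarith

lemma smallCube_real (d N : ℕ) : (cubeMeasure d).real (smallCube d N) = 1 / 4 ^ (N * d) := by
  have h1 : unitMeasure (Set.Ico (0:ℝ) (1 / 4 ^ N)) = ENNReal.ofReal (1 / 4 ^ N) := by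
    unfold unitMeasure
    have hsub : Set.Ico (0:ℝ) (1 / 4 ^ N) ⊆ Set.Ico 0 1 := by
      apply Set.Ico_subset_Ico_right
      rw [div_le_one (by positivity)]
      exact one_le_pow₀ (by norm_num)
    rw [Measure.restrict_apply measurableSet_Ico, Set.inter_eq_self_of_subset_left hsub, Real.volume_Ico, sub_zero]
  rw [cubeMeasure_eq_pi, measureReal_def]
  unfold smallCube
  rw [Measure.pi_pi]
  simp only [h1, Finset.prod_const, Finset.card_univ, Fintype.card_fin]
  rw [ENNReal.toReal_pow, ENNReal.toReal_ofReal (by positivity), pow_mul]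
  simp

lemma smallCube_anti (d : ℕ) {N M : ℕ} (h : N ≤ M) : smallCube d M ⊆ smallCube d N := by
  apply Set.pi_mono
  intro i _
  apply Set.Ico_subset_Ico_right
  gcongr
  norm_num

lemma divergence_construction {d : ℕ} (hd : 1 ≤ d) (B : Finset (Fin d)) (Q : YoungFunction)
    (s : ℕ → ℝ) (N : ℕ → ℕ) (hs0 : ∀ k, 0 ≤ s k) (hsm : Monotone s) (hN : StrictMono N)
    (hN2 : ∀ k, 2 ≤ N k)
    (hQs : ∀ k, Q.toFun (s k) * 2 ^ (k + 1) ≤ 4 ^ (N k * d))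
    (hbig : ∀ k : ℕ, 2 * (k:ℝ) + 1 + s k ^ 2 ≤
      s (k + 1) / 4 ^ (N (k + 1) * d) * ((N (k + 1) : ℝ) / 96) ^ B.card) :
    ∃ f : (Fin d → ℝ) → ℝ, MemOrlicz Q f ∧ Integrable f (cubeMeasure d) ∧
      ∀ k : ℕ, (k:ℝ) ≤ ∫ x, |mixedLogMean B f (fun _ => pIdx (N (k + 1) - 1)) x| ∂(cubeMeasure d) := by
  let C : ℕ → Set (Fin d → ℝ) := fun k => smallCube d (N k)
  let A : ℕ → Set (Fin d → ℝ) := fun k => C k \ C (k + 1)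
  have hCm : ∀ k, MeasurableSet (C k) := fun k => smallCube_measurable d (N k)
  have hAm : ∀ k, MeasurableSet (A k) := fun k => (hCm k).diff (hCm (k + 1))
  have hCanti : ∀ {i j}, i ≤ j → C j ⊆ C i := fun h => smallCube_anti d (hN.monotone h)
  have hAlt : ∀ {i j : ℕ} {x}, x ∈ A i → x ∈ C j → j ≤ i := by
    intro i j x hi hj
    by_contra h
    exact hi.2 (hCanti (by omega) hj)
  have hdisj : ∀ {i j : ℕ} {x}, x ∈ A i → x ∈ A j → i = j := by
    intro i j x hi hj
    exact le_antisymm (hAlt hj hi.1) (hAlt hi hj.1)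
  let F : (Fin d → ℝ) → ENNReal := fun x => ∑' k, (A k).indicator (fun _ => ENNReal.ofReal (s k)) x
  have hFm : Measurable F := Measurable.ennreal_tsum fun k => measurable_const.indicator (hAm k)
  let f : (Fin d → ℝ) → ℝ := fun x => (F x).toReal
  have hfm : Measurable f := hFm.ennreal_toReal
  have hfA : ∀ k x, x ∈ A k → f x = s k := by
    intro k x hx
    show (F x).toReal = s k
    have : F x = ENNReal.ofReal (s k) := by
      show ∑' j, (A j).indicator (fun _ => ENNReal.ofReal (s j)) x = _
      rw [tsum_eq_single k]
      · simp [hx]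
      · intro j hj
        exact Set.indicator_of_notMem (fun h => hj (hdisj h hx)) _
    rw [this, ENNReal.toReal_ofReal (hs0 k)]
  have hf0 : ∀ x, (∀ k, x ∉ A k) → f x = 0 := by
    intro x hx
    show (F x).toReal = 0
    have : F x = 0 := by
      show ∑' j, (A j).indicator (fun _ => ENNReal.ofReal (s j)) x = _
      rw [ENNReal.tsum_eq_zero]
      intro j
      exact Set.indicator_of_notMem (hx j) _
    simp [this]
  have hfnn : ∀ x, 0 ≤ f x := fun x => ENNReal.toReal_nonneg
  have hcont := Q.continuous
  have hQm : Measurable (fun x => Q.toFun (|f x| / 1)) := by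
    have h1 : Measurable Q.toFun := hcont.measurable
    exact h1.comp (hfm.abs.div_const 1)
  -- modular estimate
  have hlint : ∫⁻ x, ENNReal.ofReal (Q.toFun (|f x| / 1)) ∂(cubeMeasure d) ≤ 1 := by
    have hpt : ∀ x, ENNReal.ofReal (Q.toFun (|f x| / 1)) ≤
        ∑' k, (A k).indicator (fun _ => ENNReal.ofReal (Q.toFun (s k))) x := by
      intro x
      by_cases hx : ∃ k, x ∈ A k
      · obtain ⟨k, hk⟩ := hx
        refine le_trans (le_of_eq ?_) (ENNReal.le_tsum k)
        rw [Set.indicator_of_mem hk, hfA k x hk, div_one, abs_of_nonneg (hs0 k)]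
      · push Not at hx
        rw [hf0 x hx]
        simp [Q.map_zero]
    refine (lintegral_mono hpt).trans ?_
    rw [lintegral_tsum fun k => (measurable_const.indicator (hAm k)).aemeasurable]
    have hterm : ∀ k, ∫⁻ x, (A k).indicator (fun _ => ENNReal.ofReal (Q.toFun (s k))) x ∂(cubeMeasure d)
        ≤ (2⁻¹ : ENNReal) ^ (k + 1) := by
      intro k
      rw [lintegral_indicator_const (hAm k)]
      have h1 : cubeMeasure d (A k) ≤ ENNReal.ofReal (1 / 4 ^ (N k * d)) := by
        rw [← smallCube_real, ofReal_measureReal]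
        exact measure_mono Set.diff_subset
      refine (mul_le_mul_right h1 _).trans ?_
      rw [← ENNReal.ofReal_mul (Q.nonneg _)]
      have h2 : (2⁻¹ : ENNReal) ^ (k + 1) = ENNReal.ofReal ((1 / 2) ^ (k + 1)) := by
        rw [ENNReal.ofReal_pow (by norm_num), one_div, ENNReal.ofReal_inv_of_pos (by norm_num)]
        simp
      rw [h2]
      apply ENNReal.ofReal_le_ofReal
      rw [mul_one_div, div_le_iff₀ (by positivity), div_pow, one_pow, div_mul_eq_mul_div, one_mul,
        le_div_iff₀ (by positivity)]
      exact hQs k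
    refine (ENNReal.tsum_le_tsum hterm).trans (le_of_eq ?_)
    rw [ENNReal.tsum_geometric_add_one, ENNReal.one_sub_inv_two, inv_inv]
    exact ENNReal.inv_mul_cancel (by norm_num) (by norm_num)
  have hQint : Integrable (fun x => Q.toFun (|f x| / 1)) (cubeMeasure d) := by
    refine ⟨hQm.aestronglyMeasurable, ?_⟩
    rw [hasFiniteIntegral_iff_ofReal (Eventually.of_forall fun x => Q.nonneg _)]
    exact lt_of_le_of_lt hlint (by norm_num)
  have hmem : MemOrlicz Q f := by
    refine ⟨hfm, 1, one_pos, hQint, ?_⟩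
    rw [integral_eq_lintegral_of_nonneg_ae (Eventually.of_forall fun x => Q.nonneg _)
      hQm.aestronglyMeasurable]
    exact ENNReal.toReal_le_of_le_ofReal (by norm_num) (by simpa using hlint)
  have hfint : Integrable f (cubeMeasure d) := by
    obtain ⟨U, hU1, hU⟩ := young_superlinear Q
    refine Integrable.mono' ((integrable_const U).add hQint) hfm.aestronglyMeasurable
      (Eventually.of_forall fun x => ?_)
    show ‖f x‖ ≤ U + Q.toFun (|f x| / 1)
    rw [Real.norm_eq_abs, div_one]
    have := Q.nonneg |f x|
    rcases le_or_gt U |f x| with h | h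
    · linarith [hU _ h]
    · linarith
  refine ⟨f, hmem, hfint, fun k => ?_⟩
  -- splitting of f
  let g : (Fin d → ℝ) → ℝ := (C (k + 1))ᶜ.indicator f
  let h : (Fin d → ℝ) → ℝ := (C (k + 1)).indicator f
  have hgm : Measurable g := hfm.indicator (hCm _).compl
  have hgh : f = fun x => g x + h x := by
    ext x
    by_cases hx : x ∈ C (k + 1) <;> simp [g, h, hx]
  have hgb : ∀ x, |g x| ≤ s k := by
    intro x
    by_cases hx : x ∈ C (k + 1)
    · simp [g, hx, hs0 k]
    · have : g x = f x := by simp [g, hx]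
      rw [this, abs_of_nonneg (hfnn x)]
      by_cases hx' : ∃ j, x ∈ A j
      · obtain ⟨j, hj⟩ := hx'
        rw [hfA j x hj]
        apply hsm
        by_contra hlt
        exact hx (hCanti (by omega) hj.1)
      · push Not at hx'
        rw [hf0 x hx']; exact hs0 k
  have hgint : Integrable g (cubeMeasure d) := hfint.indicator (hCm _).compl
  have hhint : Integrable h (cubeMeasure d) := hfint.indicator (hCm _)
  have hhs : ∀ x, x ∉ smallCube d (N (k + 1)) → h x = 0 := fun x hx =>
    Set.indicator_of_notMem hx _
  have hAreal : 1 / 4 ^ (N (k + 1) * d) / 2 ≤ (cubeMeasure d).real (A (k + 1)) := by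
    have e : (cubeMeasure d).real (A (k + 1)) =
        (cubeMeasure d).real (C (k + 1)) - (cubeMeasure d).real (C (k + 1 + 1)) :=
      measureReal_diff (hCanti (by omega)) (hCm _)
    have e1 : (cubeMeasure d).real (C (k + 1)) = 1 / 4 ^ (N (k + 1) * d) := smallCube_real _ _
    have e2 : (cubeMeasure d).real (C (k + 1 + 1)) = 1 / 4 ^ (N (k + 1 + 1) * d) := smallCube_real _ _
    rw [e, e1, e2]
    have hlt : N (k + 1) * d + 1 ≤ N (k + 1 + 1) * d := by
      have := hN (Nat.lt_succ_self (k + 1))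
      nlinarith
    have h3 : (1:ℝ) / 4 ^ (N (k + 1 + 1) * d) ≤ 1 / 4 ^ (N (k + 1) * d + 1) := by
      gcongr
      norm_num
    have h4 : (1:ℝ) / 4 ^ (N (k + 1) * d + 1) = 1 / 4 ^ (N (k + 1) * d) / 4 := by
      rw [pow_succ]; field_simp
    have h5 : (0:ℝ) < 1 / 4 ^ (N (k + 1) * d) := by positivity
    linarith
  have hm : s (k + 1) * (1 / 4 ^ (N (k + 1) * d) / 2) ≤ ∫ x, h x ∂(cubeMeasure d) := by
    have h1 : ∫ x, (A (k + 1)).indicator (fun _ => s (k + 1)) x ∂(cubeMeasure d) ≤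
        ∫ x, h x ∂(cubeMeasure d) := by
      apply integral_mono ((integrable_const _).indicator (hAm _)) hhint
      intro x
      show (A (k + 1)).indicator (fun _ => s (k + 1)) x ≤ h x
      by_cases hx : x ∈ A (k + 1)
      · have : h x = f x := Set.indicator_of_mem hx.1 _
        rw [Set.indicator_of_mem hx, this, hfA _ x hx]
      · rw [Set.indicator_of_notMem hx]
        exact Set.indicator_nonneg (fun x _ => hfnn x) x
    rw [integral_indicator_const _ (hAm _), smul_eq_mul, mul_comm] at h1
    exact le_trans (mul_le_mul_of_nonneg_left hAreal (hs0 _)) h1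
  have hlow := conc_lower B (N (k + 1)) (hN2 _) h hhs _ (mul_nonneg (hs0 _) (by positivity)) hm
  have hn2 : 2 ≤ pIdx (N (k + 1) - 1) := (hN2 (k + 1)).trans (pIdx_bounds _ (hN2 (k + 1))).1
  have hup := mean_bdd B g hgm (s k) hgb _ hn2
  set n := pIdx (N (k + 1) - 1)
  have htri : ∫ x, |mixedLogMean B h (fun _ => n) x| ∂(cubeMeasure d) ≤
      ∫ x, |mixedLogMean B f (fun _ => n) x| ∂(cubeMeasure d) +
      ∫ x, |mixedLogMean B g (fun _ => n) x| ∂(cubeMeasure d) := by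
    rw [← integral_add (mixedLogMean_integrable B f _).abs (mixedLogMean_integrable B g _).abs]
    apply integral_mono (mixedLogMean_integrable B h _).abs
      ((mixedLogMean_integrable B f _).abs.add (mixedLogMean_integrable B g _).abs)
    intro x
    show |mixedLogMean B h (fun _ => n) x| ≤
      |mixedLogMean B f (fun _ => n) x| + |mixedLogMean B g (fun _ => n) x|
    have : mixedLogMean B f (fun _ => n) x =
        mixedLogMean B g (fun _ => n) x + mixedLogMean B h (fun _ => n) x := by
      rw [hgh]
      exact mixedLogMean_add B g h hgint hhint _ x
    rw [show mixedLogMean B h (fun _ => n) x =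
      mixedLogMean B f (fun _ => n) x - mixedLogMean B g (fun _ => n) x by linarith]
    exact abs_sub _ _
  have hb := hbig k
  have e : s (k + 1) * (1 / 4 ^ (N (k + 1) * d) / 2) * ((N (k + 1) : ℝ) / 96) ^ B.card =
      (s (k + 1) / 4 ^ (N (k + 1) * d) * ((N (k + 1) : ℝ) / 96) ^ B.card) / 2 := by ring
  rw [e] at hlow
  linarith

/-- Theorem (normdiv, part b). If `L_Q(I^d) ⊄ L log^{|B|} L(I^d)` then there
is `f ∈ L_Q(I^d)` whose means `(L_{n(B)} ∘ R_{n(B')})(f)` do not converge to `f` in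
`L^1(I^d)`-norm. -/
theorem stmt3 (d : ℕ) (hd : 1 ≤ d) (B : Finset (Fin d)) (hB : B.Nonempty)
    (Q : YoungFunction)
    (hQ : ∃ g : (Fin d → ℝ) → ℝ, MemOrlicz Q g ∧
      ¬ Integrable (fun x => |g x| * Real.log (1 + |g x|) ^ B.card) (cubeMeasure d)) :
    ∃ f : (Fin d → ℝ) → ℝ, MemOrlicz Q f ∧ Integrable f (cubeMeasure d) ∧
      ¬ Tendsto (fun n : ℕ => ∫ x, |mixedLogMean B f (fun _ => n) x - f x| ∂(cubeMeasure d))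
        atTop (nhds 0) := by

  obtain ⟨s, N, hs0, hsm, hN, hN2, hQs, hbig⟩ := seq_exists hd Q B.card hQ
  obtain ⟨f, hf, hfi, hlow⟩ := divergence_construction hd B Q s N hs0 hsm hN hN2 hQs hbig
  refine ⟨f, hf, hfi, fun htend => ?_⟩
  have hsub : Tendsto (fun k : ℕ => pIdx (N (k + 1) - 1)) atTop atTop := by
    apply tendsto_atTop_mono (fun k => ?_) tendsto_id
    have h1 := (pIdx_bounds _ (hN2 (k + 1))).1
    have h2 := hN.id_le (k + 1)
    simp only [id] at *
    omega
  have hev := (htend.comp hsub).eventually_lt_const (zero_lt_one)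
  obtain ⟨m, hm⟩ := exists_nat_gt (1 + ∫ x, |f x| ∂(cubeMeasure d))
  obtain ⟨k, hk1, hk2⟩ := (hev.and (eventually_ge_atTop m)).exists
  simp only [Function.comp] at hk1
  have h1 := hlow k
  set n := pIdx (N (k + 1) - 1)
  have hT := mixedLogMean_integrable B f (fun _ => n)
  have h2 : ∫ x, |mixedLogMean B f (fun _ => n) x| ∂(cubeMeasure d) ≤
      ∫ x, |mixedLogMean B f (fun _ => n) x - f x| ∂(cubeMeasure d) +
        ∫ x, |f x| ∂(cubeMeasure d) := by
    have hS : Integrable (fun x => |mixedLogMean B f (fun _ => n) x - f x|) (cubeMeasure d) :=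
      (hT.sub hfi).abs
    rw [← integral_add hS hfi.abs]
    apply integral_mono hT.abs (hS.add hfi.abs)
    intro x
    show |mixedLogMean B f (fun _ => n) x| ≤ |mixedLogMean B f (fun _ => n) x - f x| + |f x|
    have := abs_add_le (mixedLogMean B f (fun _ => n) x - f x) (f x)
    simpa using this
  have h3 : (m:ℝ) ≤ k := by exact_mod_cast hk2
  linarith

end
end

section
/- Let d ≥ 1, D := {1,...,d} and let B ⊆ D be nonempty. There is a constant C depending only on d such that for every measurable f : I^d → ℝ with ∫_{I^d} |f| log^{|B|-1}(1+|f|) < ∞ and every n = (n_1,...,n_d) with each n_j ≥ 2, one has ‖(L_{n_B}∘R_{n_{B'}})(f)‖_{weak-L^1(I^d)} ≤ C (1 + ∫_{I^d} |f| log^{|B|-1}(1+|f|)). -/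
open MeasureTheory Filter

noncomputable section

def wv (r : ℕ → ℝ) (k : ℕ) : ℝ :=
  ∏ j ∈ Finset.range (k + 1), if k.testBit j then r j else 1

def Dv (r : ℕ → ℝ) (n : ℕ) : ℝ := ∑ k ∈ Finset.range n, wv r k

def Sv (r : ℕ → ℝ) (n : ℕ) : ℝ := ∑ k ∈ Finset.range n, Dv r (k + 1)

def Lh (n : ℕ) : ℝ := ∑ i ∈ Finset.Ico 1 n, (1 : ℝ) / i

def Pv (r : ℕ → ℝ) (n : ℕ) : ℝ := ∑ i ∈ Finset.Ico 1 n, Dv r (n - i) / i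

lemma wv_prod_mono (r : ℕ → ℝ) {k A B : ℕ} (hk : k < 2 ^ A) (hAB : A ≤ B) :
    (∏ j ∈ Finset.range A, if k.testBit j then r j else 1) =
      ∏ j ∈ Finset.range B, if k.testBit j then r j else 1 := by
  apply Finset.prod_subset
  · intro x hx
    simp only [Finset.mem_range] at *
    omega
  · intro x _ hx
    simp only [Finset.mem_range, not_lt] at hx
    have : k < 2 ^ x := lt_of_lt_of_le hk (Nat.pow_le_pow_right (by norm_num) hx)
    simp [Nat.testBit_lt_two_pow this]

lemma wv_eq (r : ℕ → ℝ) {k A : ℕ} (hk : k < 2 ^ A) :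
    wv r k = ∏ j ∈ Finset.range A, if k.testBit j then r j else 1 := by
  unfold wv
  have h1 : k < 2 ^ (k + 1) := lt_of_lt_of_le (Nat.lt_two_pow_self) (Nat.pow_le_pow_right (by norm_num) (by omega))
  rcases le_total A (k + 1) with h | h
  · exact (wv_prod_mono r hk h).symm
  · exact wv_prod_mono r h1 h

lemma wv_congr {r s : ℕ → ℝ} {A k : ℕ} (h : ∀ j < A, r j = s j) (hk : k < 2 ^ A) :
    wv r k = wv s k := by
  rw [wv_eq r hk, wv_eq s hk]
  apply Finset.prod_congr rfl
  intro j hj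
  rw [h j (Finset.mem_range.1 hj)]

lemma Dv_congr {r s : ℕ → ℝ} {A n : ℕ} (h : ∀ j < A, r j = s j) (hn : n ≤ 2 ^ A) :
    Dv r n = Dv s n := by
  apply Finset.sum_congr rfl
  intro k hk
  exact wv_congr h (lt_of_lt_of_le (Finset.mem_range.1 hk) hn)

lemma Sv_congr {r s : ℕ → ℝ} {A n : ℕ} (h : ∀ j < A, r j = s j) (hn : n ≤ 2 ^ A) :
    Sv r n = Sv s n := by
  apply Finset.sum_congr rfl
  intro k hk
  exact Dv_congr h (le_trans (Finset.mem_range.1 hk) hn)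

lemma wv_mul (r s : ℕ → ℝ) (k : ℕ) : wv (fun j => r j * s j) k = wv r k * wv s k := by
  unfold wv
  rw [← Finset.prod_mul_distrib]
  apply Finset.prod_congr rfl
  intro j _
  split_ifs <;> simp

lemma wv_abs {r : ℕ → ℝ} (hr : ∀ j, |r j| = 1) (k : ℕ) : |wv r k| = 1 := by
  unfold wv
  rw [Finset.abs_prod]
  apply Finset.prod_eq_one
  intro j _
  split_ifs <;> simp [hr]

lemma wv_add (r : ℕ → ℝ) {k A : ℕ} (hk : k < 2 ^ A) : wv r (2 ^ A + k) = r A * wv r k := by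
  have h2 : 2 ^ A + k < 2 ^ (A + 1) := by rw [pow_succ]; omega
  rw [wv_eq r h2, wv_eq r hk, Finset.prod_range_succ, mul_comm]
  congr 1
  · rw [Nat.testBit_two_pow_add_eq, Nat.testBit_lt_two_pow hk]; simp
  · apply Finset.prod_congr rfl
    intro j hj
    rw [Nat.testBit_two_pow_add_gt (Finset.mem_range.1 hj)]

lemma wv_sub {r : ℕ → ℝ} (hr : ∀ j, |r j| = 1) {k A : ℕ} (hk : k < 2 ^ A) :
    wv r (2 ^ A - (k + 1)) = wv r (2 ^ A - 1) * wv r k := by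
  have hp : 0 < 2 ^ A := by positivity
  have h1 : 2 ^ A - (k + 1) < 2 ^ A := by omega
  have h2 : 2 ^ A - 1 < 2 ^ A := by omega
  rw [wv_eq r h1, wv_eq r h2, wv_eq r hk, ← Finset.prod_mul_distrib]
  apply Finset.prod_congr rfl
  intro j hj
  have hj := Finset.mem_range.1 hj
  rw [Nat.testBit_two_pow_sub_succ hk, Nat.testBit_two_pow_sub_one]
  have := abs_mul_abs_self (r j)
  rw [hr] at this
  cases k.testBit j <;> simp [hj]
  linarith

lemma Dv_add (r : ℕ → ℝ) {m A : ℕ} (hm : m ≤ 2 ^ A) :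
    Dv r (2 ^ A + m) = Dv r (2 ^ A) + r A * Dv r m := by
  unfold Dv
  rw [Finset.sum_range_add, Finset.mul_sum]
  congr 1
  apply Finset.sum_congr rfl
  intro k hk
  exact wv_add r (lt_of_lt_of_le (Finset.mem_range.1 hk) hm)

lemma Dv_zero (r : ℕ → ℝ) : Dv r 0 = 0 := by simp [Dv]

lemma Dv_one (r : ℕ → ℝ) : Dv r 1 = 1 := by simp [Dv, wv]

lemma Dv_pow_succ (r : ℕ → ℝ) (A : ℕ) : Dv r (2 ^ (A + 1)) = (1 + r A) * Dv r (2 ^ A) := by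
  rw [pow_succ, mul_two, Dv_add r le_rfl]; ring

lemma Dv_sub {r : ℕ → ℝ} (hr : ∀ j, |r j| = 1) {j A : ℕ} (hj : j ≤ 2 ^ A) :
    Dv r (2 ^ A - j) = Dv r (2 ^ A) - wv r (2 ^ A - 1) * Dv r j := by
  induction j with
  | zero => simp [Dv_zero]
  | succ j ih =>
    have h := ih (by omega)
    have e : 2 ^ A - j = (2 ^ A - (j + 1)) + 1 := by omega
    have h3 : Dv r (2 ^ A - j) = Dv r (2 ^ A - (j + 1)) + wv r (2 ^ A - (j + 1)) := by
      rw [e]; unfold Dv; rw [Finset.sum_range_succ]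
    have h4 : Dv r (j + 1) = Dv r j + wv r j := by
      unfold Dv; rw [Finset.sum_range_succ]
    rw [wv_sub hr (by omega)] at h3
    rw [h4]; linarith

lemma Dv_pow_nonneg {r : ℕ → ℝ} (hr : ∀ j, |r j| = 1) (A : ℕ) : 0 ≤ Dv r (2 ^ A) := by
  induction A with
  | zero => simp [Dv_one]
  | succ A ih =>
    rw [Dv_pow_succ]
    have := neg_abs_le (r A)
    rw [hr] at this
    exact mul_nonneg (by linarith) ih

lemma r_mul_Dv {r : ℕ → ℝ} (hr : ∀ j, |r j| = 1) {A j : ℕ} (hj : j < A) :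
    r j * Dv r (2 ^ A) = Dv r (2 ^ A) := by
  induction A with
  | zero => omega
  | succ A ih =>
    rw [Dv_pow_succ]
    rcases Nat.lt_succ_iff_lt_or_eq.1 hj with h | h
    · calc _ = (1 + r A) * (r j * Dv r (2 ^ A)) := by ring
        _ = _ := by rw [ih h]
    · subst h
      have := abs_mul_abs_self (r j)
      rw [hr] at this
      linear_combination (-Dv r (2 ^ j)) * this

lemma wv_mul_Dv {r : ℕ → ℝ} (hr : ∀ j, |r j| = 1) {A k : ℕ} (hk : k < 2 ^ A) :
    wv r k * Dv r (2 ^ A) = Dv r (2 ^ A) := by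
  rw [wv_eq r hk]
  have : ∀ s : Finset ℕ, (∀ j ∈ s, j < A) →
      (∏ j ∈ s, if k.testBit j then r j else 1) * Dv r (2 ^ A) = Dv r (2 ^ A) := by
    intro s
    induction s using Finset.induction_on with
    | empty => simp
    | insert a s ha ih =>
      intro h
      rw [Finset.prod_insert ha, mul_assoc, ih (fun j hj => h j (Finset.mem_insert_of_mem hj))]
      split_ifs
      · exact r_mul_Dv hr (h a (Finset.mem_insert_self _ _))
      · simp
  exact this _ (fun j hj => Finset.mem_range.1 hj)

lemma Sv_add (r : ℕ → ℝ) {m A : ℕ} (hm : m ≤ 2 ^ A) :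
    Sv r (2 ^ A + m) = Sv r (2 ^ A) + m * Dv r (2 ^ A) + r A * Sv r m := by
  unfold Sv
  rw [Finset.sum_range_add, Finset.mul_sum, add_assoc]
  congr 1
  have : ∀ k ∈ Finset.range m, Dv r (2 ^ A + k + 1) = Dv r (2 ^ A) + r A * Dv r (k + 1) := by
    intro k hk
    have := Finset.mem_range.1 hk
    rw [add_assoc, Dv_add r (by omega)]
  rw [Finset.sum_congr rfl this, Finset.sum_add_distrib]
  simp

lemma Sv_pow_succ (r : ℕ → ℝ) (A : ℕ) :
    Sv r (2 ^ (A + 1)) = (1 + r A) * Sv r (2 ^ A) + 2 ^ A * Dv r (2 ^ A) := by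
  rw [pow_succ, mul_two, Sv_add r le_rfl]; push_cast; ring

lemma Pv_rec {r : ℕ → ℝ} (hr : ∀ j, |r j| = 1) {m A : ℕ} (hm : m < 2 ^ A) :
    Pv r (2 ^ A + m) = Lh (2 ^ A + m) * Dv r (2 ^ A)
      - wv r (2 ^ A - 1) * (∑ j ∈ Finset.range (2 ^ A - 1), (1 : ℝ) / ((m + (j + 1) : ℕ) : ℝ) * Dv r (j + 1))
      + r A * Pv r m := by
  have hp : 0 < 2 ^ A := by positivity
  unfold Pv Lh
  rw [← Finset.sum_Ico_consecutive _ (by omega : 1 ≤ m + 1) (by omega : m + 1 ≤ 2 ^ A + m),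
    ← Finset.sum_Ico_consecutive (fun i : ℕ => (1 : ℝ) / i) (by omega : 1 ≤ m + 1) (by omega : m + 1 ≤ 2 ^ A + m)]
  have h1 : ∑ i ∈ Finset.Ico 1 (m + 1), Dv r (2 ^ A + m - i) / i =
      (∑ i ∈ Finset.Ico 1 (m + 1), (1 : ℝ) / i) * Dv r (2 ^ A) +
      r A * ∑ i ∈ Finset.Ico 1 m, Dv r (m - i) / i := by
    have h0 : ∑ i ∈ Finset.Ico 1 m, Dv r (m - i) / (i : ℝ) = ∑ i ∈ Finset.Ico 1 (m + 1), Dv r (m - i) / i := by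
      rcases Nat.eq_zero_or_pos m with h | h
      · subst h; simp
      · rw [Finset.sum_Ico_succ_top h]; simp [Dv_zero]
    rw [h0, Finset.sum_mul, Finset.mul_sum, ← Finset.sum_add_distrib]
    apply Finset.sum_congr rfl
    intro i hi
    have := Finset.mem_Ico.1 hi
    rw [Nat.add_sub_assoc (by omega), Dv_add r (by omega)]
    ring
  have h2 : ∑ i ∈ Finset.Ico (m + 1) (2 ^ A + m), Dv r (2 ^ A + m - i) / i =
      (∑ i ∈ Finset.Ico (m + 1) (2 ^ A + m), (1 : ℝ) / i) * Dv r (2 ^ A) -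
      wv r (2 ^ A - 1) * (∑ j ∈ Finset.range (2 ^ A - 1), (1 : ℝ) / ((m + (j + 1) : ℕ) : ℝ) * Dv r (j + 1)) := by
    rw [Finset.sum_Ico_eq_sum_range, Finset.sum_Ico_eq_sum_range,
      show 2 ^ A + m - (m + 1) = 2 ^ A - 1 by omega, Finset.sum_mul, Finset.mul_sum,
      ← Finset.sum_sub_distrib]
    apply Finset.sum_congr rfl
    intro j hj
    have := Finset.mem_range.1 hj
    rw [show 2 ^ A + m - (m + 1 + j) = 2 ^ A - (j + 1) by omega, Dv_sub hr (by omega),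
      show m + 1 + j = m + (j + 1) by omega]
    ring
  rw [h1, h2]; ring

/-- average over a finite type -/
def av {α : Type*} [Fintype α] (f : α → ℝ) : ℝ := (Fintype.card α : ℝ)⁻¹ * ∑ x, f x

section avlemmas
variable {α β : Type*} [Fintype α] [Fintype β]

lemma av_add (f g : α → ℝ) : av (fun x => f x + g x) = av f + av g := by
  simp only [av, Finset.sum_add_distrib]; ring

lemma av_sub (f g : α → ℝ) : av (fun x => f x - g x) = av f - av g := by
  simp only [av, Finset.sum_sub_distrib]; ring

lemma av_neg (f : α → ℝ) : av (fun x => - f x) = - av f := by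
  simp only [av, Finset.sum_neg_distrib]; ring

lemma av_mul_left (c : ℝ) (f : α → ℝ) : av (fun x => c * f x) = c * av f := by
  simp only [av, ← Finset.mul_sum]; ring

lemma av_mul_right (c : ℝ) (f : α → ℝ) : av (fun x => f x * c) = av f * c := by
  simp only [av, ← Finset.sum_mul]; ring

lemma av_mono {f g : α → ℝ} (h : ∀ x, f x ≤ g x) : av f ≤ av g := by
  unfold av
  exact mul_le_mul_of_nonneg_left (Finset.sum_le_sum fun x _ => h x) (by positivity)

lemma av_nonneg {f : α → ℝ} (h : ∀ x, 0 ≤ f x) : 0 ≤ av f := by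
  unfold av
  exact mul_nonneg (by positivity) (Finset.sum_nonneg fun x _ => h x)

lemma av_const [Nonempty α] (c : ℝ) : av (fun _ : α => c) = c := by
  simp [av]

lemma av_comm (f : α → β → ℝ) : av (fun x => av (fun y => f x y)) = av (fun y => av (fun x => f x y)) := by
  simp only [av, ← Finset.mul_sum]
  rw [Finset.sum_comm]; ring

lemma av_sum {ι : Type*} (s : Finset ι) (f : ι → α → ℝ) :
    av (fun x => ∑ i ∈ s, f i x) = ∑ i ∈ s, av (f i) := by
  simp only [av]
  rw [Finset.sum_comm, Finset.mul_sum]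

lemma abs_av_le (f : α → ℝ) : |av f| ≤ av (fun x => |f x|) := by
  unfold av
  rw [abs_mul, abs_of_nonneg (by positivity : (0:ℝ) ≤ (Fintype.card α : ℝ)⁻¹)]
  exact mul_le_mul_of_nonneg_left (Finset.abs_sum_le_sum_abs _ _) (by positivity)

lemma av_equiv (e : α ≃ α) (f : α → ℝ) : av (fun x => f (e x)) = av f := by
  unfold av
  rw [Equiv.sum_comp e f]
end avlemmas

/-- the dyadic group with `N` digits -/
abbrev Gp (N : ℕ) := Fin N → ZMod 2

lemma av_shift {N : ℕ} (f : Gp N → ℝ) (t : Gp N) : av (fun x => f (x + t)) = av f :=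
  av_equiv (Equiv.addRight t) f

lemma av_shift' {N : ℕ} (f : Gp N → ℝ) (t : Gp N) : av (fun x => f (t + x)) = av f :=
  av_equiv (Equiv.addLeft t) f

/-- discrete Rademacher functions -/
def rr {N : ℕ} (x : Gp N) (j : ℕ) : ℝ :=
  if h : j < N then (if x ⟨j, h⟩ = 0 then 1 else -1) else 1

lemma rr_abs {N : ℕ} (x : Gp N) (j : ℕ) : |rr x j| = 1 := by
  unfold rr; split_ifs <;> simp

lemma zmod_aux : ∀ a b : ZMod 2, (if a + b = 0 then (1:ℝ) else -1) =
    (if a = 0 then 1 else -1) * (if b = 0 then 1 else -1) := by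
  have h2 : (1 : ZMod 2) ≠ 0 := by decide
  have h3 : (1 : ZMod 2) + 1 = 0 := by decide
  have h4 : ∀ a : ZMod 2, a = 0 ∨ a = 1 := by decide
  intro a b
  rcases h4 a with rfl | rfl <;> rcases h4 b with rfl | rfl <;> simp [h2, h3]

lemma rr_add {N : ℕ} (x t : Gp N) (j : ℕ) : rr (x + t) j = rr x j * rr t j := by
  unfold rr
  by_cases h : j < N
  · simp only [h, dite_true, Pi.add_apply]
    exact zmod_aux _ _
  · simp [h]

def ee {N : ℕ} (A : ℕ) : Gp N := fun i => if (i : ℕ) = A then 1 else 0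

lemma rr_ee_ne {N : ℕ} (x : Gp N) {A j : ℕ} (h : j ≠ A) : rr (x + ee A) j = rr x j := by
  unfold rr ee
  split_ifs <;> simp_all

lemma rr_ee {N : ℕ} (x : Gp N) {A : ℕ} (h : A < N) : rr (x + ee A) A = - rr x A := by
  rw [rr_add]
  have : rr (ee A : Gp N) A = -1 := by
    unfold rr ee
    simp [h]
  rw [this]; ring

lemma wv_rr_add {N : ℕ} (x t : Gp N) (k : ℕ) : wv (rr (x + t)) k = wv (rr x) k * wv (rr t) k := by
  rw [← wv_mul]
  congr 1
  funext j
  exact rr_add x t j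

lemma av_one_add_rr {N A : ℕ} (hA : A < N) (g : Gp N → ℝ) (hg : ∀ x, g (x + ee A) = g x) :
    av (fun x => (1 + rr x A) * g x) = av g := by
  have h1 := av_shift (fun x => rr x A * g x) (ee A)
  simp only [rr_ee _ hA, hg] at h1
  have h2 : av (fun x => - rr x A * g x) = - av (fun x => rr x A * g x) := by
    rw [← av_neg]; congr 1; funext x; ring
  have h3 : av (fun x => (1 + rr x A) * g x) = av g + av (fun x => rr x A * g x) := by
    rw [← av_add]; congr 1; funext x; ring
  linarith

lemma Dv_inv {N A n : ℕ} (hn : n ≤ 2 ^ A) (x : Gp N) : Dv (rr (x + ee A)) n = Dv (rr x) n :=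
  Dv_congr (fun _ hj => rr_ee_ne x (by omega)) hn

lemma Sv_inv {N A n : ℕ} (hn : n ≤ 2 ^ A) (x : Gp N) : Sv (rr (x + ee A)) n = Sv (rr x) n :=
  Sv_congr (fun _ hj => rr_ee_ne x (by omega)) hn

lemma av_Dv {N A : ℕ} (hA : A ≤ N) : av (fun x : Gp N => Dv (rr x) (2 ^ A)) = 1 := by
  induction A with
  | zero => simp only [pow_zero, Dv_one]; exact av_const 1
  | succ A ih =>
    simp only [Dv_pow_succ]
    rw [av_one_add_rr (by omega) _ (fun x => Dv_inv le_rfl x)]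
    exact ih (by omega)

lemma av_Sv_pow {N A : ℕ} (hA : A ≤ N) : av (fun x : Gp N => |Sv (rr x) (2 ^ A)|) ≤ 2 ^ A := by
  induction A with
  | zero => simp [Sv, Dv_one, av_const]
  | succ A ih =>
    have h1 : av (fun x : Gp N => |Sv (rr x) (2 ^ (A + 1))|) ≤
        av (fun x : Gp N => (1 + rr x A) * |Sv (rr x) (2 ^ A)| + 2 ^ A * Dv (rr x) (2 ^ A)) := by
      apply av_mono
      intro x
      rw [Sv_pow_succ]
      refine (abs_add_le _ _).trans ?_
      have h := neg_abs_le (rr x A)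
      rw [rr_abs] at h
      rw [abs_mul, abs_mul, abs_of_nonneg (by linarith : 0 ≤ 1 + rr x A),
        abs_of_nonneg (Dv_pow_nonneg (rr_abs x) A), abs_of_nonneg (by positivity : (0:ℝ) ≤ 2 ^ A)]
    rw [av_add, av_mul_left, av_Dv (by omega),
      av_one_add_rr (by omega) _ (fun x => by rw [Sv_inv le_rfl x])] at h1
    have := ih (by omega)
    refine h1.trans ?_
    rw [pow_succ]; linarith

lemma av_Sv {N : ℕ} (n : ℕ) (hn : n < 2 ^ N) : av (fun x : Gp N => |Sv (rr x) n|) ≤ 2 * n := by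
  induction n using Nat.strong_induction_on with
  | _ n ih =>
    rcases Nat.eq_zero_or_pos n with h0 | h0
    · subst h0; simp [Sv, av_const]
    · obtain ⟨A, hA⟩ : ∃ A, A = Nat.log 2 n := ⟨_, rfl⟩
      have h1 : 2 ^ A ≤ n := by rw [hA]; exact Nat.pow_log_le_self 2 (by omega)
      have h2 : n < 2 ^ (A + 1) := by rw [hA]; exact Nat.lt_pow_succ_log_self (by norm_num) n
      obtain ⟨m, rfl⟩ := Nat.exists_eq_add_of_le h1
      have hp : 0 < 2 ^ A := by positivity
      have hm : m < 2 ^ A := by rw [pow_succ] at h2; omega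
      have hAN : A < N := (Nat.pow_lt_pow_iff_right (by norm_num : 1 < 2)).1 (lt_of_le_of_lt h1 hn)
      have h3 := ih m (by omega) (by omega)
      have h4 : av (fun x : Gp N => |Sv (rr x) (2 ^ A + m)|) ≤
        av (fun x : Gp N => |Sv (rr x) (2 ^ A)| + m * Dv (rr x) (2 ^ A) + |Sv (rr x) m|) := by
        apply av_mono
        intro x
        rw [Sv_add _ hm.le]
        refine (abs_add_three _ _ _).trans ?_
        rw [abs_mul, abs_mul, rr_abs, abs_of_nonneg (Dv_pow_nonneg (rr_abs x) A), Nat.abs_cast, one_mul]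
      rw [av_add, av_add, av_mul_left, av_Dv hAN.le] at h4
      have h5 := av_Sv_pow (N := N) hAN.le
      have h6 : (m : ℝ) ≤ 2 ^ A := by exact_mod_cast hm.le
      push_cast
      linarith

/-- decreasing weights against Dirichlet kernels -/
lemma av_weighted {N J : ℕ} (hJ : J < 2 ^ N) (b : ℕ → ℝ) (hb : Antitone b) (hb0 : ∀ j, 0 ≤ b j) :
    av (fun x : Gp N => |∑ j ∈ Finset.range J, b j * Dv (rr x) (j + 1)|) ≤
      2 * ∑ j ∈ Finset.range J, b j := by
  -- Abel summation, with a slack variable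
  have key : ∀ K : ℕ, ∀ d : ℕ → ℝ, ∑ j ∈ Finset.range K, b j * d j =
      b K * (∑ i ∈ Finset.range K, d i) +
        ∑ j ∈ Finset.range K, (b j - b (j + 1)) * ∑ i ∈ Finset.range (j + 1), d i := by
    intro K d
    induction K with
    | zero => simp
    | succ K ih =>
      rw [Finset.sum_range_succ, ih, Finset.sum_range_succ _ K,
        Finset.sum_range_succ (fun j => (b j - b (j + 1)) * ∑ i ∈ Finset.range (j + 1), d i) K,
        Finset.sum_range_succ d K]
      ring
  have h1 : av (fun x : Gp N => |∑ j ∈ Finset.range J, b j * Dv (rr x) (j + 1)|) ≤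
      av (fun x : Gp N => b J * |Sv (rr x) J| +
        ∑ j ∈ Finset.range J, (b j - b (j + 1)) * |Sv (rr x) (j + 1)|) := by
    apply av_mono
    intro x
    rw [key]
    refine (abs_add_le _ _).trans (add_le_add ?_ ((Finset.abs_sum_le_sum_abs _ _).trans
      (Finset.sum_le_sum fun j _ => ?_)))
    · rw [abs_mul, abs_of_nonneg (hb0 J)]; rfl
    · rw [abs_mul, abs_of_nonneg (sub_nonneg.2 (hb (Nat.le_succ j)))]; rfl
  rw [av_add, av_mul_left, av_sum] at h1
  refine h1.trans ?_
  have h2 := key J (fun _ => 1)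
  simp only [mul_one, Finset.sum_const, Finset.card_range, nsmul_eq_mul] at h2
  rw [h2, mul_add, Finset.mul_sum]
  refine add_le_add ?_ (Finset.sum_le_sum fun j hj => ?_)
  · have := mul_le_mul_of_nonneg_left (av_Sv (N := N) J hJ) (hb0 J)
    linarith
  · rw [av_mul_left]
    have := mul_le_mul_of_nonneg_left (av_Sv (N := N) (j + 1) (by have := Finset.mem_range.1 hj; omega))
      (sub_nonneg.2 (hb (Nat.le_succ j)))
    linarith

lemma Lh_nonneg (n : ℕ) : 0 ≤ Lh n := Finset.sum_nonneg fun i _ => by positivity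

lemma Lh_mono {m n : ℕ} (h : m ≤ n) : Lh m ≤ Lh n := by
  unfold Lh
  apply Finset.sum_le_sum_of_subset_of_nonneg
  · exact Finset.Ico_subset_Ico le_rfl h
  · intros; positivity

lemma av_riesz {N n : ℕ} (hn : n < 2 ^ N) :
    av (fun x : Gp N => |∑ i ∈ Finset.Ico 1 n, Dv (rr x) i / i|) ≤ 2 * Lh n := by
  have := av_weighted (N := N) (J := n - 1) (by omega) (fun j => 1 / ((1 + j : ℕ) : ℝ))
    (by intro a b hab; apply one_div_le_one_div_of_le <;> [positivity; exact_mod_cast Nat.add_le_add_left hab 1])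
    (by intro j; positivity)
  unfold Lh
  rw [Finset.sum_Ico_eq_sum_range]
  convert this using 4 with x
  rw [Finset.sum_Ico_eq_sum_range]
  apply Finset.sum_congr rfl
  intro j _
  rw [add_comm j 1]; ring

lemma main_decomp {N : ℕ} (n : ℕ) (hn : n < 2 ^ N) :
    ∃ (ε : ℕ → ℝ) (E : Gp N → ℝ), (∀ A, |ε A| ≤ Lh n) ∧ (∀ A, n < 2 ^ A → ε A = 0) ∧
      av (fun x => |E x|) ≤ 2 * Lh n ∧
      ∀ x, Pv (rr x) n = wv (rr x) n * (∑ A ∈ Finset.range N, ε A * (rr x A * Dv (rr x) (2 ^ A))) + E x := by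
  induction n using Nat.strong_induction_on with
  | _ n ih =>
    rcases Nat.eq_zero_or_pos n with h0 | h0
    · subst h0
      exact ⟨fun _ => 0, fun _ => 0, by simp [Lh], by simp, by simp [av_const, Lh], by simp [Pv]⟩
    · obtain ⟨A, hA⟩ : ∃ A, A = Nat.log 2 n := ⟨_, rfl⟩
      have h1 : 2 ^ A ≤ n := by rw [hA]; exact Nat.pow_log_le_self 2 (by omega)
      have h2 : n < 2 ^ (A + 1) := by rw [hA]; exact Nat.lt_pow_succ_log_self (by norm_num) n
      obtain ⟨m, rfl⟩ := Nat.exists_eq_add_of_le h1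
      have hp : 0 < 2 ^ A := by positivity
      have hm : m < 2 ^ A := by rw [pow_succ] at h2; omega
      have hAN : A < N := (Nat.pow_lt_pow_iff_right (by norm_num : 1 < 2)).1 (lt_of_le_of_lt h1 hn)
      obtain ⟨ε, E, hε, hε0, hE, hP⟩ := ih m (by omega) (by omega)
      let Q : Gp N → ℝ := fun x => ∑ j ∈ Finset.range (2 ^ A - 1), (1 : ℝ) / ((m + (j + 1) : ℕ) : ℝ) * Dv (rr x) (j + 1)
      refine ⟨Function.update ε A (Lh (2 ^ A + m)), fun x => - wv (rr x) (2 ^ A - 1) * Q x + rr x A * E x,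
        ?_, ?_, ?_, ?_⟩
      · intro B
        by_cases hB : B = A
        · subst hB; simp [abs_of_nonneg (Lh_nonneg _)]
        · rw [Function.update_of_ne hB]
          exact (hε B).trans (Lh_mono (by omega))
      · intro B hB
        have : B ≠ A := by rintro rfl; omega
        rw [Function.update_of_ne this]
        exact hε0 B (by omega)
      · have hQ := av_weighted (N := N) (J := 2 ^ A - 1) (by omega) (fun j => (1 : ℝ) / ((m + (j + 1) : ℕ) : ℝ))
          (by intro a b hab; apply one_div_le_one_div_of_le <;> [positivity; exact_mod_cast (by omega)])
          (by intro j; positivity)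
        have h3 : av (fun x : Gp N => |- wv (rr x) (2 ^ A - 1) * Q x + rr x A * E x|) ≤
            av (fun x => |Q x| + |E x|) := by
          apply av_mono
          intro x
          refine (abs_add_le _ _).trans ?_
          rw [abs_mul, abs_mul, abs_neg, wv_abs (rr_abs x), rr_abs, one_mul, one_mul]
        rw [av_add] at h3
        refine h3.trans ?_
        have h4 : Lh (m + 1) + ∑ j ∈ Finset.range (2 ^ A - 1), (1 : ℝ) / ((m + (j + 1) : ℕ) : ℝ) = Lh (2 ^ A + m) := by
          unfold Lh
          rw [← Finset.sum_Ico_consecutive _ (by omega : 1 ≤ m + 1) (by omega : m + 1 ≤ 2 ^ A + m),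
            Finset.sum_Ico_eq_sum_range _ (m + 1), show 2 ^ A + m - (m + 1) = 2 ^ A - 1 by omega]
          congr 1
          apply Finset.sum_congr rfl
          intro j _
          rw [show m + 1 + j = m + (j + 1) by omega]
        have h5 := Lh_mono (Nat.le_succ m)
        have h6 : av (fun x => |Q x|) ≤ _ := hQ
        have h7 : Lh m ≤ Lh (m + 1) := h5
        linarith
      · intro x
        rw [Pv_rec (rr_abs x) hm, hP x, wv_add _ hm]
        have hs : ∑ B ∈ Finset.range N, Function.update ε A (Lh (2 ^ A + m)) B * (rr x B * Dv (rr x) (2 ^ B)) =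
            Lh (2 ^ A + m) * (rr x A * Dv (rr x) (2 ^ A)) +
            ∑ B ∈ Finset.range N, ε B * (rr x B * Dv (rr x) (2 ^ B)) := by
          have hmem : A ∈ Finset.range N := Finset.mem_range.2 hAN
          rw [← Finset.add_sum_erase _ _ hmem, ← Finset.add_sum_erase (Finset.range N) (fun B => ε B * (rr x B * Dv (rr x) (2 ^ B))) hmem,
            hε0 A hm, Function.update_self]
          simp only [zero_mul, zero_add]
          congr 1
          apply Finset.sum_congr rfl
          intro B hB
          rw [Function.update_of_ne (Finset.ne_of_mem_erase hB)]
        rw [hs]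
        have h8 := wv_mul_Dv (rr_abs x) hm
        have h9 := abs_mul_abs_self (rr x A)
        rw [rr_abs] at h9
        have h10 : rr x A * wv (rr x) m * (Lh (2 ^ A + m) * (rr x A * Dv (rr x) (2 ^ A))) = Lh (2 ^ A + m) * Dv (rr x) (2 ^ A) := by
          calc _ = (rr x A * rr x A) * Lh (2 ^ A + m) * (wv (rr x) m * Dv (rr x) (2 ^ A)) := by ring
            _ = _ := by rw [h8, ← h9]; ring
        simp only [Q]
        linear_combination -h10

/-- Burkholder's special function for the weak type estimate -/
def Ub (x y : ℝ) : ℝ := if |x| + |y| ≤ 1 then y ^ 2 - x ^ 2 else 1 - 2 * |x|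

def Zig (U : ℝ → ℝ → ℝ) : Prop :=
  ∀ x y h ε : ℝ, |ε| ≤ 1 → U (x + h) (y + ε * h) + U (x - h) (y - ε * h) ≤ 2 * U x y

lemma Ub_le_lin (x y : ℝ) : Ub x y ≤ 1 - 2 * |x| := by
  unfold Ub
  split_ifs with h
  · have h1 : y ^ 2 = |y| ^ 2 := (sq_abs y).symm
    have h2 : x ^ 2 = |x| ^ 2 := (sq_abs x).symm
    rw [h1, h2]
    nlinarith [abs_nonneg x, abs_nonneg y]
  · exact le_rfl

lemma Ub_le_sq {x y : ℝ} (hx : |x| ≤ 1) : Ub x y ≤ y ^ 2 - x ^ 2 := by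
  unfold Ub
  split_ifs with h
  · exact le_rfl
  · have h1 : y ^ 2 = |y| ^ 2 := (sq_abs y).symm
    have h2 : x ^ 2 = |x| ^ 2 := (sq_abs x).symm
    rw [h1, h2]
    nlinarith [abs_nonneg x, abs_nonneg y]

lemma zig_aux1 {s y h ε : ℝ} (hy : |y| ≤ s) (hs : s < h) (hε : |ε| ≤ 1) :
    (h - s) ^ 2 - (y + ε * h) ^ 2 ≤ 2 * h ^ 2 * (1 - ε ^ 2) := by
  have he0 := abs_nonneg ε
  have hs0 : 0 ≤ s := (abs_nonneg y).trans hy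
  have h1 : ε ^ 2 = |ε| ^ 2 := (sq_abs ε).symm
  have h2 : (y + ε * h) ^ 2 = |y + ε * h| ^ 2 := (sq_abs _).symm
  have h3 : |ε| * h - s ≤ |y + ε * h| := by
    have := abs_sub_abs_le_abs_sub (ε * h) (-y)
    rw [abs_mul, abs_neg, abs_of_pos (lt_of_le_of_lt hs0 hs)] at this
    rw [sub_neg_eq_add, add_comm] at this
    linarith
  rw [h1, h2]
  generalize |ε| = e at *
  generalize |y + ε * h| = z at *
  have hh : 0 < h := lt_of_le_of_lt hs0 hs
  have h5 : 0 ≤ h ^ 2 * (1 - e ^ 2) := by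
    have : 0 ≤ 1 - e ^ 2 := by nlinarith
    positivity
  rcases le_total s (e * h) with h4 | h4
  · have : (e * h - s) ^ 2 ≤ z ^ 2 := by
      apply pow_le_pow_left₀ (by linarith) h3
    have h6 : 0 ≤ (1 - e) * h * s := by
      have : 0 ≤ 1 - e := by linarith
      positivity
    nlinarith
  · have : (h - s) ^ 2 ≤ (h * (1 - e)) ^ 2 := by
      apply pow_le_pow_left₀ (by linarith); linarith
    have h7 : (1 - e) ^ 2 ≤ (1 - e ^ 2) := by nlinarith
    have h8 : h ^ 2 * (1 - e) ^ 2 ≤ h ^ 2 * (1 - e ^ 2) := mul_le_mul_of_nonneg_left h7 (by positivity)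
    nlinarith [sq_nonneg z]

lemma zig_aux2 {x y h ε : ℝ} (hy : |y| ≤ 1 - x) (hs : 1 < x + h) (hε : |ε| ≤ 1) :
    1 - 2 * (x + h) + ((y - ε * h) ^ 2 - (x - h) ^ 2) ≤ 2 * (y ^ 2 - x ^ 2) := by
  have := zig_aux1 hy (by linarith : 1 - x < h) hε
  nlinarith

lemma Ub_zig : Zig Ub := by
  intro x y h ε hε
  by_cases hin : |x| + |y| ≤ 1
  · have hU : Ub x y = y ^ 2 - x ^ 2 := by simp [Ub, hin]
    rw [hU]
    have hxa := abs_nonneg x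
    have hya := abs_nonneg y
    have hy1 : |y| ≤ 1 - x := by linarith [le_abs_self x]
    have hy2 : |y| ≤ 1 - -x := by linarith [neg_abs_le x]
    have hx2 : x ^ 2 ≤ 1 := by
      rw [← sq_abs]; nlinarith
    have hε' : |-ε| ≤ 1 := by rwa [abs_neg]
    rcases le_or_gt |x + h| 1 with ha | ha <;> rcases le_or_gt |x - h| 1 with hb | hb
    · have h1 := Ub_le_sq (y := y + ε * h) ha
      have h2 := Ub_le_sq (y := y - ε * h) hb
      have h3 : ε ^ 2 ≤ 1 := by rw [← sq_abs]; nlinarith [abs_nonneg ε]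
      nlinarith [mul_nonneg (sub_nonneg.2 h3) (sq_nonneg h)]
    · have h1 := Ub_le_sq (y := y + ε * h) ha
      have h2 := Ub_le_lin (x - h) (y - ε * h)
      rcases lt_abs.1 hb with hc | hc
      · have := zig_aux2 hy1 (by linarith : 1 < x + (-h)) hε
        have h4 := le_abs_self (x - h)
        nlinarith
      · have := zig_aux2 hy2 (by linarith : 1 < -x + h) hε'
        have h4 := neg_abs_le (x - h)
        nlinarith
    · have h1 := Ub_le_sq (y := y - ε * h) hb
      have h2 := Ub_le_lin (x + h) (y + ε * h)
      rcases lt_abs.1 ha with hc | hc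
      · have := zig_aux2 hy1 hc hε
        have h4 := le_abs_self (x + h)
        nlinarith
      · have := zig_aux2 hy2 (by linarith : 1 < -x + -h) hε'
        have h4 := neg_abs_le (x + h)
        nlinarith
    · have h1 := Ub_le_lin (x - h) (y - ε * h)
      have h2 := Ub_le_lin (x + h) (y + ε * h)
      nlinarith [sq_nonneg y]
  · have hU : Ub x y = 1 - 2 * |x| := by simp [Ub, hin]
    rw [hU]
    have h1 := Ub_le_lin (x + h) (y + ε * h)
    have h2 := Ub_le_lin (x - h) (y - ε * h)
    have h3 := abs_add_le (x + h) (x - h)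
    rw [show x + h + (x - h) = 2 * x by ring, abs_mul, abs_two] at h3
    linarith

lemma Ub_lower {x y : ℝ} : (if 1 < |y| then 1 else 0) - 2 * |x| ≤ Ub x y := by
  unfold Ub
  have hx := abs_nonneg x
  have hy := abs_nonneg y
  split_ifs with h1 h2 h2
  · linarith
  · linarith
  · have : x ^ 2 = |x| ^ 2 := (sq_abs x).symm
    rw [this]
    nlinarith [sq_nonneg y]
  · linarith

lemma Ub_zero (x : ℝ) : Ub x 0 ≤ 0 := by
  unfold Ub
  split_ifs with h
  · nlinarith
  · simp at h; linarith

section mart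
variable {N : ℕ}

def cE (f : Gp N → ℝ) (A : ℕ) (x : Gp N) : ℝ := av fun t => f t * Dv (rr (x + t)) (2 ^ A)

def cD (f : Gp N → ℝ) (A : ℕ) (x : Gp N) : ℝ :=
  av fun t => f t * (rr (x + t) A * Dv (rr (x + t)) (2 ^ A))

def mtr (ε : ℕ → ℝ) (f : Gp N → ℝ) (n : ℕ) (x : Gp N) : ℝ := ∑ A ∈ Finset.range n, ε A * cD f A x

lemma cE_succ (f : Gp N → ℝ) (A : ℕ) (x : Gp N) : cE f (A + 1) x = cE f A x + cD f A x := by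
  unfold cE cD
  rw [← av_add]
  congr 1
  funext t
  rw [Dv_pow_succ]; ring

lemma cE_inv (f : Gp N → ℝ) {A B : ℕ} (h : A ≤ B) (x : Gp N) : cE f A (x + ee B) = cE f A x := by
  unfold cE
  congr 1
  funext t
  rw [add_right_comm, Dv_inv (Nat.pow_le_pow_right (by norm_num) h)]

lemma cD_inv (f : Gp N → ℝ) {A B : ℕ} (h : A < B) (x : Gp N) : cD f A (x + ee B) = cD f A x := by
  unfold cD
  congr 1
  funext t
  rw [add_right_comm, Dv_inv (Nat.pow_le_pow_right (by norm_num) h.le), rr_ee_ne _ (by omega)]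

lemma cD_anti (f : Gp N → ℝ) {A : ℕ} (h : A < N) (x : Gp N) : cD f A (x + ee A) = - cD f A x := by
  unfold cD
  rw [← av_neg]
  congr 1
  funext t
  rw [add_right_comm, Dv_inv le_rfl, rr_ee _ h]; ring

lemma add_self_Gp (x : Gp N) : x + x = 0 := by
  funext i
  have : ∀ a : ZMod 2, a + a = 0 := by decide
  exact this _

lemma cE_top (f : Gp N → ℝ) (x : Gp N) : cE f N x = f x := by
  have h0 : Dv (rr (0 : Gp N)) (2 ^ N) = 2 ^ N := by
    have : ∀ A, Dv (rr (0 : Gp N)) (2 ^ A) = 2 ^ A := by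
      intro A
      induction A with
      | zero => simp [Dv_one]
      | succ A ih =>
        rw [Dv_pow_succ, ih]
        have : rr (0 : Gp N) A = 1 := by simp [rr]
        rw [this, pow_succ]; ring
    exact this N
  have h1 : ∀ y : Gp N, y ≠ 0 → Dv (rr y) (2 ^ N) = 0 := by
    intro y hy
    obtain ⟨i, hi⟩ : ∃ i, y i ≠ 0 := by
      by_contra hc
      push Not at hc
      exact hy (funext hc)
    have h2 := r_mul_Dv (rr_abs y) i.2
    have h3 : rr y i = -1 := by
      unfold rr
      simp [hi]
    rw [h3] at h2
    linarith
  unfold cE av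
  rw [Finset.sum_eq_single x]
  · rw [add_self_Gp, h0]
    simp
    field_simp
  · intro t _ ht
    rw [h1, mul_zero]
    intro hc
    apply ht
    have : x + t + t = t := by rw [hc, zero_add]
    rw [add_assoc, add_self_Gp, add_zero] at this
    exact this.symm
  · simp

lemma mart_step {U : ℝ → ℝ → ℝ} (hU : Zig U) {ε : ℕ → ℝ} (hε : ∀ A, |ε A| ≤ 1) (f : Gp N → ℝ)
    {A : ℕ} (hA : A < N) :
    av (fun x => U (cE f (A + 1) x) (mtr ε f (A + 1) x)) ≤ av (fun x => U (cE f A x) (mtr ε f A x)) := by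
  have hm : ∀ x, mtr ε f (A + 1) x = mtr ε f A x + ε A * cD f A x := by
    intro x; unfold mtr; rw [Finset.sum_range_succ]
  have hmi : ∀ x, mtr ε f A (x + ee A) = mtr ε f A x := by
    intro x
    unfold mtr
    apply Finset.sum_congr rfl
    intro B hB
    rw [cD_inv f (Finset.mem_range.1 hB)]
  have h1 := av_shift (fun x => U (cE f (A + 1) x) (mtr ε f (A + 1) x)) (ee A)
  simp only [cE_succ, hm, cE_inv f le_rfl, cD_anti f hA, hmi] at h1
  simp only [cE_succ, hm]
  have h2 : av (fun x => U (cE f A x + cD f A x) (mtr ε f A x + ε A * cD f A x) +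
      U (cE f A x + - cD f A x) (mtr ε f A x + ε A * - cD f A x)) ≤
      av (fun x => 2 * U (cE f A x) (mtr ε f A x)) := by
    apply av_mono
    intro x
    have := hU (cE f A x) (mtr ε f A x) (cD f A x) (ε A) (hε A)
    rw [mul_neg, ← sub_eq_add_neg, ← sub_eq_add_neg]
    exact this
  rw [av_add, av_mul_left] at h2
  linarith

lemma mart_all {U : ℝ → ℝ → ℝ} (hU : Zig U) {ε : ℕ → ℝ} (hε : ∀ A, |ε A| ≤ 1) (f : Gp N → ℝ) :
    av (fun x => U (f x) (mtr ε f N x)) ≤ av (fun x => U (cE f 0 x) 0) := by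
  have : ∀ A ≤ N, av (fun x => U (cE f A x) (mtr ε f A x)) ≤ av (fun x => U (cE f 0 x) 0) := by
    intro A hA
    induction A with
    | zero => simp [mtr]
    | succ A ih => exact (mart_step hU hε f hA).trans (ih (by omega))
  have h := this N le_rfl
  simp only [cE_top] at h
  exact h

lemma mtr_sq {ε : ℕ → ℝ} (hε : ∀ A, |ε A| ≤ 1) (f : Gp N → ℝ) :
    av (fun x => (mtr ε f N x) ^ 2) ≤ av (fun x => (f x) ^ 2) := by
  have hz : Zig (fun x y => y ^ 2 - x ^ 2) := by
    intro x y h ε hε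
    have h3 : ε ^ 2 ≤ 1 := by rw [← sq_abs]; nlinarith [abs_nonneg ε]
    nlinarith [mul_nonneg (sub_nonneg.2 h3) (sq_nonneg h)]
  have h := mart_all hz hε f
  rw [av_sub] at h
  have h2 : av (fun x : Gp N => (0:ℝ) ^ 2 - (cE f 0 x) ^ 2) ≤ av (fun x : Gp N => (0:ℝ)) := by
    apply av_mono
    intro x
    nlinarith [sq_nonneg (cE f 0 x)]
  rw [av_const] at h2
  linarith

lemma mtr_weak {ε : ℕ → ℝ} (hε : ∀ A, |ε A| ≤ 1) (f : Gp N → ℝ) {l : ℝ} (hl : 0 < l) :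
    l * av (fun x => if l < |mtr ε f N x| then 1 else 0) ≤ 2 * av (fun x => |f x|) := by
  have hz : Zig (fun x y => Ub (x / l) (y / l)) := by
    intro x y h ε hε
    have := Ub_zig (x / l) (y / l) (h / l) ε hε
    convert this using 3 <;> ring
  have h := mart_all hz hε f
  have h1 : av (fun x : Gp N => Ub (cE f 0 x / l) (0 / l)) ≤ av (fun x : Gp N => (0:ℝ)) := by
    apply av_mono
    intro x
    rw [zero_div]; exact Ub_zero _
  rw [av_const] at h1
  have h2 : av (fun x => (if l < |mtr ε f N x| then 1 else 0) - 2 * |f x| / l) ≤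
      av (fun x => Ub (f x / l) (mtr ε f N x / l)) := by
    apply av_mono
    intro x
    refine le_trans (le_of_eq ?_) Ub_lower
    rw [abs_div, abs_div, abs_of_pos hl, mul_div_assoc]
    congr 2
    rw [lt_div_iff₀ hl, one_mul]
  rw [av_sub] at h2
  have h3 : av (fun x => 2 * |f x| / l) = (2 * av (fun x => |f x|)) / l := by
    rw [← av_mul_left, div_eq_mul_inv, ← av_mul_right]; rfl
  have h4 : av (fun x => if l < |mtr ε f N x| then (1:ℝ) else 0) ≤ (2 * av (fun x => |f x|)) / l := by
    linarith
  rw [le_div_iff₀ hl] at h4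
  linarith
end mart

/-- discretised `t log^k t` -/
def Phi (k M : ℕ) (t : ℝ) : ℝ :=
  match k with
  | 0 => t
  | k + 1 => t + ∑ m ∈ Finset.range M, ((m : ℝ) + 1) ^ k * max (t - 2 ^ m) 0

lemma Phi_mono (k M : ℕ) {s t : ℝ} (h : s ≤ t) : Phi k M s ≤ Phi k M t := by
  cases k with
  | zero => exact h
  | succ k =>
    simp only [Phi]
    gcongr

lemma Phi_mid (k M : ℕ) (a b : ℝ) : Phi k M ((a + b) / 2) ≤ (Phi k M a + Phi k M b) / 2 := by
  cases k with
  | zero => simp [Phi]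
  | succ k =>
    simp only [Phi]
    have : ∑ m ∈ Finset.range M, ((m : ℝ) + 1) ^ k * max ((a + b) / 2 - 2 ^ m) 0 ≤
        ∑ m ∈ Finset.range M, (((m : ℝ) + 1) ^ k * max (a - 2 ^ m) 0 + ((m : ℝ) + 1) ^ k * max (b - 2 ^ m) 0) / 2 := by
      apply Finset.sum_le_sum
      intro m _
      rw [← mul_add, mul_div_assoc]
      apply mul_le_mul_of_nonneg_left _ (by positivity)
      apply max_le
      · linarith [le_max_left (a - 2 ^ m) 0, le_max_left (b - 2 ^ m) 0]
      · linarith [le_max_right (a - 2 ^ m) 0, le_max_right (b - 2 ^ m) 0]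
    rw [← Finset.sum_div, Finset.sum_add_distrib] at this
    linarith

lemma Phi_nonneg (k M : ℕ) {t : ℝ} (ht : 0 ≤ t) : 0 ≤ Phi k M t := by
  cases k with
  | zero => exact ht
  | succ k =>
    simp only [Phi]
    positivity

lemma Phi_le_succ (k : ℕ) {M M' : ℕ} (h : M ≤ M') (t : ℝ) : Phi k M t ≤ Phi (k + 1) M' t := by
  cases k with
  | zero =>
    simp only [Phi]
    have : 0 ≤ ∑ m ∈ Finset.range M', ((m : ℝ) + 1) ^ 0 * max (t - 2 ^ m) 0 := by positivity
    linarith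
  | succ k =>
    simp only [Phi]
    have : ∑ m ∈ Finset.range M, ((m : ℝ) + 1) ^ k * max (t - 2 ^ m) 0 ≤
       ∑ m ∈ Finset.range M', ((m : ℝ) + 1) ^ k * max (t - 2 ^ m) 0 :=
      Finset.sum_le_sum_of_subset_of_nonneg (Finset.range_subset_range.2 h) (fun _ _ _ => by positivity)
    have h2 : ∑ m ∈ Finset.range M', ((m : ℝ) + 1) ^ k * max (t - 2 ^ m) 0 ≤
       ∑ m ∈ Finset.range M', ((m : ℝ) + 1) ^ (k + 1) * max (t - 2 ^ m) 0 := by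
      apply Finset.sum_le_sum
      intro m _
      apply mul_le_mul_of_nonneg_right _ (le_max_right _ _)
      apply pow_le_pow_right₀ _ (Nat.le_succ k)
      have : (0:ℝ) ≤ m := by positivity
      linarith
    linarith

lemma hock_le {t : ℝ} {M : ℕ} (m : ℕ) (ht : t ≤ 2 ^ M) :
    max (t - 2 ^ m) 0 ≤ ∑ j ∈ Finset.range M, if m ≤ j then (if (2:ℝ) ^ j < t then (2:ℝ) ^ j else 0) else 0 := by
  have key : ∀ K, m ≤ K → min t (2 ^ K) - 2 ^ m ≤
      ∑ j ∈ Finset.range K, if m ≤ j then (if (2:ℝ) ^ j < t then (2:ℝ) ^ j else 0) else 0 := by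
    intro K hK
    induction K, hK using Nat.le_induction with
    | base =>
      have : (0:ℝ) ≤ ∑ j ∈ Finset.range m, if m ≤ j then (if (2:ℝ) ^ j < t then (2:ℝ) ^ j else 0) else 0 :=
        Finset.sum_nonneg fun j _ => by split_ifs <;> positivity
      linarith [min_le_right t (2 ^ m)]
    | succ K hK ih =>
      rw [Finset.sum_range_succ, if_pos hK]
      split_ifs with h
      · rw [min_eq_right h.le] at ih
        have := min_le_right t (2 ^ (K + 1))
        rw [pow_succ] at this
        rw [pow_succ]
        linarith
      · rw [min_eq_left (not_lt.1 h)] at ih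
        linarith [min_le_left t (2 ^ (K + 1))]
  have h0 : (0:ℝ) ≤ ∑ j ∈ Finset.range M, if m ≤ j then (if (2:ℝ) ^ j < t then (2:ℝ) ^ j else 0) else 0 :=
    Finset.sum_nonneg fun j _ => by split_ifs <;> positivity
  apply max_le _ h0
  rcases le_total m M with h | h
  · have := key M h
    rwa [min_eq_left ht] at this
  · have : (2:ℝ) ^ M ≤ 2 ^ m := pow_le_pow_right₀ (by norm_num) h
    linarith

lemma Phi_upper (k : ℕ) {M M' : ℕ} (hM : M ≤ M') {t : ℝ} (ht : t ≤ 2 ^ M') :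
    Phi k M t ≤ 1 + 2 * ∑ j ∈ Finset.range M', ((j : ℝ) + 1) ^ k * (if (2:ℝ) ^ j < t then (2:ℝ) ^ j else 0) := by
  set a : ℕ → ℝ := fun j => if (2:ℝ) ^ j < t then (2:ℝ) ^ j else 0 with ha
  have ha0 : ∀ j, 0 ≤ a j := fun j => by simp only [ha]; split_ifs <;> positivity
  have h1 : t ≤ 1 + ∑ j ∈ Finset.range M', ((j : ℝ) + 1) ^ k * a j := by
    have h := hock_le 0 ht
    have h' := le_max_left (t - 2 ^ 0) 0
    have h2 : ∑ j ∈ Finset.range M', (if 0 ≤ j then a j else 0) ≤ ∑ j ∈ Finset.range M', ((j : ℝ) + 1) ^ k * a j := by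
      apply Finset.sum_le_sum
      intro j _
      simp only [Nat.zero_le, if_true]
      have : (1:ℝ) ≤ ((j : ℝ) + 1) ^ k := one_le_pow₀ (le_add_of_nonneg_left (Nat.cast_nonneg j))
      nlinarith [ha0 j]
    simp only [pow_zero] at h h'
    linarith
  have h0 : 0 ≤ ∑ j ∈ Finset.range M', ((j : ℝ) + 1) ^ k * a j :=
    Finset.sum_nonneg fun j _ => mul_nonneg (by positivity) (ha0 j)
  cases k with
  | zero => simp only [Phi]; linarith
  | succ k =>
    simp only [Phi]
    have h2 : ∑ m ∈ Finset.range M, ((m : ℝ) + 1) ^ k * max (t - 2 ^ m) 0 ≤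
       ∑ m ∈ Finset.range M', ((m : ℝ) + 1) ^ k * max (t - 2 ^ m) 0 :=
      Finset.sum_le_sum_of_subset_of_nonneg (Finset.range_subset_range.2 hM) (fun _ _ _ => by positivity)
    have h3 : ∑ m ∈ Finset.range M', ((m : ℝ) + 1) ^ k * max (t - 2 ^ m) 0 ≤
       ∑ m ∈ Finset.range M', ∑ j ∈ Finset.range M', (if m ≤ j then ((m : ℝ) + 1) ^ k * a j else 0) := by
      apply Finset.sum_le_sum
      intro m _
      refine (mul_le_mul_of_nonneg_left (hock_le m ht) (by positivity)).trans (le_of_eq ?_)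
      rw [Finset.mul_sum]
      apply Finset.sum_congr rfl
      intro j _
      rw [mul_ite, mul_zero]
    rw [Finset.sum_comm] at h3
    have h4 : ∑ j ∈ Finset.range M', ∑ m ∈ Finset.range M', (if m ≤ j then ((m : ℝ) + 1) ^ k * a j else 0) ≤
        ∑ j ∈ Finset.range M', ((j : ℝ) + 1) ^ (k + 1) * a j := by
      apply Finset.sum_le_sum
      intro j _
      rw [← Finset.sum_filter]
      calc _ ≤ ∑ m ∈ Finset.range (j + 1), ((m : ℝ) + 1) ^ k * a j := by
            apply Finset.sum_le_sum_of_subset_of_nonneg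
            · intro m hm
              simp only [Finset.mem_filter, Finset.mem_range] at *
              omega
            · intro m _ _
              exact mul_nonneg (by positivity) (ha0 j)
        _ ≤ ∑ m ∈ Finset.range (j + 1), ((j : ℝ) + 1) ^ k * a j := by
            apply Finset.sum_le_sum
            intro m hm
            have : (m : ℝ) ≤ j := by exact_mod_cast Nat.lt_succ_iff.1 (Finset.mem_range.1 hm)
            have := ha0 j
            gcongr
        _ = _ := by simp; ring
    linarith

def DD (k : ℕ) : ℝ := ∑' l : ℕ, ((l : ℝ) + 1) ^ k * (1 / 2) ^ l

lemma DD_summable (k : ℕ) : Summable fun l : ℕ => ((l : ℝ) + 1) ^ k * (1 / 2 : ℝ) ^ l := by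
  have h := summable_pow_mul_geometric_of_norm_lt_one (R := ℝ) k (r := 1 / 2) (by norm_num)
  have h2 := ((summable_nat_add_iff 1).2 h).mul_left 2
  refine h2.congr ?_
  intro l
  push_cast
  rw [pow_succ (1 / 2 : ℝ)]; ring

lemma DD_sum_le (k n : ℕ) : ∑ l ∈ Finset.range n, ((l : ℝ) + 1) ^ k * (1 / 2) ^ l ≤ DD k :=
  (DD_summable k).sum_le_tsum _ (fun _ _ => by positivity)

lemma DD_nonneg (k : ℕ) : 0 ≤ DD k := by simpa using DD_sum_le k 0

lemma tail_le (k i M : ℕ) :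
    ∑ j ∈ Finset.range M, (if i ≤ j then ((j : ℝ) + 1) ^ k * (1 / 2) ^ j else 0) ≤
      DD k * (((i : ℝ) + 1) ^ k * (1 / 2) ^ i) := by
  rw [← Finset.sum_filter]
  have hf : (Finset.range M).filter (fun j => i ≤ j) = Finset.Ico i M := by
    ext j; simp [and_comm]
  rw [hf, Finset.sum_Ico_eq_sum_range]
  calc _ ≤ ∑ l ∈ Finset.range (M - i), (((l : ℝ) + 1) ^ k * (1 / 2) ^ l) * (((i : ℝ) + 1) ^ k * (1 / 2) ^ i) := by
        apply Finset.sum_le_sum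
        intro l _
        have : (((i + l : ℕ) : ℝ) + 1) ^ k ≤ (((l : ℝ) + 1) * ((i : ℝ) + 1)) ^ k := by
          apply pow_le_pow_left₀ (by positivity)
          push_cast
          have : (0:ℝ) ≤ (l : ℝ) * i := by positivity
          linarith
        rw [mul_pow] at this
        rw [pow_add]
        calc _ ≤ (((l : ℝ) + 1) ^ k * ((i : ℝ) + 1) ^ k) * ((1 / 2) ^ i * (1 / 2) ^ l) :=
              mul_le_mul_of_nonneg_right this (by positivity)
          _ = _ := by ring
    _ ≤ _ := by
        rw [← Finset.sum_mul]
        exact mul_le_mul_of_nonneg_right (DD_sum_le _ _) (by positivity)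

lemma sq_min_le {t : ℝ} (ht : 0 ≤ t) (j : ℕ) :
    (min t (2 ^ j)) ^ 2 ≤ 1 + ∑ i ∈ Finset.range j, 3 * 2 ^ i * max (t - 2 ^ i) 0 := by
  induction j with
  | zero =>
    simp only [pow_zero, Finset.range_zero, Finset.sum_empty, add_zero]
    exact pow_le_one₀ (le_min ht (by norm_num)) (min_le_right _ _)
  | succ j ih =>
    rw [Finset.sum_range_succ]
    rcases le_total t (2 ^ j) with h | h
    · have h2 : t ≤ 2 ^ (j + 1) := h.trans (pow_le_pow_right₀ (by norm_num) (Nat.le_succ j))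
      rw [min_eq_left h] at ih
      rw [min_eq_left h2]
      have : 0 ≤ 3 * 2 ^ j * max (t - 2 ^ j) 0 := by positivity
      linarith
    · rw [min_eq_right h] at ih
      have h3 : max (t - 2 ^ j) 0 = t - 2 ^ j := max_eq_left (by linarith)
      rw [h3]
      have h4 := min_le_left t (2 ^ (j + 1))
      have h5 := min_le_right t (2 ^ (j + 1))
      have h6 : 2 ^ j ≤ min t (2 ^ (j + 1)) := le_min h (pow_le_pow_right₀ (by norm_num) (Nat.le_succ j))
      rw [pow_succ (2:ℝ) j] at h4 h5 h6 ⊢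
      have h7 : (0:ℝ) < 2 ^ j := by positivity
      generalize (2:ℝ) ^ j = p at *
      generalize min t (p * 2) = q at *
      nlinarith

lemma small_part (k M : ℕ) {t : ℝ} (ht : 0 ≤ t) :
    ∑ j ∈ Finset.range M, ((j : ℝ) + 1) ^ k * (1 / 2) ^ j * (min t (2 ^ j)) ^ 2 ≤
      3 * DD k * (1 + ∑ i ∈ Finset.range M, ((i : ℝ) + 1) ^ k * max (t - 2 ^ i) 0) := by
  have h1 : ∑ j ∈ Finset.range M, ((j : ℝ) + 1) ^ k * (1 / 2) ^ j * (min t (2 ^ j)) ^ 2 ≤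
      ∑ j ∈ Finset.range M, (((j : ℝ) + 1) ^ k * (1 / 2) ^ j +
        ∑ i ∈ Finset.range M, (3 * 2 ^ i * max (t - 2 ^ i) 0) *
          (if i ≤ j then ((j : ℝ) + 1) ^ k * (1 / 2) ^ j else 0)) := by
    apply Finset.sum_le_sum
    intro j hj
    refine (mul_le_mul_of_nonneg_left (sq_min_le ht j) (by positivity)).trans ?_
    rw [mul_add, mul_one]
    gcongr
    rw [Finset.mul_sum]
    calc _ = ∑ i ∈ Finset.range j, (3 * 2 ^ i * max (t - 2 ^ i) 0) *
          (if i ≤ j then ((j : ℝ) + 1) ^ k * (1 / 2) ^ j else 0) := by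
          apply Finset.sum_congr rfl
          intro i hi
          rw [if_pos (Finset.mem_range.1 hi).le]; ring
      _ ≤ _ := by
          apply Finset.sum_le_sum_of_subset_of_nonneg
          · exact Finset.range_subset_range.2 (Finset.mem_range.1 hj).le
          · intro i _ _
            split_ifs <;> positivity
  refine h1.trans ?_
  rw [Finset.sum_add_distrib, Finset.sum_comm, mul_add, mul_one, Finset.mul_sum]
  apply add_le_add
  · have := DD_sum_le k M
    linarith [DD_nonneg k]
  · apply Finset.sum_le_sum
    intro i _
    rw [← Finset.mul_sum]
    refine (mul_le_mul_of_nonneg_left (tail_le k i M) (by positivity)).trans (le_of_eq ?_)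
    have : (2:ℝ) ^ i * (1 / 2) ^ i = 1 := by rw [← mul_pow]; norm_num
    linear_combination (3 * max (t - 2 ^ i) 0 * DD k * ((i : ℝ) + 1) ^ k) * this

lemma cD_add {N : ℕ} (f g : Gp N → ℝ) (A : ℕ) (x : Gp N) :
    cD (fun t => f t + g t) A x = cD f A x + cD g A x := by
  unfold cD
  rw [← av_add]
  congr 1
  funext t
  ring

lemma mtr_add {N : ℕ} (ε : ℕ → ℝ) (f g : Gp N → ℝ) (n : ℕ) (x : Gp N) :
    mtr ε (fun t => f t + g t) n x = mtr ε f n x + mtr ε g n x := by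
  unfold mtr
  rw [← Finset.sum_add_distrib]
  apply Finset.sum_congr rfl
  intro A _
  rw [cD_add]; ring

/-- truncation -/
def tr (c t : ℝ) : ℝ := max (-c) (min t c)

lemma tr_abs {c : ℝ} (hc : 0 ≤ c) (t : ℝ) : |tr c t| = min |t| c := by
  unfold tr
  rcases le_total t c with h1 | h1 <;> rcases le_total (-c) t with h2 | h2
  · rw [min_eq_left h1, max_eq_right h2, min_eq_left (abs_le.2 ⟨h2, h1⟩)]
  · rw [min_eq_left h1, max_eq_left h2, abs_neg, abs_of_nonneg hc, min_eq_right]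
    linarith [neg_abs_le t]
  · rw [min_eq_right h1, max_eq_right (by linarith), abs_of_nonneg hc, min_eq_right]
    linarith [le_abs_self t]
  · rw [min_eq_right h1, max_eq_right (by linarith), abs_of_nonneg hc, min_eq_right]
    linarith [le_abs_self t]

lemma tr_sub_abs {c : ℝ} (hc : 0 ≤ c) (t : ℝ) : |t - tr c t| = max (|t| - c) 0 := by
  unfold tr
  rcases le_total t c with h1 | h1 <;> rcases le_total (-c) t with h2 | h2
  · rw [min_eq_left h1, max_eq_right h2, max_eq_right]
    · simp
    · linarith [abs_le.2 ⟨h2, h1⟩]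
  · rw [min_eq_left h1, max_eq_left h2, abs_of_nonpos (by linarith : t ≤ 0), max_eq_left (by linarith),
      abs_of_nonpos (by linarith)]
    ring
  · rw [min_eq_right h1, max_eq_right (by linarith), abs_of_nonneg (by linarith : 0 ≤ t),
      max_eq_left (by linarith), abs_of_nonneg (by linarith)]
  · rw [min_eq_right h1, max_eq_right (by linarith), abs_of_nonneg (by linarith : 0 ≤ t),
      max_eq_left (by linarith), abs_of_nonneg (by linarith)]

lemma mtr_level {N : ℕ} {ε : ℕ → ℝ} (hε : ∀ A, |ε A| ≤ 1) (f : Gp N → ℝ) (j : ℕ) :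
    av (fun x => if (2:ℝ) ^ j < |mtr ε f N x| then (2:ℝ) ^ j else 0) ≤
      4 * ((1 / 2) ^ j * av (fun x => (min |f x| (2 ^ j)) ^ 2)) + 4 * av (fun x => max (|f x| - 2 ^ j) 0) := by
  set c : ℝ := 2 ^ j with hc
  have hc0 : 0 < c := by positivity
  have hcinv : (1 / 2 : ℝ) ^ j * c = 1 := by rw [hc, ← mul_pow]; norm_num
  set fs : Gp N → ℝ := fun x => tr c (f x) with hfs
  set fb : Gp N → ℝ := fun x => f x - tr c (f x) with hfb
  have hsum : ∀ x, mtr ε f N x = mtr ε fs N x + mtr ε fb N x := by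
    intro x
    rw [← mtr_add]
    congr 1
    funext t
    simp [hfs, hfb]
  have h1 := mtr_sq hε fs
  have h2 := mtr_weak hε fb (l := c / 2) (by linarith)
  have e1 : av (fun x => (fs x) ^ 2) = av (fun x => (min |f x| c) ^ 2) := by
    congr 1; funext x
    rw [← tr_abs hc0.le, sq_abs]
  have e2 : av (fun x => |fb x|) = av (fun x => max (|f x| - c) 0) := by
    congr 1; funext x
    exact tr_sub_abs hc0.le _
  rw [e1] at h1
  rw [e2] at h2
  have h3 : av (fun x => if c < |mtr ε f N x| then c else 0) ≤
      av (fun x => 4 * (1 / 2) ^ j * (mtr ε fs N x) ^ 2 + c * (if c / 2 < |mtr ε fb N x| then 1 else 0)) := by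
    apply av_mono
    intro x
    have hb0 : 0 ≤ c * (if c / 2 < |mtr ε fb N x| then 1 else 0) := by
      split_ifs <;> simp [hc0.le]
    have hs0 : 0 ≤ 4 * (1 / 2) ^ j * (mtr ε fs N x) ^ 2 := by positivity
    by_cases hx : c < |mtr ε f N x|
    · rw [if_pos hx]
      by_cases hb : c / 2 < |mtr ε fb N x|
      · rw [if_pos hb]; linarith
      · have h4 : c / 2 ≤ |mtr ε fs N x| := by
          rw [hsum] at hx
          have := abs_add_le (mtr ε fs N x) (mtr ε fb N x)
          linarith
        have h5 : (c / 2) ^ 2 ≤ (mtr ε fs N x) ^ 2 := by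
          rw [← sq_abs (mtr ε fs N x)]
          exact pow_le_pow_left₀ (by positivity) h4 2
        have h6 := mul_le_mul_of_nonneg_left h5 (by positivity : (0:ℝ) ≤ 4 * (1 / 2) ^ j)
        have h7 : 4 * (1 / 2 : ℝ) ^ j * (c / 2) ^ 2 = c := by
          linear_combination c * hcinv
        linarith
    · rw [if_neg hx]; linarith
  rw [av_add, av_mul_left, av_mul_left] at h3
  have h8 := mul_le_mul_of_nonneg_left h1 (by positivity : (0:ℝ) ≤ 4 * (1 / 2) ^ j)
  linarith

lemma mtr_Phi {N : ℕ} {ε : ℕ → ℝ} (hε : ∀ A, |ε A| ≤ 1) (f : Gp N → ℝ) (k : ℕ) {M M' : ℕ} (hM : M ≤ M')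
    (hb : ∀ x, |mtr ε f N x| ≤ 2 ^ M') :
    av (fun x => Phi k M |mtr ε f N x|) ≤ (24 * DD k + 9) * (1 + av (fun x => Phi (k + 1) M' |f x|)) := by
  have h1 : av (fun x => Phi k M |mtr ε f N x|) ≤ av (fun x => 1 + 2 * ∑ j ∈ Finset.range M',
      ((j : ℝ) + 1) ^ k * (if (2:ℝ) ^ j < |mtr ε f N x| then (2:ℝ) ^ j else 0)) :=
    av_mono fun x => Phi_upper k hM (hb x)
  rw [av_add, av_const, av_mul_left] at h1
  have h2 : ∑ j ∈ Finset.range M', av (fun x => ((j : ℝ) + 1) ^ k * (if (2:ℝ) ^ j < |mtr ε f N x| then (2:ℝ) ^ j else 0)) ≤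
      ∑ j ∈ Finset.range M', (4 * av (fun x => ((j : ℝ) + 1) ^ k * (1 / 2) ^ j * (min |f x| (2 ^ j)) ^ 2) +
        4 * av (fun x => ((j : ℝ) + 1) ^ k * max (|f x| - 2 ^ j) 0)) := by
    apply Finset.sum_le_sum
    intro j _
    rw [av_mul_left, av_mul_left, av_mul_left]
    have := mul_le_mul_of_nonneg_left (mtr_level hε f j) (by positivity : (0:ℝ) ≤ ((j : ℝ) + 1) ^ k)
    linarith
  rw [Finset.sum_add_distrib, ← Finset.mul_sum, ← Finset.mul_sum, ← av_sum, ← av_sum, ← av_sum] at h2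
  have h3 : av (fun x => ∑ j ∈ Finset.range M', ((j : ℝ) + 1) ^ k * (1 / 2) ^ j * (min |f x| (2 ^ j)) ^ 2) ≤
      av (fun x => 3 * DD k * (1 + ∑ i ∈ Finset.range M', ((i : ℝ) + 1) ^ k * max (|f x| - 2 ^ i) 0)) :=
    av_mono fun x => small_part k M' (abs_nonneg _)
  rw [av_mul_left, av_add, av_const] at h3
  have h4 : av (fun x => ∑ i ∈ Finset.range M', ((i : ℝ) + 1) ^ k * max (|f x| - 2 ^ i) 0) ≤
      av (fun x => Phi (k + 1) M' |f x|) :=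
    av_mono fun x => by simp only [Phi]; linarith [abs_nonneg (f x)]
  have h5 : 0 ≤ av (fun x => ∑ i ∈ Finset.range M', ((i : ℝ) + 1) ^ k * max (|f x| - 2 ^ i) 0) :=
    av_nonneg fun x => Finset.sum_nonneg fun i _ => by positivity
  have h6 := mul_le_mul_of_nonneg_left h4 (DD_nonneg k)
  have h7 := DD_nonneg k
  nlinarith

section ops
variable {α : Type*} [Fintype α]

def Contr (T : (α → ℝ) → (α → ℝ)) : Prop :=
  ∀ f : α → ℝ, ∀ l : ℝ, 0 ≤ l → av (fun x => max (|T f x| - l) 0) ≤ av (fun x => max (|f x| - l) 0)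

lemma Contr.abs_le {T : (α → ℝ) → (α → ℝ)} (h : Contr T) (f : α → ℝ) :
    av (fun x => |T f x|) ≤ av (fun x => |f x|) := by
  simpa using h f 0 le_rfl

lemma Contr.Phi_le {T : (α → ℝ) → (α → ℝ)} (h : Contr T) (f : α → ℝ) (k M : ℕ) :
    av (fun x => Phi k M |T f x|) ≤ av (fun x => Phi k M |f x|) := by
  cases k with
  | zero => exact h.abs_le f
  | succ k =>
    simp only [Phi]
    rw [av_add, av_add, av_sum, av_sum]
    apply add_le_add (h.abs_le f)
    apply Finset.sum_le_sum
    intro m _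
    rw [av_mul_left, av_mul_left]
    exact mul_le_mul_of_nonneg_left (h f (2 ^ m) (by positivity)) (by positivity)

def LOp (C : ℕ → ℝ) (T : (α → ℝ) → (α → ℝ)) : Prop :=
  (∀ (k M : ℕ) (f : α → ℝ), ∀ᶠ M' in atTop,
    av (fun x => Phi k M |T f x|) ≤ C k * (1 + av (fun x => Phi (k + 1) M' |f x|))) ∧
  ∀ (f : α → ℝ) (l : ℝ), 0 < l → l * av (fun x => if l < |T f x| then 1 else 0) ≤ 3 * av (fun x => |f x|)
end ops

/-- dyadic convolution operator -/
def cv {N : ℕ} (K : Gp N → ℝ) (f : Gp N → ℝ) (x : Gp N) : ℝ := av fun t => f t * K (x + t)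

lemma cv_contr {N : ℕ} {K : Gp N → ℝ} (hK : av (fun x => |K x|) ≤ 1) : Contr (cv K) := by
  intro f l hl
  have h1 : ∀ x, max (|cv K f x| - l) 0 ≤ av (fun t => max (|f t| - l) 0 * |K (x + t)|) := by
    intro x
    apply max_le
    · have h2 : |cv K f x| ≤ av (fun t => max (|f t| - l) 0 * |K (x + t)| + l * |K (x + t)|) := by
        refine (abs_av_le _).trans (av_mono fun t => ?_)
        rw [abs_mul, ← add_mul]
        apply mul_le_mul_of_nonneg_right _ (abs_nonneg _)
        linarith [le_max_left (|f t| - l) 0]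
      rw [av_add, av_mul_left, av_shift' (fun x => |K x|) x] at h2
      nlinarith
    · exact av_nonneg fun t => by positivity
  refine (av_mono h1).trans ?_
  rw [av_comm]
  apply av_mono
  intro t
  rw [av_mul_left, av_shift (fun x => |K x|) t]
  have := le_max_right (|f t| - l) 0
  nlinarith

def CL (k : ℕ) : ℝ := 24 * DD k + 9

lemma CL_ge (k : ℕ) : 1 ≤ CL k := by unfold CL; linarith [DD_nonneg k]

lemma LOp_of {N : ℕ} {T : (Gp N → ℝ) → (Gp N → ℝ)} {ε : ℕ → ℝ} (hε : ∀ A, |ε A| ≤ 1)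
    {E : (Gp N → ℝ) → (Gp N → ℝ)} (hE : Contr E) {w : Gp N → ℝ} (hw : ∀ x, |w x| = 1)
    (hT : ∀ f x, |T f x| ≤ (|mtr ε (fun t => w t * f t) N x| + |E f x|) / 2) : LOp CL T := by
  have hwf : ∀ f : Gp N → ℝ, (fun x => |w x * f x|) = fun x => |f x| := by
    intro f; funext x; rw [abs_mul, hw, one_mul]
  constructor
  · intro k M f
    obtain ⟨M0, hM0⟩ : ∃ M0 : ℕ, ∀ x, |mtr ε (fun t => w t * f t) N x| ≤ 2 ^ M0 := by
      have : ∀ x, ∀ᶠ M0 : ℕ in atTop, |mtr ε (fun t => w t * f t) N x| ≤ 2 ^ M0 := by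
        intro x
        exact (tendsto_pow_atTop_atTop_of_one_lt (by norm_num : (1:ℝ) < 2)).eventually_ge_atTop _
      exact (eventually_all.2 this).exists
    filter_upwards [eventually_ge_atTop M0, eventually_ge_atTop M] with M' h1 h2
    have hb : ∀ x, |mtr ε (fun t => w t * f t) N x| ≤ 2 ^ M' := fun x =>
      (hM0 x).trans (pow_le_pow_right₀ (by norm_num) h1)
    have h3 := mtr_Phi hε (fun t => w t * f t) k h2 hb
    have e : av (fun x => Phi (k + 1) M' |w x * f x|) = av (fun x => Phi (k + 1) M' |f x|) := by
      congr 1; funext x; rw [abs_mul, hw, one_mul]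
    rw [e] at h3
    have h4 := hE.Phi_le f k M
    have h5 : av (fun x => Phi k M |f x|) ≤ av (fun x => Phi (k + 1) M' |f x|) :=
      av_mono fun x => Phi_le_succ k h2 _
    have h6 : av (fun x => Phi k M |T f x|) ≤
        av (fun x => (Phi k M |mtr ε (fun t => w t * f t) N x| + Phi k M |E f x|) * (1 / 2)) := by
      apply av_mono
      intro x
      refine (Phi_mono k M (hT f x)).trans ((Phi_mid k M _ _).trans (le_of_eq ?_))
      ring
    rw [av_mul_right, av_add] at h6
    have h7 : 0 ≤ av (fun x => Phi (k + 1) M' |f x|) := av_nonneg fun x => Phi_nonneg _ _ (abs_nonneg _)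
    have h8 := CL_ge k
    have h9 : av (fun x => Phi (k + 1) M' |f x|) ≤ CL k * (1 + av (fun x => Phi (k + 1) M' |f x|)) := by
      nlinarith
    have h10 : CL k = 24 * DD k + 9 := rfl
    rw [← h10] at h3
    linarith
  · intro f l hl
    have h1 := mtr_weak hε (fun t => w t * f t) hl
    rw [hwf] at h1
    have h2 := hE.abs_le f
    have h3 : av (fun x => l * if l < |T f x| then 1 else 0) ≤
        av (fun x => (l * if l < |mtr ε (fun t => w t * f t) N x| then 1 else 0) + |E f x|) := by
      apply av_mono
      intro x
      have hE0 := abs_nonneg (E f x)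
      have := hT f x
      by_cases ha : l < |mtr ε (fun t => w t * f t) N x|
      · rw [if_pos ha]
        split_ifs <;> linarith
      · rw [if_neg ha]
        split_ifs <;> linarith
    rw [av_add, av_mul_left, av_mul_left] at h3
    linarith

/-- the one dimensional Nörlund operator, divided by 4 -/
lemma norlund_LOp {N n : ℕ} (hn : n < 2 ^ N) (h2 : 2 ≤ n) :
    LOp CL (cv (fun x : Gp N => 1 / 4 * (1 / Lh n * Pv (rr x) n))) := by
  obtain ⟨ε, E, hε, -, hE, hP⟩ := main_decomp (N := N) n hn
  have hL : 1 ≤ Lh n := by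
    have := Lh_mono h2
    have e : Lh 2 = 1 := by simp [Lh]
    linarith
  have hL0 : 0 < Lh n := by linarith
  apply LOp_of (ε := fun A => ε A / (2 * Lh n)) (E := cv (fun x => E x / (2 * Lh n)))
    (w := fun x => wv (rr x) n)
  · intro A
    rw [abs_div, abs_of_pos (by positivity : 0 < 2 * Lh n), div_le_one (by positivity)]
    linarith [hε A]
  · apply cv_contr
    have : av (fun x => |E x / (2 * Lh n)|) = av (fun x => |E x|) / (2 * Lh n) := by
      rw [div_eq_mul_inv, ← av_mul_right]
      congr 1; funext x
      rw [abs_div, abs_of_pos (by positivity : 0 < 2 * Lh n)]; rfl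
    rw [this, div_le_one (by positivity)]
    exact hE
  · exact fun x => wv_abs (rr_abs x) n
  · intro f x
    have key : cv (fun x : Gp N => 1 / 4 * (1 / Lh n * Pv (rr x) n)) f x =
        (wv (rr x) n * mtr (fun A => ε A / (2 * Lh n)) (fun t => wv (rr t) n * f t) N x +
          cv (fun x => E x / (2 * Lh n)) f x) * (1 / 2) := by
      unfold mtr cD cv
      have e1 : ∀ A, ε A / (2 * Lh n) * av (fun t => wv (rr t) n * f t * (rr (x + t) A * Dv (rr (x + t)) (2 ^ A))) =
          av (fun t => ε A / (2 * Lh n) * (wv (rr t) n * f t * (rr (x + t) A * Dv (rr (x + t)) (2 ^ A)))) :=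
        fun A => (av_mul_left _ _).symm
      simp only [e1]
      rw [← av_sum, ← av_mul_left, ← av_add, ← av_mul_right]
      congr 1
      funext t
      rw [hP, wv_rr_add]
      have e2 : ∑ A ∈ Finset.range N, ε A / (2 * Lh n) * (wv (rr t) n * f t * (rr (x + t) A * Dv (rr (x + t)) (2 ^ A)))
          = wv (rr t) n * f t / (2 * Lh n) * ∑ A ∈ Finset.range N, ε A * (rr (x + t) A * Dv (rr (x + t)) (2 ^ A)) := by
        rw [Finset.mul_sum]
        apply Finset.sum_congr rfl
        intro A _
        ring
      rw [e2]
      field_simp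
      ring
    rw [key, mul_one_div, abs_div, abs_two]
    gcongr
    refine (abs_add_le _ _).trans ?_
    rw [abs_mul, wv_abs (rr_abs x), one_mul]

lemma riesz_contr {N n : ℕ} (hn : n < 2 ^ N) (h2 : 2 ≤ n) :
    Contr (cv (fun x : Gp N => 1 / 4 * (1 / Lh n * ∑ i ∈ Finset.Ico 1 n, Dv (rr x) i / i))) := by
  have hL : 1 ≤ Lh n := by
    have := Lh_mono h2
    have e : Lh 2 = 1 := by simp [Lh]
    linarith
  have hL0 : 0 < Lh n := by linarith
  apply cv_contr
  have : av (fun x : Gp N => |1 / 4 * (1 / Lh n * ∑ i ∈ Finset.Ico 1 n, Dv (rr x) i / i)|) =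
      1 / (4 * Lh n) * av (fun x : Gp N => |∑ i ∈ Finset.Ico 1 n, Dv (rr x) i / i|) := by
    rw [← av_mul_left]
    congr 1; funext x
    rw [abs_mul, abs_mul, abs_of_pos (by positivity : 0 < 1 / Lh n), abs_of_pos (by norm_num : (0:ℝ) < 1 / 4)]
    field_simp
  rw [this, one_div_mul_eq_div, div_le_one (by positivity)]
  linarith [av_riesz hn]

section tensor
variable {d : ℕ} {G : Type*} [Fintype G] [Nonempty G]

lemma av_resample (j : Fin d) (F : (Fin d → G) → ℝ) :
    av (fun x => av (fun t => F (Function.update x j t))) = av F := by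
  have h1 : ∑ x : Fin d → G, ∑ t : G, F (Function.update x j t) = ∑ x : Fin d → G, ∑ _t : G, F x := by
    rw [← Fintype.sum_prod_type', ← Fintype.sum_prod_type']
    let e : (Fin d → G) × G ≃ (Fin d → G) × G :=
      { toFun := fun p => (Function.update p.1 j p.2, p.1 j)
        invFun := fun p => (Function.update p.1 j p.2, p.1 j)
        left_inv := by rintro ⟨x, t⟩; simp
        right_inv := by rintro ⟨x, t⟩; simp }
    exact Equiv.sum_comp e (fun p : (Fin d → G) × G => F p.1)
  have hG : (Fintype.card G : ℝ) ≠ 0 := by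
    exact_mod_cast Fintype.card_ne_zero
  simp only [av, ← Finset.mul_sum]
  rw [h1]
  simp only [Finset.sum_const, Finset.card_univ, nsmul_eq_mul, ← Finset.mul_sum]
  field_simp

/-- apply a one dimensional operator in coordinate `j` -/
def op (j : Fin d) (T : (G → ℝ) → (G → ℝ)) (f : (Fin d → G) → ℝ) (x : Fin d → G) : ℝ :=
  T (fun t => f (Function.update x j t)) (x j)

lemma op_update (j : Fin d) (T : (G → ℝ) → (G → ℝ)) (f : (Fin d → G) → ℝ) (x : Fin d → G) (t : G) :
    op j T f (Function.update x j t) = T (fun t => f (Function.update x j t)) t := by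
  unfold op
  simp

lemma av_op (j : Fin d) (T : (G → ℝ) → (G → ℝ)) (f : (Fin d → G) → ℝ) (H : ℝ → ℝ) :
    av (fun x => H (op j T f x)) =
      av (fun x => av (fun t => H (T (fun t => f (Function.update x j t)) t))) := by
  rw [← av_resample j]
  simp only [op_update]

lemma Contr.op {T : (G → ℝ) → (G → ℝ)} (h : Contr T) (j : Fin d) : Contr (op j T) := by
  intro f l hl
  rw [av_op j T f (fun s => max (|s| - l) 0), ← av_resample j (fun x => max (|f x| - l) 0)]
  exact av_mono fun x => h _ l hl

lemma LOp.op {C : ℕ → ℝ} {T : (G → ℝ) → (G → ℝ)} (h : LOp C T) (j : Fin d) : LOp C (op j T) := by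
  constructor
  · intro k M f
    have h1 : ∀ᶠ M' in atTop, ∀ x : Fin d → G, av (fun t => Phi k M |T (fun t => f (Function.update x j t)) t|) ≤
        C k * (1 + av (fun t => Phi (k + 1) M' |f (Function.update x j t)|)) :=
      eventually_all.2 fun x => h.1 k M _
    filter_upwards [h1] with M' h2
    rw [av_op j T f (fun s => Phi k M |s|)]
    refine (av_mono h2).trans (le_of_eq ?_)
    rw [av_mul_left, av_add, av_const, av_resample j (fun x => Phi (k + 1) M' |f x|)]
  · intro f l hl
    rw [av_op j T f (fun s => if l < |s| then 1 else 0), ← av_mul_left, ← av_resample j (fun x => |f x|),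
      ← av_mul_left]
    exact av_mono fun x => h.2 _ l hl
end tensor

section comp
variable {d N : ℕ}

def comp (S : Finset (Fin d)) (K : Fin d → Gp N → ℝ) (f : (Fin d → Gp N) → ℝ) (x : Fin d → Gp N) : ℝ :=
  av fun t : Fin d → Gp N => f (S.piecewise t x) * ∏ i ∈ S, K i (x i + t i)

lemma comp_empty (K : Fin d → Gp N → ℝ) (f : (Fin d → Gp N) → ℝ) : comp ∅ K f = f := by
  funext x
  unfold comp
  simp only [Finset.piecewise_empty, Finset.prod_empty, mul_one]
  exact av_const _

lemma comp_insert {S : Finset (Fin d)} {a : Fin d} (ha : a ∉ S) (K : Fin d → Gp N → ℝ)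
    (f : (Fin d → Gp N) → ℝ) : comp (insert a S) K f = op a (cv (K a)) (comp S K f) := by
  funext x
  unfold comp op cv
  rw [← av_resample a]
  simp only [← av_mul_right]
  rw [av_comm]
  congr 1; funext s
  congr 1; funext t
  rw [Finset.prod_insert ha]
  have e1 : (insert a S).piecewise (Function.update t a s) x = S.piecewise t (Function.update x a s) := by
    funext i
    by_cases hi : i = a
    · subst hi; simp [ha]
    · by_cases hS : i ∈ S <;> simp [hi, hS]
  have e2 : ∏ i ∈ S, K i (x i + Function.update t a s i) = ∏ i ∈ S, K i (Function.update x a s i + t i) := by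
    apply Finset.prod_congr rfl
    intro i hi
    have : i ≠ a := fun h => ha (h ▸ hi)
    simp [this]
  rw [e1, e2, Function.update_self]
  ring

def CC : ℕ → ℕ → ℝ
  | _, 0 => 1
  | k, s + 1 => CL k * (1 + CC (k + 1) s)

lemma CC_nonneg (k s : ℕ) : 0 ≤ CC k s := by
  induction s generalizing k with
  | zero => simp [CC]
  | succ s ih => 
    simp only [CC]
    have := CL_ge k
    have := ih (k + 1)
    positivity

lemma comp_Phi {B : Finset (Fin d)} {K : Fin d → Gp N → ℝ} (hB : ∀ j ∈ B, LOp CL (cv (K j)))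
    (hB' : ∀ j ∉ B, Contr (cv (K j))) (S : Finset (Fin d)) (f : (Fin d → Gp N) → ℝ) (k M : ℕ) :
    ∃ M', av (fun x => Phi k M |comp S K f x|) ≤
      CC k (S ∩ B).card * (1 + av (fun x => Phi (k + (S ∩ B).card) M' |f x|)) := by
  induction S using Finset.induction_on generalizing k M with
  | empty =>
    refine ⟨M, ?_⟩
    rw [comp_empty]
    simp [CC]
  | insert a S ha ih =>
    rw [comp_insert ha]
    by_cases haB : a ∈ B
    · obtain ⟨M1, h1⟩ := (((hB a haB).op a).1 k M (comp S K f)).exists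
      obtain ⟨M', h2⟩ := ih (k + 1) M1
      refine ⟨M', h1.trans ?_⟩
      have hc : (insert a S ∩ B).card = (S ∩ B).card + 1 := by
        rw [Finset.insert_inter_of_mem haB, Finset.card_insert_of_notMem (by simp [ha])]
      rw [hc]
      simp only [CC]
      have e : k + ((S ∩ B).card + 1) = k + 1 + (S ∩ B).card := by ring
      rw [e, mul_assoc]
      apply mul_le_mul_of_nonneg_left _ (by linarith [CL_ge k])
      have h3 : 0 ≤ av (fun x => Phi (k + 1 + (S ∩ B).card) M' |f x|) :=
        av_nonneg fun x => Phi_nonneg _ _ (abs_nonneg _)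
      linarith
    · obtain ⟨M', h2⟩ := ih k M
      refine ⟨M', ?_⟩
      rw [Finset.insert_inter_of_notMem haB]
      exact (((hB' a haB).op a).Phi_le _ k M).trans h2

lemma comp_weak {B : Finset (Fin d)} (hne : B.Nonempty) {K : Fin d → Gp N → ℝ}
    (hB : ∀ j ∈ B, LOp CL (cv (K j))) (hB' : ∀ j ∉ B, Contr (cv (K j))) (f : (Fin d → Gp N) → ℝ) :
    ∃ M', ∀ l : ℝ, 0 < l → l * av (fun x => if l < |comp Finset.univ K f x| then 1 else 0) ≤
      3 * (CC 0 (B.card - 1) * (1 + av (fun x => Phi (B.card - 1) M' |f x|))) := by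
  obtain ⟨b, hb⟩ := hne
  obtain ⟨M', h⟩ := comp_Phi hB hB' (Finset.univ.erase b) f 0 0
  refine ⟨M', fun l hl => ?_⟩
  have hc : (Finset.univ.erase b ∩ B).card = B.card - 1 := by
    rw [Finset.erase_inter, Finset.univ_inter, Finset.card_erase_of_mem hb]
  rw [hc, zero_add] at h
  have hu : (Finset.univ : Finset (Fin d)) = insert b (Finset.univ.erase b) := by simp
  rw [hu, comp_insert (by simp)]
  refine (((hB b hb).op b).2 _ l hl).trans ?_
  have : ∀ t, Phi 0 0 t = t := fun t => by simp [Phi]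
  simp only [this] at h
  linarith
end comp

lemma floor_two_mul (y : ℝ) : ⌊2 * y⌋ = 2 * ⌊y⌋ + (if Int.fract y < 1 / 2 then 0 else 1) := by
  have h1 := Int.fract_nonneg y
  have h2 := Int.fract_lt_one y
  have h3 := Int.floor_add_fract y
  rw [Int.floor_eq_iff]
  split_ifs with h
  · push_cast; constructor <;> linarith
  · push_cast; constructor <;> linarith

/-- binary digits -/
def dig (N : ℕ) (x : ℝ) : Gp N := fun j => ((⌊2 ^ ((j : ℕ) + 1) * x⌋ : ℤ) : ZMod 2)

lemma two_zmod : (2 : ZMod 2) = 0 := by decide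

lemma dig_apply {N : ℕ} (x : ℝ) (j : Fin N) :
    dig N x j = if Int.fract (2 ^ (j : ℕ) * x) < 1 / 2 then 0 else 1 := by
  unfold dig
  rw [pow_succ', mul_assoc, floor_two_mul]
  push_cast
  rw [two_zmod, zero_mul, zero_add]

lemma rademacher_eq {N j : ℕ} (hj : j < N) (x : ℝ) : rademacher j x = rr (dig N x) j := by
  unfold rademacher r0 rr
  rw [dif_pos hj, dig_apply]
  by_cases h : Int.fract (2 ^ j * x) < 1 / 2 <;> simp [h]

lemma walsh_eq {N k : ℕ} (hk : k < 2 ^ N) (x : ℝ) : walsh k x = wv (rr (dig N x)) k :=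
  wv_congr (r := fun j => rademacher j x) (fun _ hj => rademacher_eq hj x) hk

lemma dig_fibre {N : ℕ} {x y : ℝ} (hx : x ∈ Set.Ico (0:ℝ) 1) (hy : y ∈ Set.Ico (0:ℝ) 1)
    (h : dig N x = dig N y) : |x - y| ≤ (1 / 2) ^ N := by
  have h1 : ∀ j ≤ N, ⌊2 ^ j * x⌋ = ⌊2 ^ j * y⌋ := by
    intro j
    induction j with
    | zero =>
      intro _
      simp only [pow_zero, one_mul]
      rw [Int.floor_eq_zero_iff.2 hx, Int.floor_eq_zero_iff.2 hy]
    | succ j ih =>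
      intro hj
      have h2 := ih (by omega)
      have h3 := congrFun h ⟨j, hj⟩
      rw [dig_apply, dig_apply] at h3
      rw [pow_succ', mul_assoc, mul_assoc, floor_two_mul, floor_two_mul, h2]
      congr 1
      simp only at h3
      by_cases h4 : Int.fract (2 ^ j * x) < 1 / 2 <;> by_cases h5 : Int.fract (2 ^ j * y) < 1 / 2
      · rw [if_pos h4, if_pos h5]
      · rw [if_pos h4, if_neg h5] at h3
        exact absurd h3 (by decide)
      · rw [if_neg h4, if_pos h5] at h3
        exact absurd h3 (by decide)
      · rw [if_neg h4, if_neg h5]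
  have h2 := Int.abs_sub_lt_one_of_floor_eq_floor (h1 N le_rfl)
  rw [← mul_sub, abs_mul, abs_of_pos (by positivity : (0:ℝ) < 2 ^ N)] at h2
  have h3 : (1 / 2 : ℝ) ^ N * 2 ^ N = 1 := by rw [← mul_pow]; norm_num
  have h4 : (0:ℝ) < (1 / 2) ^ N := by positivity
  nlinarith

lemma dig_measurable (N : ℕ) : Measurable (dig N) := by
  apply measurable_pi_lambda
  intro j
  unfold dig
  exact (measurable_of_countable (fun z : ℤ => (z : ZMod 2))).comp
    (Int.measurable_floor.comp (measurable_const.mul measurable_id))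

/-- digits of a point of the cube -/
def digs (d N : ℕ) (x : Fin d → ℝ) : Fin d → Gp N := fun i => dig N (x i)

lemma digs_measurable (d N : ℕ) : Measurable (digs d N) :=
  measurable_pi_lambda _ fun i => (dig_measurable N).comp (measurable_pi_apply i)

lemma measurableSet_digs (d N : ℕ) (s : Set (Fin d → Gp N)) : MeasurableSet (digs d N ⁻¹' s) :=
  digs_measurable d N (Set.to_countable s).measurableSet

lemma cube_fibre (d N : ℕ) (g : Fin d → Gp N) :
    cubeMeasure d (digs d N ⁻¹' {g}) ≤ ENNReal.ofReal ((Fintype.card (Fin d → Gp N) : ℝ)⁻¹) := by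
  unfold cubeMeasure
  rw [Measure.restrict_apply (measurableSet_digs d N _)]
  have h1 : digs d N ⁻¹' {g} ∩ unitCube d =
      Set.univ.pi fun i => {x : ℝ | x ∈ Set.Ico (0:ℝ) 1 ∧ dig N x = g i} := by
    ext x
    have h0 : digs d N x = g ↔ ∀ i, dig N (x i) = g i := funext_iff
    simp only [unitCube, Set.mem_inter_iff, Set.mem_preimage, Set.mem_singleton_iff, Set.mem_univ_pi,
      Set.mem_ofPred_eq, forall_and, h0]
    tauto
  rw [h1, volume_pi_pi]
  have h2 : ∀ i, volume {x : ℝ | x ∈ Set.Ico (0:ℝ) 1 ∧ dig N x = g i} ≤ ENNReal.ofReal ((1 / 2) ^ N) := by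
    intro i
    refine (Real.volume_le_diam _).trans ?_
    apply Metric.ediam_le
    intro x hx y hy
    rw [edist_dist, Real.dist_eq]
    exact ENNReal.ofReal_le_ofReal (dig_fibre hx.1 hy.1 (hx.2.trans hy.2.symm))
  refine (Finset.prod_le_prod' fun i _ => h2 i).trans (le_of_eq ?_)
  rw [Finset.prod_const, ← ENNReal.ofReal_pow (by positivity)]
  congr 1
  simp [Gp, ZMod.card]

instance cubeMeasure_fin (d : ℕ) : IsProbabilityMeasure (cubeMeasure d) := by
  constructor
  unfold cubeMeasure unitCube
  rw [Measure.restrict_apply_univ, volume_pi_pi]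
  simp

lemma Phi_le_log (k M : ℕ) {t : ℝ} (ht : 0 ≤ t) :
    Phi k M t ≤ 2 * 3 ^ k * (1 + t * Real.log (1 + t) ^ k) := by
  cases k with
  | zero => simp [Phi]; linarith
  | succ k =>
    simp only [Phi]
    have hlog : 0 ≤ Real.log (1 + t) := Real.log_nonneg (by linarith)
    rcases le_or_gt t 1 with h1 | h1
    · have : ∑ m ∈ Finset.range M, ((m : ℝ) + 1) ^ k * max (t - 2 ^ m) 0 = 0 := by
        apply Finset.sum_eq_zero
        intro m _
        rw [max_eq_right, mul_zero]
        have : (1:ℝ) ≤ 2 ^ m := one_le_pow₀ (by norm_num)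
        linarith
      rw [this]
      have h3 : (1:ℝ) ≤ 3 ^ (k + 1) := one_le_pow₀ (by norm_num)
      have h4 : 0 ≤ t * Real.log (1 + t) ^ (k + 1) := by positivity
      nlinarith
    · set y := 3 * Real.log (1 + t) with hy
      have hl2 := Real.log_two_gt_d9
      have h2 : Real.log 2 ≤ Real.log (1 + t) := Real.log_le_log (by norm_num) (by linarith)
      have hy1 : 1 ≤ y := by rw [hy]; linarith
      have hm : ∀ m : ℕ, (2:ℝ) ^ m < t → (m : ℝ) + 1 ≤ y := by
        intro m hm
        have h3 : Real.log (2 ^ m) ≤ Real.log (1 + t) := Real.log_le_log (by positivity) (by linarith)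
        rw [Real.log_pow] at h3
        have : (0:ℝ) ≤ m := by positivity
        rw [hy]
        nlinarith
      have hs : ∑ m ∈ Finset.range M, ((m : ℝ) + 1) ^ k * max (t - 2 ^ m) 0 ≤
          ∑ m ∈ (Finset.range M).filter (fun m : ℕ => (2:ℝ) ^ m < t), y ^ k * t := by
        rw [Finset.sum_filter]
        apply Finset.sum_le_sum
        intro m _
        split_ifs with h
        · have h5 : (0:ℝ) < 2 ^ m := by positivity
          apply mul_le_mul
          · exact pow_le_pow_left₀ (by positivity) (hm m h) k
          · exact max_le (by linarith) (by linarith)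
          · exact le_max_right _ _
          · positivity
        · rw [max_eq_right (by linarith), mul_zero]
      rw [Finset.sum_const, nsmul_eq_mul] at hs
      have hc : (((Finset.range M).filter (fun m : ℕ => (2:ℝ) ^ m < t)).card : ℝ) ≤ y := by
        have h6 : (Finset.range M).filter (fun m : ℕ => (2:ℝ) ^ m < t) ⊆ Finset.range ⌊y⌋₊ := by
          intro m hm'
          have h7 := hm m (Finset.mem_filter.1 hm').2
          rw [Finset.mem_range, ← Nat.succ_le_iff]
          apply Nat.le_floor
          push_cast
          exact h7
        have h8 := Finset.card_le_card h6
        rw [Finset.card_range] at h8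
        exact (Nat.cast_le.2 h8).trans (Nat.floor_le (by linarith))
      have h9 : 0 ≤ y ^ k * t := by positivity
      have h10 := mul_le_mul_of_nonneg_right hc h9
      have h11 : (1:ℝ) ≤ y ^ (k + 1) := one_le_pow₀ hy1
      have h12 : y ^ (k + 1) = 3 ^ (k + 1) * Real.log (1 + t) ^ (k + 1) := by rw [hy, mul_pow]
      have h13 : y * (y ^ k * t) = y ^ (k + 1) * t := by ring
      have h14 : (0:ℝ) < 3 ^ (k + 1) := by positivity
      have h15 : t ≤ y ^ (k + 1) * t := by nlinarith
      have h16 : 2 * 3 ^ (k + 1) * (1 + t * Real.log (1 + t) ^ (k + 1)) = 2 * 3 ^ (k + 1) + 2 * (y ^ (k + 1) * t) := by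
        rw [h12]; ring
      rw [h16]
      linarith

lemma integral_fibres (d N : ℕ) {F : (Fin d → ℝ) → ℝ}
    (hF : ∀ g, IntegrableOn F (digs d N ⁻¹' {g}) (cubeMeasure d)) :
    ∫ x, F x ∂(cubeMeasure d) = ∑ g : Fin d → Gp N, ∫ x in digs d N ⁻¹' {g}, F x ∂(cubeMeasure d) := by
  rw [← integral_iUnion_fintype (fun g => measurableSet_digs d N {g}) _ hF, ← setIntegral_univ]
  · congr 2
    ext x
    simp
  · intro a b hab
    apply Set.disjoint_left.2
    intro x hx hy
    exact hab (hx.symm.trans hy)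

/-- discretization of `f` -/
def fN (d N : ℕ) (f : (Fin d → ℝ) → ℝ) (g : Fin d → Gp N) : ℝ :=
  (Fintype.card (Fin d → Gp N) : ℝ) * ∫ x in digs d N ⁻¹' {g}, f x ∂(cubeMeasure d)

lemma card_pos' (d N : ℕ) : (0:ℝ) < (Fintype.card (Fin d → Gp N) : ℝ) := by
  exact_mod_cast Fintype.card_pos

lemma av_card (d N : ℕ) (F : (Fin d → Gp N) → ℝ) :
    av (fun g => (Fintype.card (Fin d → Gp N) : ℝ) * F g) = ∑ g, F g := by
  unfold av
  rw [← Finset.mul_sum, inv_mul_cancel_left₀ (card_pos' d N).ne']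

lemma walshCoef_eq {d N : ℕ} {f : (Fin d → ℝ) → ℝ} (hf : Integrable f (cubeMeasure d)) {j : Fin d → ℕ}
    (hj : ∀ i, j i < 2 ^ N) :
    walshCoef f j = av (fun g => fN d N f g * ∏ i, wv (rr (g i)) (j i)) := by
  unfold walshCoef
  have h1 : ∀ g : Fin d → Gp N, Set.EqOn (fun x => f x * ∏ i, walsh (j i) (x i))
      (fun x => f x * ∏ i, wv (rr (g i)) (j i)) (digs d N ⁻¹' {g}) := by
    intro g x hx
    simp only
    congr 1
    apply Finset.prod_congr rfl
    intro i _
    rw [walsh_eq (hj i)]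
    have : digs d N x = g := hx
    rw [← this]; rfl
  rw [integral_fibres d N]
  · simp only [fN, mul_assoc]
    rw [av_card]
    apply Finset.sum_congr rfl
    intro g _
    rw [setIntegral_congr_fun (measurableSet_digs d N {g}) (h1 g), integral_mul_const]
  · intro g
    exact (integrableOn_congr_fun (h1 g) (measurableSet_digs d N {g})).2 (hf.integrableOn.mul_const _)

lemma logSum_eq_s4 (n : ℕ) (hn : 2 ≤ n) : logSum n = Lh n := by
  unfold logSum Lh
  apply Finset.sum_congr _ (fun _ _ => rfl)
  ext i; simp only [Finset.mem_Icc, Finset.mem_Ico]; omega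

def KK {d N : ℕ} (B : Finset (Fin d)) (n : Fin d → ℕ) (a : Fin d) (y : Gp N) : ℝ :=
  1 / 4 * (1 / Lh (n a) * ∑ i ∈ Finset.Ico 1 (n a), Dv (rr y) (if a ∈ B then n a - i else i) / i)

lemma rectPartialSum_eq {d N : ℕ} {f : (Fin d → ℝ) → ℝ} (hf : Integrable f (cubeMeasure d)) {m : Fin d → ℕ}
    (hm : ∀ i, m i ≤ 2 ^ N) (x : Fin d → ℝ) :
    rectPartialSum f m x = av (fun g => fN d N f g * ∏ i, Dv (rr (digs d N x i + g i)) (m i)) := by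
  unfold rectPartialSum
  have h1 : ∀ j ∈ Fintype.piFinset (fun i => Finset.range (m i)),
      walshCoef f j * ∏ i, walsh (j i) (x i) =
        av (fun g => fN d N f g * ∏ i, wv (rr (digs d N x i + g i)) (j i)) := by
    intro j hj
    have hj' : ∀ i, j i < 2 ^ N := fun i =>
      lt_of_lt_of_le (Finset.mem_range.1 (Fintype.mem_piFinset.1 hj i)) (hm i)
    rw [walshCoef_eq hf hj', ← av_mul_right]
    congr 1
    funext g
    rw [mul_assoc, ← Finset.prod_mul_distrib]
    congr 1
    apply Finset.prod_congr rfl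
    intro i _
    rw [walsh_eq (hj' i), wv_rr_add, mul_comm]
    rfl
  rw [Finset.sum_congr rfl h1, ← av_sum]
  congr 1
  funext g
  unfold Dv
  rw [Finset.prod_univ_sum, Finset.mul_sum]

lemma mixedLogMean_eq {d N : ℕ} (B : Finset (Fin d)) {f : (Fin d → ℝ) → ℝ}
    (hf : Integrable f (cubeMeasure d)) {n : Fin d → ℕ} (h2 : ∀ j, 2 ≤ n j) (hn : ∀ j, n j < 2 ^ N)
    (x : Fin d → ℝ) :
    mixedLogMean B f n x = 4 ^ d * comp Finset.univ (KK B n) (fN d N f) (digs d N x) := by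
  unfold mixedLogMean
  have h1 : ∀ i ∈ Fintype.piFinset (fun j => Finset.Ico 1 (n j)),
      rectPartialSum f (fun j => if j ∈ B then n j - i j else i j) x / ∏ j, (i j : ℝ) =
        av (fun g => fN d N f g *
          ∏ j, (Dv (rr (digs d N x j + g j)) (if j ∈ B then n j - i j else i j) / (i j : ℝ))) := by
    intro i hi
    rw [rectPartialSum_eq (N := N) hf, div_eq_mul_inv, ← av_mul_right]
    · congr 1
      funext g
      rw [Finset.prod_div_distrib, ← div_eq_mul_inv, mul_div_assoc]
    · intro j
      have h3 := Finset.mem_Ico.1 (Fintype.mem_piFinset.1 hi j)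
      have h4 := hn j
      show (if j ∈ B then n j - i j else i j) ≤ 2 ^ N
      split_ifs <;> omega
  rw [Finset.sum_congr rfl h1, ← av_sum, ← av_mul_left]
  unfold comp
  rw [← av_mul_left]
  congr 1
  funext g
  rw [← Finset.mul_sum, Finset.piecewise_univ]
  unfold KK
  rw [Finset.prod_mul_distrib, Finset.prod_mul_distrib, Finset.prod_univ_sum, Finset.prod_const]
  have e1 : ∏ j, logSum (n j) = ∏ j, Lh (n j) := Finset.prod_congr rfl fun j _ => logSum_eq_s4 _ (h2 j)
  have e2 : (1 / 4 : ℝ) ^ (Finset.univ : Finset (Fin d)).card * 4 ^ d = 1 := by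
    rw [Finset.card_univ, Fintype.card_fin, ← mul_pow]; norm_num
  have e3 : ∏ j, (1 / Lh (n j)) = (∏ j, Lh (n j))⁻¹ := by
    rw [← Finset.prod_inv_distrib]; simp
  rw [e1, e3]
  set a := (1 / 4 : ℝ) ^ (Finset.univ : Finset (Fin d)).card
  generalize (∏ j, Lh (n j))⁻¹ = b
  generalize (∑ p ∈ Fintype.piFinset fun i => Finset.Ico 1 (n i), _ : ℝ) = c
  linear_combination -(b * fN d N f g * c) * e2

lemma jensen {d N : ℕ} {f : (Fin d → ℝ) → ℝ} (hf : Integrable f (cubeMeasure d)) {l : ℝ} (hl : 0 ≤ l) :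
    av (fun g => max (|fN d N f g| - l) 0) ≤ ∫ x, max (|f x| - l) 0 ∂(cubeMeasure d) := by
  have hI : Integrable (fun x => max (|f x| - l) 0) (cubeMeasure d) :=
    (hf.abs.sub (integrable_const l)).pos_part
  rw [integral_fibres d N (fun g => hI.integrableOn), ← av_card]
  apply av_mono
  intro g
  have hc := card_pos' d N
  apply max_le
  · unfold fN
    rw [abs_mul, abs_of_pos hc]
    have h1 : |∫ x in digs d N ⁻¹' {g}, f x ∂(cubeMeasure d)| ≤
        ∫ x in digs d N ⁻¹' {g}, |f x| ∂(cubeMeasure d) := abs_integral_le_integral_abs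
    have h2 : ∫ x in digs d N ⁻¹' {g}, |f x| ∂(cubeMeasure d) ≤
        ∫ x in digs d N ⁻¹' {g}, (max (|f x| - l) 0 + l) ∂(cubeMeasure d) := by
      apply integral_mono hf.abs.integrableOn (hI.integrableOn.add (integrable_const l))
      intro x
      have := le_max_left (|f x| - l) 0
      show |f x| ≤ max (|f x| - l) 0 + l
      linarith
    rw [integral_add hI.integrableOn (integrable_const l), setIntegral_const, smul_eq_mul] at h2
    have h3 : (cubeMeasure d).real (digs d N ⁻¹' {g}) ≤ (Fintype.card (Fin d → Gp N) : ℝ)⁻¹ := by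
      unfold Measure.real
      exact ENNReal.toReal_le_of_le_ofReal (by positivity) (cube_fibre d N g)
    have h4 := mul_le_mul_of_nonneg_right h3 hl
    have h5 := mul_le_mul_of_nonneg_left (h1.trans (h2.trans (add_le_add_right h4 _))) hc.le
    rw [mul_add, mul_inv_cancel_left₀ hc.ne'] at h5
    linarith
  · apply mul_nonneg hc.le
    exact integral_nonneg fun x => le_max_right _ _

lemma jensen_Phi {d N : ℕ} {f : (Fin d → ℝ) → ℝ} (hf : Integrable f (cubeMeasure d)) (k M : ℕ) :
    Integrable (fun x => Phi k M |f x|) (cubeMeasure d) ∧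
    av (fun g => Phi k M |fN d N f g|) ≤ ∫ x, Phi k M |f x| ∂(cubeMeasure d) := by
  have h0 : av (fun g => |fN d N f g|) ≤ ∫ x, |f x| ∂(cubeMeasure d) := by
    simpa using jensen (N := N) hf (le_refl 0)
  cases k with
  | zero => exact ⟨hf.abs, h0⟩
  | succ k =>
    simp only [Phi]
    have hI : ∀ m ∈ Finset.range M, Integrable (fun x => ((m : ℝ) + 1) ^ k * max (|f x| - 2 ^ m) 0) (cubeMeasure d) :=
      fun m _ => ((hf.abs.sub (integrable_const _)).pos_part).const_mul _
    refine ⟨hf.abs.add (integrable_finsetSum _ hI), ?_⟩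
    rw [integral_add hf.abs (integrable_finsetSum _ hI), integral_finsetSum _ hI, av_add, av_sum]
    apply add_le_add h0
    apply Finset.sum_le_sum
    intro m _
    rw [av_mul_left, integral_const_mul]
    exact mul_le_mul_of_nonneg_left (jensen hf (by positivity)) (by positivity)

lemma measure_le_av {d N : ℕ} (P : (Fin d → Gp N) → Prop) [DecidablePred P] :
    ((cubeMeasure d) {x | P (digs d N x)}).toReal ≤ av (fun g => if P g then 1 else 0) := by
  have h1 : {x | P (digs d N x)} = ⋃ g ∈ Finset.univ.filter P, digs d N ⁻¹' {g} := by
    ext x; simp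
  have h2 : (cubeMeasure d) {x | P (digs d N x)} ≤
      ∑ g ∈ Finset.univ.filter P, ENNReal.ofReal ((Fintype.card (Fin d → Gp N) : ℝ)⁻¹) := by
    rw [h1]
    exact (measure_biUnion_finset_le _ _).trans (Finset.sum_le_sum fun g _ => cube_fibre d N g)
  have hc := card_pos' d N
  rw [← ENNReal.ofReal_sum_of_nonneg (fun _ _ => by positivity)] at h2
  refine (ENNReal.toReal_le_of_le_ofReal (Finset.sum_nonneg fun _ _ => by positivity) h2).trans (le_of_eq ?_)
  unfold av
  rw [Finset.mul_sum, Finset.sum_filter]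
  apply Finset.sum_congr rfl
  intro g _
  split_ifs <;> simp

def Cf (d b : ℕ) : ℝ := 4 ^ d * (3 * (CC 0 (b - 1) * (1 + 2 * 3 ^ (b - 1))))

lemma Cf_nonneg (d b : ℕ) : 0 ≤ Cf d b := by
  have := CC_nonneg 0 (b - 1)
  unfold Cf; positivity

/-- Theorem (logest2). For nonempty `B ⊆ D`, the mixed logarithmic means map
`L log^{|B|-1} L(I^d)` into `weak-L^1(I^d)`, with a constant depending only on `d`. -/
theorem stmt4 (d : ℕ) (hd : 1 ≤ d) :
    ∃ C > (0:ℝ), ∀ B : Finset (Fin d), B.Nonempty →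
      ∀ f : (Fin d → ℝ) → ℝ, Measurable f → Integrable f (cubeMeasure d) →
        Integrable (fun x => |f x| * Real.log (1 + |f x|) ^ (B.card - 1)) (cubeMeasure d) →
        ∀ n : Fin d → ℕ, (∀ j, 2 ≤ n j) → ∀ lam > (0:ℝ),
          lam * ((cubeMeasure d) {x | lam < |mixedLogMean B f n x|}).toReal ≤
            C * (1 + ∫ x, |f x| * Real.log (1 + |f x|) ^ (B.card - 1) ∂(cubeMeasure d)) := by
  refine ⟨1 + ∑ b ∈ Finset.range (d + 1), Cf d b, ?_, ?_⟩
  · have := Finset.sum_nonneg fun b (_ : b ∈ Finset.range (d + 1)) => Cf_nonneg d b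
    linarith
  intro B hB f _ hf hlog n hn lam hlam
  obtain ⟨N, hN⟩ : ∃ N, ∀ j, n j < 2 ^ N := by
    refine ⟨∑ j, n j, fun j => ?_⟩
    exact lt_of_le_of_lt (Finset.single_le_sum (f := n) (fun _ _ => Nat.zero_le _) (Finset.mem_univ j))
      Nat.lt_two_pow_self
  have hK1 : ∀ j ∈ B, LOp CL (cv (KK (N := N) B n j)) := by
    intro j hj
    have e : (KK (N := N) B n j) = fun x => 1 / 4 * (1 / Lh (n j) * Pv (rr x) (n j)) := by
      funext x
      unfold KK Pv
      simp only [hj, if_true]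
    rw [e]
    exact norlund_LOp (hN j) (hn j)
  have hK2 : ∀ j ∉ B, Contr (cv (KK (N := N) B n j)) := by
    intro j hj
    have e : (KK (N := N) B n j) =
        fun x => 1 / 4 * (1 / Lh (n j) * ∑ i ∈ Finset.Ico 1 (n j), Dv (rr x) i / i) := by
      funext x
      unfold KK
      simp only [hj, if_false]
    rw [e]
    exact riesz_contr (hN j) (hn j)
  obtain ⟨M, hM⟩ := comp_weak hB hK1 hK2 (fN d N f)
  set k := B.card - 1 with hk
  set J := ∫ x, |f x| * Real.log (1 + |f x|) ^ k ∂(cubeMeasure d) with hJ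
  have hJ0 : 0 ≤ J := integral_nonneg fun x => by
    have : 0 ≤ Real.log (1 + |f x|) := Real.log_nonneg (by linarith [abs_nonneg (f x)])
    positivity
  obtain ⟨hP, hP'⟩ := jensen_Phi (N := N) hf k M
  have h1 : ∫ x, Phi k M |f x| ∂(cubeMeasure d) ≤ 2 * 3 ^ k * (1 + J) := by
    have hI : Integrable (fun x => 2 * 3 ^ k * (1 + |f x| * Real.log (1 + |f x|) ^ k)) (cubeMeasure d) :=
      ((integrable_const 1).add hlog).const_mul _
    refine (integral_mono hP hI fun x => Phi_le_log k M (abs_nonneg _)).trans (le_of_eq ?_)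
    rw [integral_const_mul, integral_add (integrable_const 1) hlog]
    simp [hJ]
  have h4 : (0:ℝ) < 4 ^ d := by positivity
  have h2 := hM (lam / 4 ^ d) (by positivity)
  have h3 : ((cubeMeasure d) {x | lam < |mixedLogMean B f n x|}).toReal ≤
      av (fun g => if lam / 4 ^ d < |comp Finset.univ (KK (N := N) B n) (fN d N f) g| then 1 else 0) := by
    refine le_trans (le_of_eq ?_)
      (measure_le_av fun g => lam / 4 ^ d < |comp Finset.univ (KK (N := N) B n) (fN d N f) g|)
    congr 2
    ext x
    simp only [Set.mem_ofPred_eq]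
    rw [mixedLogMean_eq B hf hn hN, abs_mul, abs_of_pos h4, div_lt_iff₀' h4]
  have h5 : lam * ((cubeMeasure d) {x | lam < |mixedLogMean B f n x|}).toReal ≤
      4 ^ d * (3 * (CC 0 k * (1 + av (fun x => Phi k M |fN d N f x|)))) := by
    have h6 := mul_le_mul_of_nonneg_left h3 hlam.le
    have h7 := mul_le_mul_of_nonneg_left h2 h4.le
    rw [← mul_assoc, mul_div_cancel₀ _ h4.ne'] at h7
    exact h6.trans h7
  have h8 : 4 ^ d * (3 * (CC 0 k * (1 + av (fun x => Phi k M |fN d N f x|)))) ≤ Cf d B.card * (1 + J) := by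
    have h9 : 1 + av (fun x => Phi k M |fN d N f x|) ≤ (1 + 2 * 3 ^ k) * (1 + J) := by
      linarith
    have hc := CC_nonneg 0 k
    calc _ ≤ 4 ^ d * (3 * (CC 0 k * ((1 + 2 * 3 ^ k) * (1 + J)))) := by gcongr
      _ = _ := by unfold Cf; ring
  have h10 : Cf d B.card ≤ ∑ b ∈ Finset.range (d + 1), Cf d b := by
    apply Finset.single_le_sum (f := fun b => Cf d b) (fun b _ => Cf_nonneg d b)
    rw [Finset.mem_range, Nat.lt_succ_iff]
    simpa using Finset.card_le_univ B
  refine h5.trans (h8.trans ?_)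
  apply mul_le_mul_of_nonneg_right _ (by linarith)
  linarith

end
end
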